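/- Let 0<s<2 and let Ω satisfy (H). Then W has the linear interpolation convexity (LIC) property if and only if Ω̃(φ)≥0 for every φ. -/

import Mathlib

open MeasureTheory Real Filter Set Topology
open scoped ENNReal

noncomputable section

namespace Aniso

/-- The Euclidean norm on `ℝ × ℝ`. -/
def nrm (x : ℝ × ℝ) : ℝ := Real.sqrt (x.1 ^ 2 + x.2 ^ 2)

/-- The angle `θ(x) ∈ [-π, π)` of a nonzero point `x ∈ ℝ²`,
so that `x / |x| = (cos (ang x), sin (ang x))`. -/
def ang (x : ℝ × ℝ) : ℝ :=
  if Complex.arg ⟨x.1, x.2⟩ = π then -π else Complex.arg ⟨x.1, x.2⟩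

/-- The unit vector `e_φ = (cos φ, sin φ)`. -/
def eVec (φ : ℝ) : ℝ × ℝ := (Real.cos φ, Real.sin φ)

/-- The constant `τ_s = (2π)^{-s} Γ(s) cos(sπ/2)`. -/
def tauC (s : ℝ) : ℝ := (2 * π) ^ (-s) * Real.Gamma s * Real.cos (s * π / 2)

/-- The constant `c_s = π^{s-1} Γ((2-s)/2) / Γ(s/2)`. -/
def cC (s : ℝ) : ℝ := π ^ (s - 1) * Real.Gamma ((2 - s) / 2) / Real.Gamma (s / 2)

/-- Hypothesis (H): `Ω` is smooth, 2π-periodic, strictly positive and π-periodic. -/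
def SatisfiesH (Ω : ℝ → ℝ) : Prop :=
  ContDiff ℝ (⊤ : ℕ∞) Ω ∧ (∀ θ, Ω (θ + 2 * π) = Ω θ) ∧ (∀ θ, 0 < Ω θ) ∧ ∀ θ, Ω (θ + π) = Ω θ

/-- Hypothesis (h): `ω` is smooth, 2π-periodic, nonnegative, not identically zero,
π-periodic, and `ω(π/2) = 0`. -/
def Satisfiesh (ω : ℝ → ℝ) : Prop :=
  ContDiff ℝ (⊤ : ℕ∞) ω ∧ (∀ θ, ω (θ + 2 * π) = ω θ) ∧ (∀ θ, 0 ≤ ω θ) ∧ (∃ θ, ω θ ≠ 0) ∧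
    (∀ θ, ω (θ + π) = ω θ) ∧ ω (π / 2) = 0

/-- The transformed angle function `Ω̃`. -/
def Omt (s : ℝ) (Ω : ℝ → ℝ) (φ : ℝ) : ℝ :=
  tauC (2 - s) * (∫ θ in (-π)..π, |Real.cos (φ - θ)| ^ (-2 + s) * (Ω θ - Ω (φ + π / 2)))
    + cC s * Ω (φ + π / 2)

/-- The interaction potential `W(x) = |x|^{-s} Ω(θ(x)) + |x|²` as an `[0,∞]`-valued
kernel, with `W(0) = ∞`. -/
def Wkernel (s : ℝ) (Ω : ℝ → ℝ) (x : ℝ × ℝ) : ℝ≥0∞ :=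
  if x = 0 then ⊤ else ENNReal.ofReal (nrm x ^ (-s) * Ω (ang x) + nrm x ^ 2)

/-- The interaction energy `E[ρ] = (1/2) ∬ W(x-y) dρ(y) dρ(x) ∈ [0,∞]`. -/
def energy (s : ℝ) (Ω : ℝ → ℝ) (ρ : Measure (ℝ × ℝ)) : ℝ≥0∞ :=
  (1 / 2 : ℝ≥0∞) * ∫⁻ x, ∫⁻ y, Wkernel s Ω (x - y) ∂ρ ∂ρ

/-- The real-valued interaction potential (with junk value `0` at the origin,
which is Lebesgue negligible). -/
def Wr (s : ℝ) (Ω : ℝ → ℝ) (x : ℝ × ℝ) : ℝ := nrm x ^ (-s) * Ω (ang x) + nrm x ^ 2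

/-- `ρ` minimizes the energy `E` among probability measures on `ℝ²`. -/
def IsMinimizer (E : Measure (ℝ × ℝ) → ℝ≥0∞) (ρ : Measure (ℝ × ℝ)) : Prop :=
  IsProbabilityMeasure ρ ∧ ∀ μ : Measure (ℝ × ℝ), IsProbabilityMeasure μ → E ρ ≤ E μ

/-- `ρ` is the unique minimizer of `E` up to translation: it is a minimizer and every
minimizer is a translate of it. -/
def IsUniqueMinimizer (E : Measure (ℝ × ℝ) → ℝ≥0∞) (ρ : Measure (ℝ × ℝ)) : Prop :=
  IsMinimizer E ρ ∧ ∀ μ, IsMinimizer E μ → ∃ v : ℝ × ℝ, μ = Measure.map (fun x => x + v) ρ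

def R2 (s : ℝ) : ℝ := (8 * Real.sin (s * π / 2) / (s ^ 2 * (2 + s) * π)) ^ (-(1 / (s + 2)))

def C2 (s : ℝ) : ℝ := 4 * Real.sin (s * π / 2) / (s ^ 2 * π ^ 2)

/-- The density `ρ₂(x) = C₂ (R₂² - |x|²)₊^{s/2}`. -/
def rho2 (s : ℝ) (x : ℝ × ℝ) : ℝ := C2 s * (max (R2 s ^ 2 - nrm x ^ 2) 0) ^ (s / 2)

def rho2meas (s : ℝ) : Measure (ℝ × ℝ) := volume.withDensity fun x => ENNReal.ofReal (rho2 s x)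

/-- Counterclockwise rotation of `ℝ²` by the angle `η`. -/
def Rot (η : ℝ) (x : ℝ × ℝ) : ℝ × ℝ :=
  (x.1 * Real.cos η - x.2 * Real.sin η, x.1 * Real.sin η + x.2 * Real.cos η)

/-- The measure `ρ_{a,b,η}`: the pushforward of `ρ₂(x) dx` under `x ↦ R_η (a x₁, b x₂)`. -/
def rhoE (s a b η : ℝ) : Measure (ℝ × ℝ) :=
  Measure.map (fun x => Rot η (a * x.1, b * x.2)) (rho2meas s)

/-- The measure `ρ_{a,b} = ρ_{a,b,0}`. -/
def rhoAB (s a b : ℝ) : Measure (ℝ × ℝ) := rhoE s a b 0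

/-- The Beta function. -/
def BetaR (x y : ℝ) : ℝ := Real.Gamma x * Real.Gamma y / Real.Gamma (x + y)

def C1 (s : ℝ) : ℝ := 2 * Real.cos (s * π / 2) / (s * (s + 1) * π)

def R1 (s : ℝ) : ℝ := (C1 s * BetaR (1 / 2) ((3 + s) / 2)) ^ (-(1 / (s + 2)))

/-- The density `ρ₁(t) = C₁ (R₁² - t²)₊^{(1+s)/2}` on `ℝ`. -/
def rho1 (s t : ℝ) : ℝ := C1 s * (max (R1 s ^ 2 - t ^ 2) 0) ^ ((1 + s) / 2)

def rho1meas (s : ℝ) : Measure ℝ := volume.withDensity fun t => ENNReal.ofReal (rho1 s t)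

/-- The measure `ρ_{1D}`: the pushforward of `ρ₁(t) dt` under `t ↦ (0, t)`. -/
def rho1D (s : ℝ) : Measure (ℝ × ℝ) := Measure.map (fun t : ℝ => ((0 : ℝ), t)) (rho1meas s)

/-- The support of a measure: points all of whose neighborhoods have positive measure. -/
def msupport {α : Type*} [TopologicalSpace α] [MeasurableSpace α] (μ : Measure α) : Set α :=
  {x | ∀ U ∈ 𝓝 x, 0 < μ U}

def Acoef (s : ℝ) (Ω : ℝ → ℝ) (a b : ℝ) : ℝ :=
  tauC s * (R1 s / R2 s) ^ (2 + s) *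
    ∫ φ in (-π)..π,
      (a ^ 2 * Real.cos φ ^ 2 + b ^ 2 * Real.sin φ ^ 2) ^ (-(2 + s) / 2) *
        Real.cos φ ^ 2 * Omt s Ω φ

def Bcoef (s : ℝ) (Ω : ℝ → ℝ) (a b : ℝ) : ℝ :=
  tauC s * (R1 s / R2 s) ^ (2 + s) *
    ∫ φ in (-π)..π,
      (a ^ 2 * Real.cos φ ^ 2 + b ^ 2 * Real.sin φ ^ 2) ^ (-(2 + s) / 2) *
        Real.sin φ ^ 2 * Omt s Ω φ

def Dcoef (s : ℝ) (Ω : ℝ → ℝ) (a b : ℝ) : ℝ :=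
  tauC s * (R1 s / R2 s) ^ (2 + s) *
    ∫ φ in (-π)..π,
      (a ^ 2 * Real.cos φ ^ 2 + b ^ 2 * Real.sin φ ^ 2) ^ (-(2 + s) / 2) *
        (Real.cos φ * Real.sin φ) * Omt s Ω φ

def Mfun (s : ℝ) (Ω : ℝ → ℝ) (a b : ℝ) : ℝ :=
  tauC s * (R1 s / R2 s) ^ (2 + s) *
    ∫ φ in (-π)..π, (a ^ 2 * Real.cos φ ^ 2 + b ^ 2 * Real.sin φ ^ 2) ^ (-s / 2) * Omt s Ω φ

def calE (s : ℝ) (Ω : ℝ → ℝ) (a b : ℝ) : ℝ := Mfun s Ω a b + s / 2 * (a ^ 2 + b ^ 2)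

/-- A measure has compact support. -/
def HasCompactSupportM (ρ : Measure (ℝ × ℝ)) : Prop :=
  ∃ K : Set (ℝ × ℝ), IsCompact K ∧ ρ Kᶜ = 0

/-- The linear interpolation `(1-t) ρ₀ + t ρ₁`. -/
def mix (ρ₀ ρ₁ : Measure (ℝ × ℝ)) (t : ℝ) : Measure (ℝ × ℝ) :=
  ENNReal.ofReal (1 - t) • ρ₀ + ENNReal.ofReal t • ρ₁

/-- Linear interpolation convexity (LIC): for any two distinct compactly supported
probability measures of finite energy with the same center of mass, the energy is
strictly convex along their linear interpolation. -/
def LIC (s : ℝ) (Ω : ℝ → ℝ) : Prop :=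
  ∀ ρ₀ ρ₁ : Measure (ℝ × ℝ), IsProbabilityMeasure ρ₀ → IsProbabilityMeasure ρ₁ →
    HasCompactSupportM ρ₀ → HasCompactSupportM ρ₁ →
    energy s Ω ρ₀ < ⊤ → energy s Ω ρ₁ < ⊤ → ρ₀ ≠ ρ₁ →
    (∫ x, x ∂ρ₀) = (∫ x, x ∂ρ₁) →
    StrictConvexOn ℝ (Set.Icc (0 : ℝ) 1) fun t => (energy s Ω (mix ρ₀ ρ₁ t)).toReal

/-- The interaction energy of a bounded compactly supported signed density. -/
def energyR (s : ℝ) (Ω : ℝ → ℝ) (μ : ℝ × ℝ → ℝ) : ℝ :=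
  (1 / 2) * ∫ x : ℝ × ℝ, (∫ y : ℝ × ℝ, Wr s Ω (x - y) * μ y) * μ x

/-- The logarithmic potential `W_log(x) = -ln|x| + Ω(θ(x)) + |x|²` (real valued,
with junk value at the origin). -/
def Wlog (Ω : ℝ → ℝ) (x : ℝ × ℝ) : ℝ := -Real.log (nrm x) + Ω (ang x) + nrm x ^ 2

def WlogKernel (Ω : ℝ → ℝ) (x : ℝ × ℝ) : ℝ≥0∞ :=
  if x = 0 then ⊤ else ENNReal.ofReal (Wlog Ω x)

/-- The logarithmic interaction energy. -/
def energyLog (Ω : ℝ → ℝ) (ρ : Measure (ℝ × ℝ)) : ℝ≥0∞ :=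
  (1 / 2 : ℝ≥0∞) * ∫⁻ x, ∫⁻ y, WlogKernel Ω (x - y) ∂ρ ∂ρ

/-- The family `W_{(s)}(x) = |x|^{-s} (1/s + Ω(θ(x))) - 1/s + |x|²`. -/
def Wsfam (s : ℝ) (Ω : ℝ → ℝ) (x : ℝ × ℝ) : ℝ :=
  nrm x ^ (-s) * (1 / s + Ω (ang x)) - 1 / s + nrm x ^ 2

/-- The transformed angle function of `W_{(s)}`. -/
def Omts (s : ℝ) (Ω : ℝ → ℝ) (φ : ℝ) : ℝ :=
  tauC (2 - s) * (∫ θ in (-π)..π, |Real.cos (φ - θ)| ^ (-2 + s) * (Ω θ - Ω (φ + π / 2)))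
    + cC s * (1 / s + Ω (φ + π / 2))

/-- The truncated integral appearing in the principal value defining `Ω̃_log`. -/
def pvInt (Ω : ℝ → ℝ) (φ δ : ℝ) : ℝ :=
  ∫ θ in {θ : ℝ | θ ∈ Set.Icc (-π) π ∧ δ ≤ |Real.cos (φ - θ)|},
    |Real.cos (φ - θ)| ^ (-(2 : ℝ)) * (Ω θ - Ω (φ + π / 2))

def OmtLogFam (Ω : ℝ → ℝ) (φ δ : ℝ) : ℝ :=
  -((2 * π) ^ (-(2 : ℝ))) * pvInt Ω φ δ + (2 * π)⁻¹

/-- The transformed angle function `Ω̃_log`, defined as the principal value limit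
(via `limUnder`, which returns the limit whenever it exists). -/
def OmtLog (Ω : ℝ → ℝ) (φ : ℝ) : ℝ := limUnder (𝓝[>] (0 : ℝ)) (OmtLogFam Ω φ)

/-- The closed elliptical region `B(0; a, b)`. -/
def ellipseSet (a b : ℝ) : Set (ℝ × ℝ) := {x | x.1 ^ 2 / a ^ 2 + x.2 ^ 2 / b ^ 2 ≤ 1}

def ALog (Ω : ℝ → ℝ) (a b : ℝ) : ℝ :=
  ∫ φ in (-π)..π,
    (a ^ 2 * Real.cos φ ^ 2 + b ^ 2 * Real.sin φ ^ 2)⁻¹ * Real.cos φ ^ 2 * OmtLog Ω φ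

def BLog (Ω : ℝ → ℝ) (a b : ℝ) : ℝ :=
  ∫ φ in (-π)..π,
    (a ^ 2 * Real.cos φ ^ 2 + b ^ 2 * Real.sin φ ^ 2)⁻¹ * Real.sin φ ^ 2 * OmtLog Ω φ

def DLog (Ω : ℝ → ℝ) (a b : ℝ) : ℝ :=
  ∫ φ in (-π)..π,
    (a ^ 2 * Real.cos φ ^ 2 + b ^ 2 * Real.sin φ ^ 2)⁻¹ *
      (Real.cos φ * Real.sin φ) * OmtLog Ω φ

/-- The uniform probability measure on the rotated ellipse `B(0; a, b, η)`. -/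
def unifEllipse (a b η : ℝ) : Measure (ℝ × ℝ) :=
  volume.withDensity ((Rot η '' ellipseSet a b).indicator fun _ => ENNReal.ofReal ((π * a * b)⁻¹))

/-- The pushforward of the density `(2/(πb²)) (b² - t²)₊^{1/2} dt` under `t ↦ R_η (0, t)`. -/
def semicirc (b η : ℝ) : Measure (ℝ × ℝ) :=
  Measure.map (fun t : ℝ => Rot η (0, t))
    (volume.withDensity fun t =>
      ENNReal.ofReal (2 / (π * b ^ 2) * (max (b ^ 2 - t ^ 2) 0) ^ ((1 : ℝ) / 2)))

/-- The vertical semicircle measure `ρ_{1D}` for the logarithmic case. -/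
def rho1Dlog : Measure (ℝ × ℝ) :=
  Measure.map (fun t : ℝ => ((0 : ℝ), t))
    (volume.withDensity fun t => ENNReal.ofReal (2 / π * (max (1 - t ^ 2) 0) ^ ((1 : ℝ) / 2)))

/-- The measure `ψ(t) dt` placed on the vertical axis. -/
def rhoPsi (ψ : ℝ → ℝ) : Measure (ℝ × ℝ) :=
  Measure.map (fun t : ℝ => ((0 : ℝ), t)) (volume.withDensity fun t => ENNReal.ofReal (ψ t))


open scoped FourierTransform

/-!
The plane is identified with `ℂ` through `tr`. For compactly supported measures the energy is a
quadratic form: along `(1-t)ρ₀ + tρ₁` with equal centres of mass it is a quadratic polynomial in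
`t`, the confinement `|x|²` contributes only affinely, and the coefficient of `-t(1-t)` is a
positive multiple of `Dv = ∫ Qc(ξ) |ν̂₀(ξ) - ν̂₁(ξ)|² dξ`, where `Qc` is a positive multiple of the
Fourier transform of `|x|^{-s} Ω(θ(x))` (`energy_mix`, `convex_iff`).

The Fourier transform is obtained without distributions. The kernel `|z|^{-s} Ω(arg z)` is, up to
the positive constant `Mg s`, the superposition over scales `b` of dilates of the smooth compactly
supported function `bK Ω z = bmp |z| · Ω(arg z)`. Each dilate has a rapidly decaying Fourier
transform, and Parseval for each scale followed by Fubini gives `Kr_energy`; the isotropic case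
(`iso_eq`, with Gaussians in place of `bmp`) supplies the absolute convergence. Thus
`Qc(ξ) = ∫ b^{1-s} 𝓕(bK Ω)(bξ) db`, which is homogeneous of degree `s - 2`. Polar coordinates and
the Mellin transform of the cosine identify its values on the unit circle: `Qc(e^{iφ})` equals
`Mg s · Ω̃(φ)` (`Qc_exp`); subtracting the value `Ω(φ + π/2)`, handled by the isotropic computation
`Qc_one`, makes the angular integral converge for all `0 < s < 2`.

If `Ω̃ ≥ 0`, then `Dv ≥ 0`. Since `Qc` is continuous and not identically zero off the origin,
`Dv = 0` forces the two Fourier transforms to agree on an open set, hence everywhere because they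
are entire along lines, so the measures are equal (`Dv_pos`). If `Ω̃(φ) < 0`, the uniform measures
on two rectangles of half-widths `1` and `2` in direction `φ` and large equal half-length `ε⁻¹` in the
orthogonal direction have transforms concentrated near the axis of direction `φ`, and `ε⁻¹ · Dv`
tends to a positive multiple of `Ω̃(φ)` (`tendsto_squeeze`, `Dv_rect`), so that convexity fails.
-/

open scoped FourierTransform

/-! ### Fourier representation of pair interactions -/

/-- The Fourier transform `ξ ↦ ∫ e^{2πi⟨x,ξ⟩} dν(x)` of a measure on the plane, which is identified
with `ℂ`. -/
def ft (ν : Measure ℂ) (ξ : ℂ) : ℂ := charFun ν ((2 * π) • ξ)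

lemma continuous_ft (ν : Measure ℂ) [IsFiniteMeasure ν] : Continuous (ft ν) :=
  continuous_charFun.comp (continuous_const_smul _)

lemma norm_ft_le (ν : Measure ℂ) (ξ : ℂ) : ‖ft ν ξ‖ ≤ ν.real univ :=
  norm_charFun_le _

lemma ft_eq (ν : Measure ℂ) (ξ : ℂ) :
    ft ν ξ = ∫ x, Complex.exp ((2 * π * inner ℝ ξ x : ℝ) * Complex.I) ∂ν := by
  simp only [ft, charFun_apply, inner_smul_right]
  simp_rw [real_inner_comm]

lemma norm_exp_real_I (t : ℝ) : ‖Complex.exp ((t : ℂ) * Complex.I)‖ = 1 :=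
  Complex.norm_exp_ofReal_mul_I t

lemma integrable_phase (ν : Measure ℂ) [IsFiniteMeasure ν] (ξ : ℂ) :
    Integrable (fun x : ℂ => Complex.exp ((2 * π * inner ℝ ξ x : ℝ) * Complex.I)) ν := by
  refine Integrable.of_bound (C := 1) (Continuous.aestronglyMeasurable (by fun_prop)) ?_
  exact Eventually.of_forall fun x => (norm_exp_real_I _).le

lemma integral_phase_prod (ν : Measure ℂ) [IsFiniteMeasure ν] (ξ : ℂ) :
    ∫ p : ℂ × ℂ, Complex.exp ((2 * π * inner ℝ ξ (p.1 - p.2) : ℝ) * Complex.I) ∂(ν.prod ν)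
      = ((‖ft ν ξ‖ ^ 2 : ℝ) : ℂ) := by
  have h : ∀ p : ℂ × ℂ, Complex.exp ((2 * π * inner ℝ ξ (p.1 - p.2) : ℝ) * Complex.I)
      = Complex.exp ((2 * π * inner ℝ ξ p.1 : ℝ) * Complex.I) *
        (starRingEnd ℂ) (Complex.exp ((2 * π * inner ℝ ξ p.2 : ℝ) * Complex.I)) := by
    intro p
    rw [← Complex.exp_conj, ← Complex.exp_add, inner_sub_right]
    congr 1
    simp only [map_mul, Complex.conj_ofReal, Complex.conj_I]
    push_cast
    ring
  simp_rw [h]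
  rw [integral_prod_mul (fun x : ℂ => Complex.exp ((2 * π * inner ℝ ξ x : ℝ) * Complex.I))
    (fun x : ℂ => (starRingEnd ℂ) (Complex.exp ((2 * π * inner ℝ ξ x : ℝ) * Complex.I))),
    integral_conj, ← ft_eq, Complex.mul_conj, Complex.normSq_eq_norm_sq]

lemma pair_kernel (ν : Measure ℂ) [IsFiniteMeasure ν] {H : ℂ → ℂ} (hH : Integrable H) :
    ∫ p : ℂ × ℂ, 𝓕⁻ H (p.1 - p.2) ∂(ν.prod ν) = ∫ ξ, ((‖ft ν ξ‖ ^ 2 : ℝ) : ℂ) * H ξ := by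
  simp_rw [Real.fourierInv_eq', smul_eq_mul]
  rw [integral_integral_swap]
  · refine integral_congr_ae (Eventually.of_forall fun ξ => ?_)
    simp only
    rw [integral_mul_const, integral_phase_prod]
  · refine Integrable.bdd_mul (c := 1) (hH.comp_snd (ν.prod ν)) ?_ ?_
    · exact Continuous.aestronglyMeasurable (by fun_prop)
    · exact Eventually.of_forall fun x => (norm_exp_real_I _).le

/-- Dilated kernels: a Schwartz-like kernel `G(·/b)` acts on a measure through the Fourier
multiplier `b² Ĝ(bξ)`. -/
lemma pair_scaled (ν : Measure ℂ) [IsFiniteMeasure ν] {G : ℂ → ℂ} (hc : Continuous G)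
    (hi : Integrable G) (hF : Integrable (𝓕 G)) {b : ℝ} (hb : 0 < b) :
    ∫ p : ℂ × ℂ, G (b⁻¹ • (p.1 - p.2)) ∂(ν.prod ν)
      = (b ^ 2 : ℝ) * ∫ ξ, ((‖ft ν ξ‖ ^ 2 : ℝ) : ℂ) * 𝓕 G (b • ξ) := by
  have hinv : ∀ z, G (b⁻¹ • z) = (b ^ 2 : ℝ) * 𝓕⁻ (fun ξ => 𝓕 G (b • ξ)) z := by
    intro z
    conv_lhs => rw [← hc.fourierInv_fourier_eq hi hF]
    rw [Real.fourierInv_eq', Real.fourierInv_eq']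
    have := Measure.integral_comp_smul (volume : Measure ℂ) (fun v : ℂ =>
      Complex.exp (↑(2 * π * inner ℝ v (b⁻¹ • z)) * Complex.I) • 𝓕 G v) b
    rw [Complex.finrank_real_complex, abs_of_pos (by positivity), eq_inv_smul_iff₀ (by positivity)]
      at this
    rw [← this, Complex.real_smul]
    congr 2
    ext v
    rw [inner_smul_left, inner_smul_right]
    simp only [RCLike.conj_to_real]
    rw [mul_inv_cancel_left₀ hb.ne']
  simp_rw [hinv]
  rw [integral_const_mul, pair_kernel]
  exact hF.comp_smul hb.ne'


/-! ### The isotropic energy -/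

lemma lintegral_of_integral {f : ℝ → ℝ} {c : ℝ} (hf : ∀ x ∈ Ioi (0 : ℝ), 0 ≤ f x)
    (h : ∫ x in Ioi 0, f x = c) (hc : c ≠ 0) :
    ∫⁻ x in Ioi 0, ENNReal.ofReal (f x) = ENNReal.ofReal c := by
  have hi : IntegrableOn f (Ioi 0) := by
    by_contra hn
    exact hc (h.symm.trans (integral_undef hn))
  rw [← h, ofReal_integral_eq_lintegral_ofReal hi]
  exact (ae_restrict_iff' measurableSet_Ioi).2 (Eventually.of_forall hf)

lemma gauss_real {q c : ℝ} (hq : 0 < q) (hc : 0 < c) :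
    ∫ b in Ioi (0 : ℝ), b ^ (q - 1) * rexp (-c * b ^ 2)
      = c ^ (-(q / 2)) * (Real.Gamma (q / 2) / 2) := by
  have := integral_rpow_mul_exp_neg_mul_rpow (p := 2) (q := q - 1) (b := c) two_pos
    (by linarith) hc
  simp only [Real.rpow_two] at this
  rw [this, sub_add_cancel, neg_div]
  ring

lemma gauss_real_inv {q c : ℝ} (hq : 0 < q) (hc : 0 < c) :
    ∫ b in Ioi (0 : ℝ), b ^ (-q - 1) * rexp (-c * (b⁻¹) ^ 2)
      = c ^ (-(q / 2)) * (Real.Gamma (q / 2) / 2) := by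
  rw [← gauss_real hq hc, ← integral_comp_rpow_Ioi _ (show (-1 : ℝ) ≠ 0 by norm_num)]
  refine setIntegral_congr_fun measurableSet_Ioi fun b (hb : 0 < b) => ?_
  simp only [smul_eq_mul, abs_neg, abs_one, one_mul, Real.rpow_neg_one]
  rw [Real.inv_rpow hb.le, ← Real.rpow_neg hb.le, ← mul_assoc, ← Real.rpow_add hb]
  congr 2
  · ring
  · rw [inv_inv]

/-- `‖z‖^{-s}` as a superposition of Gaussians, including the value `∞` at the origin. -/
lemma gauss_kernel {s : ℝ} (hs : 0 < s) (z : ℂ) :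
    ∫⁻ b in Ioi (0 : ℝ), ENNReal.ofReal (b ^ (-s - 1) * rexp (-π * ‖b⁻¹ • z‖ ^ 2))
      = ENNReal.ofReal (π ^ (-(s / 2)) * (Real.Gamma (s / 2) / 2)) * ‖z‖ₑ ^ (-s) := by
  have hG : 0 < Real.Gamma (s / 2) := Real.Gamma_pos_of_pos (by positivity)
  rcases eq_or_ne z 0 with rfl | hz
  · rw [enorm_zero, ENNReal.zero_rpow_of_neg (by linarith), ENNReal.mul_top (by simp; positivity)]
    simp only [smul_zero, norm_zero, ne_eq, OfNat.ofNat_ne_zero, not_false_eq_true, zero_pow,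
      mul_zero, Real.exp_zero, mul_one]
    by_contra hn
    refine not_integrableOn_Ioi_rpow (-s - 1) ⟨by fun_prop, ?_⟩
    rw [hasFiniteIntegral_iff_ofReal]
    · exact lt_top_iff_ne_top.2 hn
    · exact (ae_restrict_iff' measurableSet_Ioi).2
        (Eventually.of_forall fun b (hb : 0 < b) => Real.rpow_nonneg hb.le _)
  · have hz' : 0 < ‖z‖ := norm_pos_iff.2 hz
    rw [← ofReal_norm, ENNReal.ofReal_rpow_of_pos hz', ← ENNReal.ofReal_mul (by positivity)]
    have h := gauss_real_inv hs (c := π * ‖z‖ ^ 2) (by positivity)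
    rw [Real.mul_rpow pi_pos.le (by positivity), ← Real.rpow_natCast ‖z‖ 2,
      ← Real.rpow_mul hz'.le] at h
    have e : ((2 : ℕ) : ℝ) * -(s / 2) = -s := by push_cast; ring
    rw [e] at h
    rw [lintegral_of_integral (c := π ^ (-(s / 2)) * (Real.Gamma (s / 2) / 2) * ‖z‖ ^ (-s))]
    · intro b hb
      have hb' : 0 < b := hb
      positivity
    · rw [mul_right_comm, ← h]
      refine setIntegral_congr_fun measurableSet_Ioi fun b (hb : 0 < b) => ?_
      simp only [norm_smul, Real.norm_eq_abs, mul_pow, sq_abs]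
      rw [← Real.rpow_natCast ‖z‖ 2]
      ring_nf
    · positivity

lemma gauss_mult {s : ℝ} (hs : s < 2) {ξ : ℂ} (hξ : ξ ≠ 0) :
    ∫⁻ b in Ioi (0 : ℝ), ENNReal.ofReal (b ^ (1 - s) * rexp (-π * ‖b • ξ‖ ^ 2))
      = ENNReal.ofReal (π ^ (-((2 - s) / 2)) * (Real.Gamma ((2 - s) / 2) / 2)) *
        ‖ξ‖ₑ ^ (s - 2) := by
  have hG : 0 < Real.Gamma ((2 - s) / 2) := Real.Gamma_pos_of_pos (by linarith)
  have hz' : 0 < ‖ξ‖ := norm_pos_iff.2 hξ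
  rw [← ofReal_norm, ENNReal.ofReal_rpow_of_pos hz', ← ENNReal.ofReal_mul (by positivity)]
  have h := gauss_real (q := 2 - s) (by linarith) (c := π * ‖ξ‖ ^ 2) (by positivity)
  rw [Real.mul_rpow pi_pos.le (by positivity), ← Real.rpow_natCast ‖ξ‖ 2,
    ← Real.rpow_mul hz'.le] at h
  have e : ((2 : ℕ) : ℝ) * -((2 - s) / 2) = s - 2 := by push_cast; ring
  rw [e] at h
  rw [lintegral_of_integral
    (c := π ^ (-((2 - s) / 2)) * (Real.Gamma ((2 - s) / 2) / 2) * ‖ξ‖ ^ (s - 2))]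
  · intro b hb
    have hb' : 0 < b := hb
    positivity
  · rw [mul_right_comm, ← h]
    refine setIntegral_congr_fun measurableSet_Ioi fun b (hb : 0 < b) => ?_
    simp only [norm_smul, Real.norm_eq_abs, mul_pow, sq_abs]
    rw [← Real.rpow_natCast ‖ξ‖ 2]
    ring_nf
  · positivity

lemma integrable_gauss (c : ℝ) (hc : 0 < c) : Integrable (fun z : ℂ => rexp (-c * ‖z‖ ^ 2)) := by
  have h := (GaussianFourier.integrable_cexp_neg_mul_sq_norm_add (b := (c : ℂ)) (V := ℂ)
    (by simpa using hc) 0 0).norm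
  refine h.congr (Eventually.of_forall fun z => ?_)
  simp only [zero_mul, add_zero, Complex.norm_exp]
  norm_cast

lemma pair_gauss (ν : Measure ℂ) [IsFiniteMeasure ν] {b : ℝ} (hb : 0 < b) :
    ∫⁻ p : ℂ × ℂ, ENNReal.ofReal (rexp (-π * ‖b⁻¹ • (p.1 - p.2)‖ ^ 2)) ∂(ν.prod ν)
      = ENNReal.ofReal (b ^ 2) *
        ∫⁻ ξ, ENNReal.ofReal (rexp (-π * ‖b • ξ‖ ^ 2)) * ‖ft ν ξ‖ₑ ^ 2 := by
  set G : ℂ → ℂ := fun z => Complex.exp (-(π : ℂ) * ‖z‖ ^ 2) with hG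
  have hGr : ∀ z, G z = ((rexp (-π * ‖z‖ ^ 2) : ℝ) : ℂ) := fun z => by simp [hG]
  have hi : Integrable G := by
    simp only [funext hGr]
    exact (integrable_gauss π pi_pos).ofReal
  have hF : 𝓕 G = G := by
    ext w
    rw [hG, fourier_gaussian_innerProductSpace (by simpa using pi_pos), div_self (by simp),
      Complex.one_cpow, one_mul]
    congr 1
    field_simp
  have h := pair_scaled ν (by fun_prop) hi (hF.symm ▸ hi) hb
  rw [hF] at h
  simp_rw [hGr, ← Complex.ofReal_mul] at h
  rw [integral_complex_ofReal, integral_complex_ofReal, ← Complex.ofReal_mul,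
    Complex.ofReal_inj] at h
  rw [← ofReal_integral_eq_lintegral_ofReal, h, ENNReal.ofReal_mul (by positivity),
    ofReal_integral_eq_lintegral_ofReal]
  · congr 2
    ext ξ
    rw [ENNReal.ofReal_mul (by positivity), mul_comm, ENNReal.ofReal_pow (norm_nonneg _),
      ofReal_norm]
  · refine Integrable.bdd_mul (c := (ν.real univ) ^ 2)
      ((integrable_gauss π pi_pos).comp_smul hb.ne') ?_ ?_
    · exact ((continuous_ft ν).norm.pow 2).aestronglyMeasurable
    · refine Eventually.of_forall fun ξ => ?_
      rw [norm_pow, norm_norm]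
      exact pow_le_pow_left₀ (norm_nonneg _) (norm_ft_le ν ξ) 2
  · exact Eventually.of_forall fun ξ => by positivity
  · refine Integrable.of_bound (C := 1) (Continuous.aestronglyMeasurable (by fun_prop)) ?_
    refine Eventually.of_forall fun p => ?_
    rw [Real.norm_eq_abs, Real.abs_exp, Real.exp_le_one_iff]
    have := pi_pos
    nlinarith [sq_nonneg ‖b⁻¹ • (p.1 - p.2)‖, mul_nonneg pi_pos.le (sq_nonneg ‖b⁻¹ • (p.1 - p.2)‖)]
  · exact Eventually.of_forall fun ξ => by positivity

/-- The isotropic Riesz energy of a finite measure, `Ω = 1`. -/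
def iso (s : ℝ) (ν : Measure ℂ) : ℝ≥0∞ := ∫⁻ p : ℂ × ℂ, ‖p.1 - p.2‖ₑ ^ (-s) ∂(ν.prod ν)

/-- Fourier form of the isotropic Riesz energy. It holds in `[0,∞]`, with no finiteness
assumption. -/
lemma iso_eq {s : ℝ} (hs0 : 0 < s) (hs2 : s < 2) (ν : Measure ℂ) [IsFiniteMeasure ν] :
    iso s ν = ENNReal.ofReal (cC s) * ∫⁻ ξ, ‖ξ‖ₑ ^ (s - 2) * ‖ft ν ξ‖ₑ ^ 2 := by
  have hG : 0 < Real.Gamma (s / 2) := Real.Gamma_pos_of_pos (by linarith)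
  have hG' : 0 < Real.Gamma ((2 - s) / 2) := Real.Gamma_pos_of_pos (by linarith)
  set A := π ^ (-(s / 2)) * (Real.Gamma (s / 2) / 2) with hA
  set B := π ^ (-((2 - s) / 2)) * (Real.Gamma ((2 - s) / 2) / 2) with hB
  have hA0 : 0 < A := by positivity
  have hAB : A * cC s = B := by
    rw [hA, hB, cC]
    have : π ^ (-(s / 2)) * π ^ (s - 1) = π ^ (-((2 - s) / 2)) := by
      rw [← Real.rpow_add pi_pos]; congr 1; ring
    rw [← this]
    field_simp
  have key : ENNReal.ofReal A * iso s ν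
      = ENNReal.ofReal B * ∫⁻ ξ, ‖ξ‖ₑ ^ (s - 2) * ‖ft ν ξ‖ₑ ^ 2 := by
    calc ENNReal.ofReal A * iso s ν
        = ∫⁻ p : ℂ × ℂ, (∫⁻ b in Ioi (0 : ℝ), ENNReal.ofReal
            (b ^ (-s - 1) * rexp (-π * ‖b⁻¹ • (p.1 - p.2)‖ ^ 2))) ∂(ν.prod ν) := by
          rw [iso, ← lintegral_const_mul' _ _ ENNReal.ofReal_ne_top]
          simp_rw [gauss_kernel hs0]
          rfl
      _ = ∫⁻ b in Ioi (0 : ℝ), ∫⁻ p : ℂ × ℂ, ENNReal.ofReal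
            (b ^ (-s - 1) * rexp (-π * ‖b⁻¹ • (p.1 - p.2)‖ ^ 2)) ∂(ν.prod ν) := by
          apply lintegral_lintegral_swap
          apply Measurable.aemeasurable
          unfold Function.uncurry
          fun_prop
      _ = ∫⁻ b in Ioi (0 : ℝ), ∫⁻ ξ : ℂ, ENNReal.ofReal
            (b ^ (1 - s) * rexp (-π * ‖b • ξ‖ ^ 2)) * ‖ft ν ξ‖ₑ ^ 2 := by
          refine setLIntegral_congr_fun measurableSet_Ioi fun b (hb : 0 < b) => ?_
          simp_rw [ENNReal.ofReal_mul (Real.rpow_nonneg hb.le _)]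
          rw [lintegral_const_mul' _ _ ENNReal.ofReal_ne_top, pair_gauss ν hb, ← mul_assoc,
            ← ENNReal.ofReal_mul (Real.rpow_nonneg hb.le _), ← Real.rpow_natCast b 2,
            ← Real.rpow_add hb, ← lintegral_const_mul' _ _ ENNReal.ofReal_ne_top]
          have e : -s - 1 + ((2 : ℕ) : ℝ) = 1 - s := by push_cast; ring
          simp_rw [e, mul_assoc]
      _ = ∫⁻ ξ : ℂ, ∫⁻ b in Ioi (0 : ℝ), ENNReal.ofReal
            (b ^ (1 - s) * rexp (-π * ‖b • ξ‖ ^ 2)) * ‖ft ν ξ‖ₑ ^ 2 := by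
          apply lintegral_lintegral_swap
          apply Measurable.aemeasurable
          have := (continuous_ft ν).measurable
          unfold Function.uncurry
          fun_prop
      _ = ∫⁻ ξ : ℂ, ENNReal.ofReal B * (‖ξ‖ₑ ^ (s - 2) * ‖ft ν ξ‖ₑ ^ 2) := by
          refine lintegral_congr_ae ?_
          filter_upwards [Measure.ae_ne volume (0 : ℂ)] with ξ hξ
          rw [lintegral_mul_const _ (by fun_prop), gauss_mult hs2 hξ, mul_assoc]
      _ = _ := lintegral_const_mul' _ _ ENNReal.ofReal_ne_top
  rw [← hAB, ENNReal.ofReal_mul hA0.le, mul_assoc] at key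
  exact (ENNReal.mul_right_inj (by simpa using hA0) ENNReal.ofReal_ne_top).1 key

/-! ### A smooth radial cutoff carrying the angular profile -/

/-- A smooth nonnegative cutoff on `ℝ`, positive exactly on `(1, 3)`. -/
def bmp (r : ℝ) : ℝ := (⟨1 / 2, 1, by norm_num, by norm_num⟩ : ContDiffBump (2 : ℝ)) r

lemma contDiff_bmp {n : ℕ∞} : ContDiff ℝ n bmp := ContDiffBump.contDiff _

lemma continuous_bmp : Continuous bmp := (contDiff_bmp (n := 0)).continuous

lemma bmp_nonneg (r : ℝ) : 0 ≤ bmp r := ContDiffBump.nonneg _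

lemma bmp_le_one (r : ℝ) : bmp r ≤ 1 := ContDiffBump.le_one _

lemma bmp_pos {r : ℝ} (h1 : 1 < r) (h3 : r < 3) : 0 < bmp r := by
  apply ContDiffBump.pos_of_mem_ball
  rw [Metric.mem_ball, Real.dist_eq, abs_lt]
  constructor <;> linarith

lemma bmp_of_le {r : ℝ} (h : r ≤ 1) : bmp r = 0 := by
  apply ContDiffBump.zero_of_le_dist
  rw [Real.dist_eq, le_abs]
  right
  linarith

lemma bmp_of_ge {r : ℝ} (h : 3 ≤ r) : bmp r = 0 := by
  apply ContDiffBump.zero_of_le_dist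
  rw [Real.dist_eq, le_abs]
  left
  linarith

lemma hasCompactSupport_bmp : HasCompactSupport bmp := ContDiffBump.hasCompactSupport _

lemma integrableOn_bmp (p : ℝ) : IntegrableOn (fun r => r ^ p * bmp r) (Ioi 0) := by
  have h1 : IntegrableOn (fun r => r ^ p * bmp r) (Icc 1 3) := by
    refine ContinuousOn.integrableOn_Icc (ContinuousOn.mul ?_ continuous_bmp.continuousOn)
    intro x hx
    exact (Real.continuousAt_rpow_const _ _ (Or.inl (by have := hx.1; linarith))).continuousWithinAt
  refine (integrableOn_iff_integrable_of_support_subset (s := Icc 1 3) ?_).1 h1 |>.integrableOn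
  intro r hr
  by_contra hn
  apply hr
  simp only
  rcases le_total r 1 with h | h
  · rw [bmp_of_le h, mul_zero]
  · rw [bmp_of_ge, mul_zero]
    by_contra h3
    exact hn ⟨h, by linarith⟩

/-- The Mellin-type normalisation `∫₀^∞ r^{s-1} bmp(r) dr`. -/
def Mg (s : ℝ) : ℝ := ∫ r in Ioi (0 : ℝ), r ^ (s - 1) * bmp r

lemma Mg_pos (s : ℝ) : 0 < Mg s := by
  rw [Mg, setIntegral_pos_iff_support_of_nonneg_ae _ (integrableOn_bmp _)]
  · refine lt_of_lt_of_le ?_ (measure_mono (s := Ioo 1 3) ?_)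
    · simp
    · intro r hr
      have h0 : (0 : ℝ) < r := lt_trans one_pos hr.1
      exact ⟨(mul_pos (Real.rpow_pos_of_pos h0 _) (bmp_pos hr.1 hr.2)).ne', h0⟩
  · filter_upwards [self_mem_ae_restrict measurableSet_Ioi] with r hr
    exact mul_nonneg (Real.rpow_nonneg (le_of_lt hr) _) (bmp_nonneg r)

lemma periodic_pi {Ω : ℝ → ℝ} (hΩ : SatisfiesH Ω) : Function.Periodic Ω π := hΩ.2.2.2

lemma Om_arg_neg {Ω : ℝ → ℝ} (hΩ : SatisfiesH Ω) (z : ℂ) : Ω (-z).arg = Ω z.arg := by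
  rcases eq_or_ne z 0 with rfl | hz
  · simp
  have h := Complex.arg_neg_coe_angle hz
  rw [← Real.Angle.coe_add, Real.Angle.angle_eq_iff_two_pi_dvd_sub] at h
  obtain ⟨k, hk⟩ := h
  have e : (-z).arg = (z.arg + π) + k * (2 * π) := by linarith
  have hp : Function.Periodic Ω (2 * π) := hΩ.2.1
  rw [e, hp.int_mul k, periodic_pi hΩ]

/-- `π`-periodicity of `Ω` removes the branch cut of the argument. -/
lemma contDiffAt_Om {Ω : ℝ → ℝ} (hΩ : SatisfiesH Ω) {z : ℂ} (hz : z ≠ 0) :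
    ContDiffAt ℝ (⊤ : ℕ∞) (fun w : ℂ => Ω w.arg) z := by
  have key : ∀ z : ℂ, z ∈ Complex.slitPlane →
      ContDiffAt ℝ (⊤ : ℕ∞) (fun w : ℂ => Ω w.arg) z := by
    intro z hz
    have h1 : ContDiffAt ℝ (⊤ : ℕ∞) Complex.arg z := by
      have h := (Complex.contDiffAt_log hz (n := ((⊤ : ℕ∞) : WithTop ℕ∞))).restrict_scalars ℝ
      have h2 := Complex.imCLM.contDiff.contDiffAt.comp z h
      refine h2.congr_of_eventuallyEq (Eventually.of_forall fun w => ?_)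
      simp [Complex.log_im]
    exact hΩ.1.contDiffAt.comp z h1
  by_cases h : z ∈ Complex.slitPlane
  · exact key z h
  · have hn : -z ∈ Complex.slitPlane := by
      rw [Complex.mem_slitPlane_iff] at h ⊢
      push Not at h
      left
      rw [Complex.neg_re]
      refine lt_of_le_of_ne (by linarith [h.1]) fun h0 => hz (Complex.ext ?_ h.2)
      simp only [Complex.zero_re]
      linarith
    have h3 := (key (-z) hn).comp z (contDiff_neg.contDiffAt)
    refine h3.congr_of_eventuallyEq (Eventually.of_forall fun w => ?_)
    simp [Om_arg_neg hΩ]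

/-- The building block `bmp(|z|) Ω(θ(z))`; its dilates superpose to `|z|^{-s} Ω(θ(z))`. -/
def bK (Ω : ℝ → ℝ) (z : ℂ) : ℂ := ((bmp ‖z‖ * Ω z.arg : ℝ) : ℂ)

lemma contDiff_bK {Ω : ℝ → ℝ} (hΩ : SatisfiesH Ω) : ContDiff ℝ (⊤ : ℕ∞) (bK Ω) := by
  rw [contDiff_iff_contDiffAt]
  intro z
  rcases eq_or_ne z 0 with rfl | hz
  · have : bK Ω =ᶠ[𝓝 0] fun _ => 0 := by
      filter_upwards [Metric.ball_mem_nhds (0 : ℂ) one_pos] with z hz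
      rw [mem_ball_zero_iff] at hz
      rw [bK, bmp_of_le hz.le]
      simp
    exact contDiffAt_const.congr_of_eventuallyEq this
  · refine Complex.ofRealCLM.contDiff.contDiffAt.comp z (ContDiffAt.mul ?_ (contDiffAt_Om hΩ hz))
    exact contDiff_bmp.contDiffAt.comp z (contDiffAt_norm ℝ hz)

lemma hasCompactSupport_bK (Ω : ℝ → ℝ) : HasCompactSupport (bK Ω) := by
  refine HasCompactSupport.intro (isCompact_closedBall (0 : ℂ) 3) fun z hz => ?_
  rw [mem_closedBall_zero_iff, not_le] at hz
  rw [bK, bmp_of_ge hz.le]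
  simp

/-- `bK Ω` as a Schwartz function. -/
def bS {Ω : ℝ → ℝ} (hΩ : SatisfiesH Ω) : SchwartzMap ℂ ℂ :=
  (hasCompactSupport_bK Ω).toSchwartzMap (contDiff_bK hΩ)

lemma bS_coe {Ω : ℝ → ℝ} (hΩ : SatisfiesH Ω) : (bS hΩ : ℂ → ℂ) = bK Ω := rfl

lemma ftbS_coe {Ω : ℝ → ℝ} (hΩ : SatisfiesH Ω) : ((𝓕 (bS hΩ) : SchwartzMap ℂ ℂ) : ℂ → ℂ) = 𝓕 (bK Ω) := rfl

lemma continuous_FbK {Ω : ℝ → ℝ} (hΩ : SatisfiesH Ω) : Continuous (𝓕 (bK Ω)) := by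
  rw [← ftbS_coe hΩ]; exact SchwartzMap.continuous _

lemma integrable_FbK {Ω : ℝ → ℝ} (hΩ : SatisfiesH Ω) : Integrable (𝓕 (bK Ω)) := by
  rw [← ftbS_coe hΩ]; exact SchwartzMap.integrable _

lemma continuous_bK {Ω : ℝ → ℝ} (hΩ : SatisfiesH Ω) : Continuous (bK Ω) := (contDiff_bK hΩ).continuous

lemma integrable_bK {Ω : ℝ → ℝ} (hΩ : SatisfiesH Ω) : Integrable (bK Ω) :=
  (continuous_bK hΩ).integrable_of_hasCompactSupport (hasCompactSupport_bK Ω)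

lemma FbK_decay {Ω : ℝ → ℝ} (hΩ : SatisfiesH Ω) :
    ∃ C, 0 < C ∧ ∀ ξ, ‖𝓕 (bK Ω) ξ‖ ≤ C * (1 + ‖ξ‖ ^ 2)⁻¹ := by
  obtain ⟨C0, hC0, h0⟩ := (𝓕 (bS hΩ) : SchwartzMap ℂ ℂ).decay 0 0
  obtain ⟨C2, hC2, h2⟩ := (𝓕 (bS hΩ) : SchwartzMap ℂ ℂ).decay 2 0
  refine ⟨C0 + C2, by positivity, fun ξ => ?_⟩
  have a := h0 ξ
  have b := h2 ξ
  rw [norm_iteratedFDeriv_zero, ftbS_coe] at a b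
  rw [← div_eq_mul_inv, le_div_iff₀ (by positivity)]
  linarith

/-! ### Fourier form of the anisotropic energy -/

lemma Om_bounds {Ω : ℝ → ℝ} (hΩ : SatisfiesH Ω) : ∃ m M, 0 < m ∧ 0 < M ∧ ∀ θ, m ≤ Ω θ ∧ Ω θ ≤ M := by
  have hc : Continuous Ω := hΩ.1.continuous
  have hk : IsCompact (range Ω) := (periodic_pi hΩ).compact_of_continuous pi_pos.ne' hc
  obtain ⟨x, hx⟩ := hk.exists_isLeast (range_nonempty Ω)
  obtain ⟨y, hy⟩ := hk.exists_isGreatest (range_nonempty Ω)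
  obtain ⟨a, rfl⟩ := hx.1
  obtain ⟨b, rfl⟩ := hy.1
  exact ⟨Ω a, Ω b, hΩ.2.2.1 a, hΩ.2.2.1 b, fun θ => ⟨hx.2 ⟨θ, rfl⟩, hy.2 ⟨θ, rfl⟩⟩⟩

/-- The homogeneous part `|z|^{-s} Ω(θ(z))` of the potential, with value `0` at the origin. -/
def Kr (s : ℝ) (Ω : ℝ → ℝ) (z : ℂ) : ℝ := ‖z‖ ^ (-s) * Ω z.arg

lemma measurable_Kr (s : ℝ) {Ω : ℝ → ℝ} (hΩ : SatisfiesH Ω) : Measurable (Kr s Ω) := by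
  have := hΩ.1.continuous.measurable
  unfold Kr
  fun_prop

/-- The homogeneous Fourier multiplier of the anisotropic interaction, normalised by `Mg s`. -/
def Qc (s : ℝ) (Ω : ℝ → ℝ) (ξ : ℂ) : ℝ := ∫ b in Ioi (0 : ℝ), b ^ (1 - s) * (𝓕 (bK Ω) (b • ξ)).re

lemma integrableOn_decay {s : ℝ} (hs0 : 0 < s) (hs2 : s < 2) :
    IntegrableOn (fun b : ℝ => b ^ (1 - s) * (1 + b ^ 2)⁻¹) (Ioi 0) := by
  have hm : Measurable (fun b : ℝ => b ^ (1 - s) * (1 + b ^ 2)⁻¹) := by fun_prop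
  rw [← Ioc_union_Ioi_eq_Ioi zero_le_one]
  refine IntegrableOn.union ?_ ?_
  · have h : IntegrableOn (fun b : ℝ => b ^ (1 - s)) (Ioc 0 1) :=
      (intervalIntegrable_iff_integrableOn_Ioc_of_le zero_le_one).1
        (intervalIntegral.intervalIntegrable_rpow' (by linarith))
    refine Integrable.mono' h hm.aestronglyMeasurable ?_
    filter_upwards [self_mem_ae_restrict measurableSet_Ioc] with b hb
    have hb0 : 0 < b := hb.1
    rw [Real.norm_of_nonneg (by positivity)]
    refine mul_le_of_le_one_right (by positivity) (inv_le_one_of_one_le₀ ?_)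
    nlinarith [sq_nonneg b]
  · have h : IntegrableOn (fun b : ℝ => b ^ (-1 - s)) (Ioi 1) :=
      integrableOn_Ioi_rpow_of_lt (by linarith) one_pos
    refine Integrable.mono' h hm.aestronglyMeasurable ?_
    filter_upwards [self_mem_ae_restrict measurableSet_Ioi] with b (hb : 1 < b)
    have hb0 : 0 < b := by linarith
    rw [Real.norm_of_nonneg (by positivity), show -1 - s = (1 - s) + (-2) by ring,
      Real.rpow_add hb0, Real.rpow_neg hb0.le, Real.rpow_two]
    gcongr
    linarith

/-- The constant `∫₀^∞ b^{1-s}/(1+b²) db`. -/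
def Ac (s : ℝ) : ℝ := ∫ b in Ioi (0 : ℝ), b ^ (1 - s) * (1 + b ^ 2)⁻¹

lemma Ac_nonneg (s : ℝ) : 0 ≤ Ac s :=
  setIntegral_nonneg measurableSet_Ioi fun b (hb : 0 < b) => by positivity

lemma integrableOn_decay_scaled {s : ℝ} (hs0 : 0 < s) (hs2 : s < 2) {r : ℝ} (hr : 0 < r) :
    IntegrableOn (fun b : ℝ => b ^ (1 - s) * (1 + (b * r) ^ 2)⁻¹) (Ioi 0) ∧
      ∫ b in Ioi (0 : ℝ), b ^ (1 - s) * (1 + (b * r) ^ 2)⁻¹ = r ^ (s - 2) * Ac s := by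
  have e : ∀ b ∈ Ioi (0 : ℝ), b ^ (1 - s) * (1 + (b * r) ^ 2)⁻¹
      = r ^ (s - 1) * ((r * b) ^ (1 - s) * (1 + (r * b) ^ 2)⁻¹) := by
    intro b hb
    rw [Real.mul_rpow hr.le (le_of_lt hb), mul_comm b r, show 1 - s = -(s - 1) by ring,
      Real.rpow_neg hr.le]
    have := (Real.rpow_pos_of_pos hr (s - 1)).ne'
    field_simp
  have h := integrableOn_decay hs0 hs2
  constructor
  · refine IntegrableOn.congr_fun ?_ (fun b hb => (e b hb).symm) measurableSet_Ioi
    refine Integrable.const_mul ?_ _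
    have := (integrableOn_Ioi_comp_mul_left_iff
      (fun b : ℝ => b ^ (1 - s) * (1 + b ^ 2)⁻¹) 0 hr).2 (by simpa using h)
    exact this
  · rw [setIntegral_congr_fun measurableSet_Ioi e, integral_const_mul,
      integral_comp_mul_left_Ioi (fun b : ℝ => b ^ (1 - s) * (1 + b ^ 2)⁻¹) 0 hr, mul_zero, Ac,
      smul_eq_mul, ← mul_assoc, show s - 2 = (s - 1) - 1 by ring, Real.rpow_sub_one hr.ne' (s - 1),
      div_eq_mul_inv]

lemma integrableOn_Qc {s : ℝ} (hs0 : 0 < s) (hs2 : s < 2) {Ω : ℝ → ℝ} (hΩ : SatisfiesH Ω) {ξ : ℂ}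
    (hξ : ξ ≠ 0) :
    IntegrableOn (fun b : ℝ => b ^ (1 - s) * (𝓕 (bK Ω) (b • ξ)).re) (Ioi 0) := by
  obtain ⟨C, hC, h⟩ := FbK_decay hΩ
  have hm := (continuous_FbK hΩ).measurable
  refine Integrable.mono' (((integrableOn_decay_scaled hs0 hs2 (norm_pos_iff.2 hξ)).1).const_mul C)
    (Measurable.aestronglyMeasurable (by fun_prop)) ?_
  filter_upwards [self_mem_ae_restrict measurableSet_Ioi] with b (hb : 0 < b)
  rw [norm_mul, Real.norm_of_nonneg (by positivity), mul_left_comm]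
  refine mul_le_mul_of_nonneg_left ?_ (by positivity)
  refine (Complex.abs_re_le_norm _).trans ((h _).trans_eq ?_)
  rw [norm_smul, Real.norm_of_nonneg hb.le]

lemma Qc_norm_integral_le {s : ℝ} (hs0 : 0 < s) (hs2 : s < 2) {Ω : ℝ → ℝ} (hΩ : SatisfiesH Ω) :
    ∃ C, 0 < C ∧ ∀ ξ : ℂ, ξ ≠ 0 →
      ∫ b in Ioi (0 : ℝ), ‖b ^ (1 - s) * (𝓕 (bK Ω) (b • ξ)).re‖ ≤ C * ‖ξ‖ ^ (s - 2) := by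
  obtain ⟨C, hC, h⟩ := FbK_decay hΩ
  have hA := Ac_nonneg s
  refine ⟨C * (Ac s + 1), by positivity, fun ξ hξ => ?_⟩
  have hd := integrableOn_decay_scaled hs0 hs2 (norm_pos_iff.2 hξ)
  calc _ ≤ ∫ b in Ioi (0 : ℝ), C * (b ^ (1 - s) * (1 + (b * ‖ξ‖) ^ 2)⁻¹) := by
        refine setIntegral_mono_on (integrableOn_Qc hs0 hs2 hΩ hξ).norm (hd.1.const_mul C)
          measurableSet_Ioi fun b (hb : 0 < b) => ?_
        rw [norm_mul, Real.norm_of_nonneg (by positivity), mul_left_comm]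
        refine mul_le_mul_of_nonneg_left ?_ (by positivity)
        refine (Complex.abs_re_le_norm _).trans ((h _).trans_eq ?_)
        rw [norm_smul, Real.norm_of_nonneg hb.le]
    _ = C * Ac s * ‖ξ‖ ^ (s - 2) := by rw [integral_const_mul, hd.2]; ring
    _ ≤ _ := by
        have : 0 ≤ ‖ξ‖ ^ (s - 2) := by positivity
        nlinarith [mul_nonneg hC.le this]

lemma Qc_bound {s : ℝ} (hs0 : 0 < s) (hs2 : s < 2) {Ω : ℝ → ℝ} (hΩ : SatisfiesH Ω) :
    ∃ C, 0 < C ∧ ∀ ξ : ℂ, ξ ≠ 0 → |Qc s Ω ξ| ≤ C * ‖ξ‖ ^ (s - 2) := by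
  obtain ⟨C, hC, h⟩ := Qc_norm_integral_le hs0 hs2 hΩ
  exact ⟨C, hC, fun ξ hξ => (norm_integral_le_integral_norm _).trans (h ξ hξ)⟩

lemma stronglyMeasurable_Qc (s : ℝ) {Ω : ℝ → ℝ} (hΩ : SatisfiesH Ω) : StronglyMeasurable (Qc s Ω) := by
  have hm := (continuous_FbK hΩ).measurable
  refine StronglyMeasurable.integral_prod_right' (f := fun p : ℂ × ℝ => p.2 ^ (1 - s) *
    (𝓕 (bK Ω) (p.2 • p.1)).re) (Measurable.stronglyMeasurable (by fun_prop))

/-- Finiteness of the isotropic energy as an integrability statement on the Fourier side. -/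
lemma integrable_ft_of_iso {s : ℝ} (hs0 : 0 < s) (hs2 : s < 2) (ν : Measure ℂ) [IsFiniteMeasure ν]
    (h : iso s ν < ⊤) : Integrable (fun ξ : ℂ => ‖ξ‖ ^ (s - 2) * ‖ft ν ξ‖ ^ 2) := by
  have hc : 0 < cC s := by
    have := Real.Gamma_pos_of_pos (show 0 < s / 2 by linarith)
    have := Real.Gamma_pos_of_pos (show 0 < (2 - s) / 2 by linarith)
    unfold cC
    positivity
  have hm := (continuous_ft ν).measurable
  refine ⟨Measurable.aestronglyMeasurable (by fun_prop), ?_⟩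
  rw [iso_eq hs0 hs2] at h
  have h2 : ∫⁻ ξ : ℂ, ‖ξ‖ₑ ^ (s - 2) * ‖ft ν ξ‖ₑ ^ 2 < ⊤ := by
    rcases ENNReal.mul_lt_top_iff.1 h with h | h | h
    · exact h.2
    · exact absurd h (by simpa using hc)
    · rw [h]; exact ENNReal.zero_lt_top
  refine lt_of_eq_of_lt (lintegral_congr_ae ?_) h2
  filter_upwards [Measure.ae_ne volume 0] with ξ hξ
  have hn : 0 < ‖ξ‖ := norm_pos_iff.2 hξ
  rw [enorm_mul, Real.enorm_of_nonneg (by positivity), ← ENNReal.ofReal_rpow_of_pos hn, ofReal_norm,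
    enorm_pow, enorm_norm]

lemma integrable_Kr {s : ℝ} {Ω : ℝ → ℝ} (hΩ : SatisfiesH Ω)
    (ν : Measure ℂ) [IsFiniteMeasure ν] (h : iso s ν < ⊤) :
    Integrable (fun p : ℂ × ℂ => Kr s Ω (p.1 - p.2)) (ν.prod ν) := by
  obtain ⟨m, M, hm, hM, hb⟩ := Om_bounds hΩ
  have hme := measurable_Kr s hΩ
  refine ⟨Measurable.aestronglyMeasurable (by fun_prop), ?_⟩
  refine lt_of_le_of_lt (lintegral_mono (g := fun p : ℂ × ℂ =>
    ENNReal.ofReal M * ‖p.1 - p.2‖ₑ ^ (-s)) fun p => ?_) ?_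
  · simp only [Kr]
    rw [enorm_mul, mul_comm, Real.enorm_of_nonneg (hm.le.trans (hb _).1),
      Real.enorm_of_nonneg (by positivity)]
    gcongr
    · exact (hb _).2
    · rcases eq_or_ne (p.1 - p.2) 0 with h0 | h0
      · rcases eq_or_ne s 0 with rfl | hs
        · simp
        · simp [h0, Real.zero_rpow (neg_ne_zero.2 hs)]
      · rw [← ofReal_norm, ENNReal.ofReal_rpow_of_pos (norm_pos_iff.2 h0)]
  · rw [lintegral_const_mul' _ _ ENNReal.ofReal_ne_top]
    exact ENNReal.mul_lt_top ENNReal.ofReal_lt_top h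

lemma bK_smul (Ω : ℝ → ℝ) {b : ℝ} (hb : 0 < b) (z : ℂ) :
    bK Ω (b⁻¹ • z) = ((bmp (b⁻¹ * ‖z‖) * Ω z.arg : ℝ) : ℂ) := by
  rw [bK, norm_smul, Real.norm_of_nonneg (by positivity), Complex.real_smul,
    Complex.arg_real_mul _ (by positivity)]

/-- Superposition of dilates of `bK Ω` reproduces the homogeneous kernel. -/
lemma Kr_superposition {s : ℝ} (hs : 0 < s) (Ω : ℝ → ℝ) (z : ℂ) :
    IntegrableOn (fun b : ℝ => b ^ (-s - 1) * (bK Ω (b⁻¹ • z)).re) (Ioi 0) ∧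
    ∫ b in Ioi (0 : ℝ), b ^ (-s - 1) * (bK Ω (b⁻¹ • z)).re = Mg s * Kr s Ω z := by
  rcases eq_or_ne z 0 with rfl | hz
  · have : bK Ω 0 = 0 := by simp [bK, bmp_of_le]
    simp [this, Kr, Real.zero_rpow (neg_ne_zero.2 hs.ne')]
  have hz' : 0 < ‖z‖ := norm_pos_iff.2 hz
  have hs1 : (-1 : ℝ) ≠ 0 := by norm_num
  set f : ℝ → ℝ := fun r => ‖z‖ ^ (1 - s) * Ω z.arg * ((‖z‖ * r) ^ (s - 1) * bmp (‖z‖ * r)) with hf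
  -- after `b = r⁻¹` the integrand becomes `r ^ (s - 1) * bmp (r * ‖z‖) * Ω (arg z)`
  have e : ∀ b ∈ Ioi (0 : ℝ), b ^ (-s - 1) * (bK Ω (b⁻¹ • z)).re =
      (|(-1 : ℝ)| * b ^ ((-1 : ℝ) - 1)) • f (b ^ (-1 : ℝ)) := by
    intro b hb
    have hb' : 0 < b := hb
    rw [bK_smul Ω hb, Complex.ofReal_re]
    simp only [hf, abs_neg, abs_one, one_mul, smul_eq_mul]
    rw [Real.rpow_neg_one, Real.mul_rpow hz'.le (by positivity), Real.inv_rpow hb'.le,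
      ← Real.rpow_neg hb'.le, show -s - 1 = (-1 - 1) + -(s - 1) by ring, Real.rpow_add hb',
      show 1 - s = -(s - 1) by ring, Real.rpow_neg hz'.le, mul_comm b⁻¹]
    have := (Real.rpow_pos_of_pos hz' (s - 1)).ne'
    field_simp
  have hi := (integrableOn_Ioi_comp_mul_left_iff (fun r => r ^ (s - 1) * bmp r) 0 hz').2
    (by simpa using integrableOn_bmp (s - 1))
  constructor
  · refine IntegrableOn.congr_fun ?_ (fun b hb => (e b hb).symm) measurableSet_Ioi
    exact (integrableOn_Ioi_comp_rpow_iff f hs1).2 (hi.const_mul _)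
  · rw [setIntegral_congr_fun measurableSet_Ioi e, integral_comp_rpow_Ioi f hs1, hf, integral_const_mul,
      integral_comp_mul_left_Ioi (fun r => r ^ (s - 1) * bmp r) 0 hz', mul_zero, ← Mg, Kr,
      smul_eq_mul, show 1 - s = -s + 1 by ring, Real.rpow_add_one hz'.ne']
    field_simp

lemma integrable_Qc_ft {s : ℝ} (hs0 : 0 < s) (hs2 : s < 2) {Ω : ℝ → ℝ} (hΩ : SatisfiesH Ω)
    {u : ℂ → ℝ} (hu : Measurable u) (hi : Integrable (fun ξ : ℂ => ‖ξ‖ ^ (s - 2) * u ξ)) :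
    Integrable (fun ξ => Qc s Ω ξ * u ξ) := by
  obtain ⟨C, hC, h⟩ := Qc_bound hs0 hs2 hΩ
  refine (hi.norm.const_mul C).mono' ?_ ?_
  · exact ((stronglyMeasurable_Qc s hΩ).measurable.mul hu).aestronglyMeasurable
  · filter_upwards [Measure.ae_ne volume 0] with ξ hξ
    rw [norm_mul, norm_mul, ← mul_assoc]
    refine mul_le_mul_of_nonneg_right ((h ξ hξ).trans_eq ?_) (norm_nonneg _)
    rw [Real.norm_of_nonneg (by positivity)]

lemma measurable_pairK (s : ℝ) {Ω : ℝ → ℝ} (hΩ : SatisfiesH Ω) : Measurable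
    (Function.uncurry fun (p : ℂ × ℂ) (b : ℝ) => b ^ (-s - 1) * (bK Ω (b⁻¹ • (p.1 - p.2))).re) := by
  have h : Measurable fun q : (ℂ × ℂ) × ℝ => q.2⁻¹ • (q.1.1 - q.1.2) := by fun_prop
  exact (by fun_prop : Measurable fun q : (ℂ × ℂ) × ℝ => q.2 ^ (-s - 1)).mul
    (Complex.measurable_re.comp ((continuous_bK hΩ).measurable.comp h))

set_option maxHeartbeats 800000 in
/-- The anisotropic energy of a measure with finite isotropic energy in Fourier variables. -/
theorem Kr_energy {s : ℝ} (hs0 : 0 < s) (hs2 : s < 2) {Ω : ℝ → ℝ} (hΩ : SatisfiesH Ω)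
    (ν : Measure ℂ) [IsFiniteMeasure ν] (h : iso s ν < ⊤) :
    Mg s * ∫ p : ℂ × ℂ, Kr s Ω (p.1 - p.2) ∂(ν.prod ν) = ∫ ξ, Qc s Ω ξ * ‖ft ν ξ‖ ^ 2 := by
  have hmb := (continuous_bK hΩ).measurable
  have hmF := (continuous_FbK hΩ).measurable
  have hmf := (continuous_ft ν).measurable
  have hKi := integrable_Kr hΩ ν h
  obtain ⟨C, hC, hCb⟩ := Qc_norm_integral_le hs0 hs2 hΩ
  calc _ = ∫ p : ℂ × ℂ, (∫ b in Ioi (0 : ℝ), b ^ (-s - 1) * (bK Ω (b⁻¹ • (p.1 - p.2))).re)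
        ∂(ν.prod ν) := by
        rw [← integral_const_mul]
        exact integral_congr_ae (Eventually.of_forall fun p => ((Kr_superposition hs0 Ω (p.1 - p.2)).2).symm)
    _ = ∫ b in Ioi (0 : ℝ), (∫ p : ℂ × ℂ, b ^ (-s - 1) * (bK Ω (b⁻¹ • (p.1 - p.2))).re
        ∂(ν.prod ν)) := by
        refine integral_integral_swap ?_
        rw [integrable_prod_iff (measurable_pairK s hΩ).aestronglyMeasurable]
        refine ⟨Eventually.of_forall fun p => (Kr_superposition hs0 Ω (p.1 - p.2)).1, ?_⟩
        refine (hKi.const_mul (Mg s)).congr (Eventually.of_forall fun p => ?_)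
        simp only
        rw [← (Kr_superposition hs0 Ω (p.1 - p.2)).2]
        refine setIntegral_congr_fun measurableSet_Ioi fun b (hb : 0 < b) => ?_
        simp only [Function.uncurry]
        rw [Real.norm_of_nonneg]
        refine mul_nonneg (Real.rpow_nonneg hb.le _) ?_
        rw [bK, Complex.ofReal_re]
        exact mul_nonneg (bmp_nonneg _) (hΩ.2.2.1 _).le
    _ = ∫ b in Ioi (0 : ℝ), ∫ ξ, b ^ (1 - s) * (𝓕 (bK Ω) (b • ξ)).re * ‖ft ν ξ‖ ^ 2 := by
        refine setIntegral_congr_fun measurableSet_Ioi fun b (hb : 0 < b) => ?_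
        have hp := pair_scaled ν (continuous_bK hΩ) (integrable_bK hΩ) (integrable_FbK hΩ) hb
        have hi1 : Integrable (fun p : ℂ × ℂ => bK Ω (b⁻¹ • (p.1 - p.2))) (ν.prod ν) := by
          obtain ⟨B, hB⟩ := (continuous_bK hΩ).bounded_above_of_compact_support
            (hasCompactSupport_bK Ω)
          exact Integrable.of_bound (C := B)
            (hmb.comp (by fun_prop : Measurable fun p : ℂ × ℂ => b⁻¹ • (p.1 - p.2))).aestronglyMeasurable
            (Eventually.of_forall fun p => hB _)
        have hi2 : Integrable (fun ξ => ((‖ft ν ξ‖ ^ 2 : ℝ) : ℂ) * 𝓕 (bK Ω) (b • ξ)) := by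
          refine Integrable.bdd_mul (c := ν.real univ ^ 2) ((integrable_FbK hΩ).comp_smul hb.ne')
            (Measurable.aestronglyMeasurable (by fun_prop)) (Eventually.of_forall fun ξ => ?_)
          rw [Complex.norm_real, Real.norm_of_nonneg (by positivity)]
          gcongr
          exact norm_ft_le ν ξ
        have hp' := congrArg Complex.re hp
        have er : (∫ p : ℂ × ℂ, bK Ω (b⁻¹ • (p.1 - p.2)) ∂(ν.prod ν)).re
            = ∫ p : ℂ × ℂ, (bK Ω (b⁻¹ • (p.1 - p.2))).re ∂(ν.prod ν) :=
          (Complex.reCLM.integral_comp_comm hi1).symm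
        have er2 : (∫ ξ, ((‖ft ν ξ‖ ^ 2 : ℝ) : ℂ) * 𝓕 (bK Ω) (b • ξ)).re
            = ∫ ξ, (((‖ft ν ξ‖ ^ 2 : ℝ) : ℂ) * 𝓕 (bK Ω) (b • ξ)).re :=
          (Complex.reCLM.integral_comp_comm hi2).symm
        rw [integral_const_mul, ← er, hp', Complex.re_ofReal_mul, er2, ← mul_assoc,
          ← Real.rpow_natCast b 2, ← Real.rpow_add hb, ← integral_const_mul]
        refine integral_congr_ae (Eventually.of_forall fun ξ => ?_)
        simp only [Complex.re_ofReal_mul]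
        rw [show -s - 1 + ((2 : ℕ) : ℝ) = 1 - s by push_cast; ring]
        ring
    _ = ∫ ξ, ∫ b in Ioi (0 : ℝ), b ^ (1 - s) * (𝓕 (bK Ω) (b • ξ)).re * ‖ft ν ξ‖ ^ 2 := by
        refine integral_integral_swap ?_
        rw [integrable_prod_iff' (Measurable.aestronglyMeasurable (by
          unfold Function.uncurry; fun_prop))]
        constructor
        · filter_upwards [Measure.ae_ne volume 0] with ξ hξ
          exact (integrableOn_Qc hs0 hs2 hΩ hξ).mul_const (‖ft ν ξ‖ ^ 2)
        · refine ((integrable_ft_of_iso hs0 hs2 ν h).const_mul C).mono' ?_ ?_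
          · refine StronglyMeasurable.aestronglyMeasurable ?_
            refine StronglyMeasurable.integral_prod_right' (f := fun p : ℂ × ℝ =>
              ‖p.2 ^ (1 - s) * (𝓕 (bK Ω) (p.2 • p.1)).re * ‖ft ν p.1‖ ^ 2‖)
              (Measurable.stronglyMeasurable (by fun_prop))
          · filter_upwards [Measure.ae_ne volume 0] with ξ hξ
            simp only [Function.uncurry]
            simp_rw [norm_mul _ (‖ft ν ξ‖ ^ 2)]
            rw [integral_mul_const, norm_mul, norm_norm, ← mul_assoc,
              Real.norm_of_nonneg (integral_nonneg fun b => norm_nonneg _),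
              Real.norm_of_nonneg (by positivity : 0 ≤ ‖ft ν ξ‖ ^ 2)]
            exact mul_le_mul_of_nonneg_right (hCb ξ hξ) (by positivity)
    _ = _ := by
        refine integral_congr_ae (Eventually.of_forall fun ξ => ?_)
        simp only
        rw [integral_mul_const, Qc]

/-! ### Uniform measures on rotated rectangles -/

/-- Converse of `integrable_ft_of_iso`. -/
lemma iso_lt_top {s : ℝ} (hs0 : 0 < s) (hs2 : s < 2) (ν : Measure ℂ) [IsFiniteMeasure ν]
    (h : Integrable (fun ξ : ℂ => ‖ξ‖ ^ (s - 2) * ‖ft ν ξ‖ ^ 2)) : iso s ν < ⊤ := by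
  rw [iso_eq hs0 hs2]
  refine ENNReal.mul_lt_top ENNReal.ofReal_lt_top ?_
  refine lt_of_eq_of_lt (lintegral_congr_ae ?_) h.2
  filter_upwards [Measure.ae_ne volume 0] with ξ hξ
  have hn : 0 < ‖ξ‖ := norm_pos_iff.2 hξ
  rw [enorm_mul, Real.enorm_of_nonneg (by positivity : 0 ≤ ‖ξ‖ ^ (s - 2)),
    ← ENNReal.ofReal_rpow_of_pos hn, ofReal_norm, enorm_pow, enorm_norm]

/-- The isotropic energy of a nonzero measure is positive. -/
lemma iso_ne_zero {s : ℝ} (hs0 : 0 < s) (ν : Measure ℂ) [IsProbabilityMeasure ν] : iso s ν ≠ 0 := by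
  intro h
  rw [iso, lintegral_eq_zero_iff (by fun_prop)] at h
  have hf : ∀ᵐ p ∂(ν.prod ν), False := by
    filter_upwards [h] with p hp
    rw [Pi.zero_apply, ENNReal.rpow_eq_zero_iff] at hp
    rcases hp with h | h
    · linarith [h.2]
    · exact enorm_ne_top h.1
  rw [ae_iff] at hf
  simp at hf

/-- The uniform probability measure on `(-1, 1]`. -/
def u1 : Measure ℝ := ENNReal.ofReal (1 / 2) • volume.restrict (Ioc (-1) 1)

instance : IsProbabilityMeasure u1 := by
  constructor
  rw [u1, Measure.smul_apply, Measure.restrict_apply_univ, Real.volume_Ioc, smul_eq_mul,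
    ← ENNReal.ofReal_mul (by norm_num)]
  norm_num

lemma integral_u1 (t : ℝ) : ∫ x, Complex.exp ((t * x : ℝ) * Complex.I) ∂u1 = (sinc t : ℂ) := by
  rw [u1, integral_smul_measure, ← intervalIntegral.integral_of_le (by norm_num)]
  rcases eq_or_ne t 0 with rfl | ht
  · norm_num
  have h := integral_exp_mul_I_eq_sinc t
  have h2 := intervalIntegral.integral_comp_mul_left (a := -1) (b := 1)
    (fun x : ℝ => Complex.exp ((x : ℂ) * Complex.I)) ht
  rw [mul_neg, mul_one] at h2
  rw [h2, h, Complex.real_smul, ENNReal.toReal_ofReal (by norm_num), Complex.real_smul]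
  push_cast
  have : (t : ℂ) ≠ 0 := by exact_mod_cast ht
  field_simp

/-- The rotated coordinates `(u, v) ↦ e^{iφ}(u + iv)`. -/
def Tm (φ : ℝ) (p : ℝ × ℝ) : ℂ := rotation (Circle.exp φ) (Complex.measurableEquivRealProd.symm p)

lemma Tm_eq (φ : ℝ) (p : ℝ × ℝ) :
    Tm φ p = Complex.exp (φ * Complex.I) * ((p.1 : ℂ) + p.2 * Complex.I) := by
  rw [Tm, rotation_apply, Circle.coe_exp]
  congr 1
  apply Complex.ext <;> simp [Complex.measurableEquivRealProd]

lemma measurePreserving_Tm (φ : ℝ) : MeasurePreserving (Tm φ) :=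
  ((rotation (Circle.exp φ)).measurePreserving).comp
    (Complex.volume_preserving_equiv_real_prod.symm _)

lemma measurableEmbedding_Tm (φ : ℝ) : MeasurableEmbedding (Tm φ) :=
  ((rotation (Circle.exp φ)).toHomeomorph.measurableEmbedding).comp
    (Complex.measurableEquivRealProd.symm.measurableEmbedding)

lemma continuous_Tm (φ : ℝ) : Continuous (Tm φ) := by
  have : Tm φ = fun p => Complex.exp (φ * Complex.I) * ((p.1 : ℂ) + p.2 * Complex.I) :=
    funext (Tm_eq φ)
  rw [this]
  fun_prop

lemma inner_Tm (φ : ℝ) (p q : ℝ × ℝ) : inner ℝ (Tm φ p) (Tm φ q) = p.1 * q.1 + p.2 * q.2 := by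
  rw [Tm, Tm, LinearIsometryEquiv.inner_map_map, Complex.inner]
  simp [Complex.measurableEquivRealProd]
  ring

lemma norm_Tm_sq (φ : ℝ) (p : ℝ × ℝ) : ‖Tm φ p‖ ^ 2 = p.1 ^ 2 + p.2 ^ 2 := by
  rw [← real_inner_self_eq_norm_sq, inner_Tm]
  ring

/-- The uniform probability measure on the rectangle with half-sides `c`, `d`, rotated by `φ`. -/
def rect (φ c d : ℝ) : Measure ℂ := (u1.prod u1).map fun p => Tm φ (c * p.1, d * p.2)

lemma measurable_rectMap (φ c d : ℝ) : Measurable fun p : ℝ × ℝ => Tm φ (c * p.1, d * p.2) :=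
  (continuous_Tm φ).measurable.comp (by fun_prop)

instance (φ c d : ℝ) : IsProbabilityMeasure (rect φ c d) :=
  Measure.isProbabilityMeasure_map (measurable_rectMap φ c d).aemeasurable

lemma ft_rect (φ c d : ℝ) (q : ℝ × ℝ) :
    ft (rect φ c d) (Tm φ q) = (sinc (2 * π * c * q.1) * sinc (2 * π * d * q.2) : ℝ) := by
  rw [ft_eq, rect, integral_map (measurable_rectMap φ c d).aemeasurable
    (Continuous.aestronglyMeasurable (by fun_prop))]
  push_cast
  rw [← integral_u1, ← integral_u1, ← integral_prod_mul]
  refine integral_congr_ae (Eventually.of_forall fun p => ?_)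
  simp only
  rw [← Complex.exp_add, inner_Tm]
  congr 1
  push_cast
  ring

lemma integrable_of_even {f : ℝ → ℝ} (he : ∀ x, f (-x) = f x) (h : IntegrableOn f (Ioi 0)) :
    Integrable f := by
  rw [← integrableOn_univ, ← Iic_union_Ioi (a := (0 : ℝ))]
  refine IntegrableOn.union ?_ h
  have h1 : IntegrableOn f (Ici (-0)) := by
    rw [neg_zero, integrableOn_Ici_iff_integrableOn_Ioi]; exact h
  have := h1.comp_neg_Iic
  exact this.congr_fun (fun x _ => he x) measurableSet_Iic

lemma sinc_sq_le {a : ℝ} (ha : 1 ≤ a) (u : ℝ) : sinc (a * u) ^ 2 ≤ 2 * (1 + u ^ 2)⁻¹ := by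
  rw [← div_eq_mul_inv, le_div_iff₀ (by positivity)]
  have h1 : sinc (a * u) ^ 2 ≤ 1 := by
    rw [← sq_abs]
    exact pow_le_one₀ (abs_nonneg _) (abs_sinc_le_one _)
  have h2 : sinc (a * u) ^ 2 * u ^ 2 ≤ 1 := by
    rcases eq_or_ne u 0 with rfl | hu
    · simp
    · have h0 : a * u ≠ 0 := mul_ne_zero (by linarith) hu
      rw [sinc_of_ne_zero h0]
      have h3 : 0 < a ^ 2 * u ^ 2 := by positivity
      have : (Real.sin (a * u) / (a * u)) ^ 2 * u ^ 2 = Real.sin (a * u) ^ 2 / a ^ 2 := by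
        field_simp
      rw [this, div_le_one (by positivity)]
      nlinarith [Real.sin_sq_le_one (a * u)]
  linarith

lemma integrable_rpow_sinc {q a : ℝ} (hq : -1 < q) (hq0 : q < 0) (ha : 1 ≤ a) :
    Integrable fun u : ℝ => |u| ^ q * sinc (a * u) ^ 2 := by
  have h0 : IntegrableOn (fun u : ℝ => |u| ^ q * (1 + u ^ 2)⁻¹) (Ioi 0) := by
    refine (integrableOn_decay (s := 1 - q) (by linarith) (by linarith)).congr_fun
      (fun u (hu : 0 < u) => ?_) measurableSet_Ioi
    simp only
    rw [abs_of_pos hu, sub_sub_cancel]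
  have h1 : Integrable (fun u : ℝ => |u| ^ q * (1 + u ^ 2)⁻¹) := integrable_of_even (by simp) h0
  refine (h1.const_mul 2).mono' (Measurable.aestronglyMeasurable (by fun_prop)) ?_
  refine Eventually.of_forall fun u => ?_
  rw [Real.norm_of_nonneg (by positivity)]
  have := sinc_sq_le ha u
  have : 0 ≤ |u| ^ q := by positivity
  nlinarith

lemma one_le_two_pi_mul {c : ℝ} (hc : 1 ≤ c) : 1 ≤ 2 * π * c := by
  nlinarith [Real.pi_gt_three]

lemma norm_Tm_pos {φ : ℝ} {p : ℝ × ℝ} (h : p.1 ≠ 0) : 0 < ‖Tm φ p‖ := by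
  have h1 := norm_Tm_sq φ p
  have : 0 < p.1 ^ 2 := by positivity
  by_contra h0
  have : ‖Tm φ p‖ = 0 := le_antisymm (not_lt.1 h0) (norm_nonneg _)
  rw [this] at h1
  nlinarith [sq_nonneg p.2]

lemma rpow_norm_Tm_le {s : ℝ} (hs2 : s < 2) (φ : ℝ) {p : ℝ × ℝ} (h1 : p.1 ≠ 0) (h2 : p.2 ≠ 0) :
    ‖Tm φ p‖ ^ (s - 2) ≤ |p.1| ^ ((s - 2) / 2) * |p.2| ^ ((s - 2) / 2) := by
  have a1 : 0 < |p.1| := abs_pos.2 h1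
  have a2 : 0 < |p.2| := abs_pos.2 h2
  have h := norm_Tm_sq φ p
  have e : ‖Tm φ p‖ ^ (s - 2) = (‖Tm φ p‖ ^ 2) ^ ((s - 2) / 2) := by
    rw [← Real.rpow_natCast, ← Real.rpow_mul (norm_nonneg _)]
    congr 1
    push_cast
    ring
  rw [e, ← Real.mul_rpow a1.le a2.le]
  refine Real.rpow_le_rpow_of_nonpos (by positivity) ?_ (by linarith)
  rw [h, ← sq_abs p.1, ← sq_abs p.2]
  nlinarith [sq_nonneg (|p.1| - |p.2|)]

lemma ae_prod_ne_zero : ∀ᵐ p : ℝ × ℝ, p.1 ≠ 0 ∧ p.2 ≠ 0 := by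
  have h1 : ∀ᵐ p : ℝ × ℝ, p.1 ≠ 0 :=
    Measure.quasiMeasurePreserving_fst.ae (Measure.ae_ne volume (0 : ℝ))
  have h2 : ∀ᵐ p : ℝ × ℝ, p.2 ≠ 0 :=
    Measure.quasiMeasurePreserving_snd.ae (Measure.ae_ne volume (0 : ℝ))
  exact h1.and h2

lemma iso_rect {s : ℝ} (hs0 : 0 < s) (hs2 : s < 2) (φ : ℝ) {c d : ℝ} (hc : 1 ≤ c) (hd : 1 ≤ d) :
    iso s (rect φ c d) < ⊤ := by
  refine iso_lt_top hs0 hs2 _ ?_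
  rw [← (measurePreserving_Tm φ).integrable_comp_emb (measurableEmbedding_Tm φ)]
  have h := (integrable_rpow_sinc (q := (s - 2) / 2) (by linarith) (by linarith)
    (one_le_two_pi_mul hc)).mul_prod (integrable_rpow_sinc (q := (s - 2) / 2) (by linarith)
    (by linarith) (one_le_two_pi_mul hd))
  have hm := (continuous_ft (rect φ c d)).measurable
  have hT := (continuous_Tm φ).measurable
  refine h.mono' (Measurable.aestronglyMeasurable ?_) ?_
  · exact (by fun_prop : Measurable fun ξ : ℂ => ‖ξ‖ ^ (s - 2) * ‖ft (rect φ c d) ξ‖ ^ 2).comp hT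
  · filter_upwards [ae_prod_ne_zero] with p hp
    rw [Function.comp_apply, Real.norm_of_nonneg (by positivity), ft_rect, Complex.norm_real,
      Real.norm_eq_abs, sq_abs]
    have := rpow_norm_Tm_le hs2 φ hp.1 hp.2
    calc _ ≤ |p.1| ^ ((s - 2) / 2) * |p.2| ^ ((s - 2) / 2) *
          (sinc (2 * π * c * p.1) * sinc (2 * π * d * p.2)) ^ 2 := by gcongr
      _ = _ := by ring

/-! ### A one-dimensional cosine transform -/

/-- The cosine transform `∫₀^∞ r bmp(r) cos(2πur) dr` of the radial profile. -/
def hh (u : ℝ) : ℝ := ∫ r in Ioi (0 : ℝ), r * bmp r * Real.cos (2 * π * u * r)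

lemma hh_neg (u : ℝ) : hh (-u) = hh u := by
  unfold hh
  congr 1
  ext r
  rw [show 2 * π * -u * r = -(2 * π * u * r) by ring, Real.cos_neg]

lemma hh_abs (u : ℝ) : hh |u| = hh u := by
  rcases abs_choice u with h | h <;> rw [h]
  exact hh_neg u

/-- The profile `r bmp(r)` as a complex-valued function. -/
def rb (r : ℝ) : ℂ := ((r * bmp r : ℝ) : ℂ)

lemma contDiff_rb : ContDiff ℝ (⊤ : ℕ∞) rb :=
  Complex.ofRealCLM.contDiff.comp (contDiff_id.mul contDiff_bmp)

lemma hasCompactSupport_rb : HasCompactSupport rb := by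
  refine HasCompactSupport.intro (isCompact_closedBall (0 : ℝ) 3) fun z hz => ?_
  rw [mem_closedBall_zero_iff, not_le, Real.norm_eq_abs, lt_abs] at hz
  rcases hz with h | h
  · simp [rb, bmp_of_ge h.le]
  · simp [rb, bmp_of_le (show z ≤ 1 by linarith)]

/-- `rb` as a Schwartz function. -/
def rbS : SchwartzMap ℝ ℂ := hasCompactSupport_rb.toSchwartzMap contDiff_rb

lemma ftrbS_coe : ((𝓕 rbS : SchwartzMap ℝ ℂ) : ℝ → ℂ) = 𝓕 rb := rfl

lemma integrable_rb : Integrable rb :=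
  contDiff_rb.continuous.integrable_of_hasCompactSupport hasCompactSupport_rb

lemma hh_eq (u : ℝ) : hh u = (𝓕 rb u).re := by
  rw [Real.fourier_eq']
  have hi : Integrable (fun v : ℝ => Complex.exp (↑(-2 * π * inner ℝ v u) * Complex.I) • rb v) := by
    refine integrable_rb.bdd_mul (c := 1) (Continuous.aestronglyMeasurable (by fun_prop))
      (Eventually.of_forall fun v => ?_)
    rw [Complex.norm_exp_ofReal_mul_I]
  rw [show (∫ v : ℝ, Complex.exp (↑(-2 * π * inner ℝ v u) * Complex.I) • rb v).re =
    ∫ v : ℝ, (Complex.exp (↑(-2 * π * inner ℝ v u) * Complex.I) • rb v).re from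
    (Complex.reCLM.integral_comp_comm hi).symm, hh,
    setIntegral_eq_integral_of_forall_compl_eq_zero]
  · refine integral_congr_ae (Eventually.of_forall fun r => ?_)
    simp only [rb, smul_eq_mul]
    rw [mul_comm (Complex.exp _), Complex.re_ofReal_mul, Complex.exp_ofReal_mul_I_re]
    rw [← Real.cos_neg]
    congr 2
    simp
    ring
  · intro r hr
    rw [mem_Ioi, not_lt] at hr
    rw [bmp_of_le (by linarith)]
    simp

lemma continuous_hh : Continuous hh := by
  have h : Continuous (𝓕 rb) := by rw [← ftrbS_coe]; exact SchwartzMap.continuous _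
  rw [show hh = fun u => (𝓕 rb u).re from funext hh_eq]
  fun_prop

lemma hh_decay : ∃ C, 0 < C ∧ ∀ u, |hh u| ≤ C * (1 + u ^ 2)⁻¹ := by
  obtain ⟨C0, hC0, h0⟩ := (𝓕 rbS : SchwartzMap ℝ ℂ).decay 0 0
  obtain ⟨C2, hC2, h2⟩ := (𝓕 rbS : SchwartzMap ℝ ℂ).decay 2 0
  refine ⟨C0 + C2, by positivity, fun u => ?_⟩
  have a := h0 u
  have b := h2 u
  rw [norm_iteratedFDeriv_zero, ftrbS_coe] at a b
  rw [hh_eq]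
  refine (Complex.abs_re_le_norm _).trans ?_
  rw [← div_eq_mul_inv, le_div_iff₀ (by positivity)]
  rw [Real.norm_eq_abs, sq_abs] at b
  simp only [pow_zero, one_mul] at a
  linarith

lemma integrableOn_rpow_exp {p ε : ℝ} (hp : 0 < p) (hε : 0 < ε) :
    IntegrableOn (fun u : ℝ => u ^ (p - 1) * Real.exp (-(ε * u))) (Ioi 0) := by
  have h := (integrableOn_Ioi_comp_mul_left_iff
    (fun u : ℝ => Real.exp (-u) * u ^ (p - 1)) 0 hε).2
    (by simpa using Real.GammaIntegral_convergent hp)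
  refine IntegrableOn.congr_fun (f := fun u : ℝ => ε ^ (1 - p) *
    (Real.exp (-(ε * u)) * (ε * u) ^ (p - 1))) (h.const_mul _) (fun u (hu : 0 < u) => ?_)
    measurableSet_Ioi
  simp only
  rw [Real.mul_rpow hε.le hu.le, show 1 - p = -(p - 1) by ring, Real.rpow_neg hε.le]
  have := (Real.rpow_pos_of_pos hε (p - 1)).ne'
  field_simp

lemma differentiableAt_laplace {p : ℝ} (hp : 0 < p) {z : ℂ} (hz : 0 < z.re) :
    DifferentiableAt ℂ (fun z : ℂ => ∫ t in Ioi (0 : ℝ), ((t ^ (p - 1) : ℝ) : ℂ) *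
      Complex.exp (-(z * t))) z := by
  have hn : ∀ (w : ℂ) (t : ℝ), ‖Complex.exp (-(w * t))‖ = Real.exp (-(w.re * t)) := by
    intro w t
    rw [Complex.norm_exp]
    simp
  refine (hasDerivAt_integral_of_dominated_loc_of_deriv_le
    (F' := fun (z : ℂ) (t : ℝ) => ((t ^ (p - 1) : ℝ) : ℂ) * (-t * Complex.exp (-(z * t))))
    (bound := fun t => t ^ (p + 1 - 1) * Real.exp (-(z.re / 2 * t)))
    (Metric.ball_mem_nhds z (half_pos hz)) ?_ ?_ ?_ ?_ ?_ ?_).2.differentiableAt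
  · exact Eventually.of_forall fun w => Measurable.aestronglyMeasurable (by fun_prop)
  · refine (integrableOn_rpow_exp hp hz).mono' (Measurable.aestronglyMeasurable (by fun_prop)) ?_
    filter_upwards [self_mem_ae_restrict measurableSet_Ioi] with t (ht : 0 < t)
    rw [norm_mul, hn, Complex.norm_real, Real.norm_of_nonneg (by positivity)]
  · exact Measurable.aestronglyMeasurable (by fun_prop)
  · filter_upwards [self_mem_ae_restrict measurableSet_Ioi] with t (ht : 0 < t)
    intro w hw
    rw [norm_mul, norm_mul, hn, Complex.norm_real, Real.norm_of_nonneg (by positivity), norm_neg,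
      Complex.norm_real, Real.norm_of_nonneg ht.le, ← mul_assoc, add_sub_right_comm,
      Real.rpow_add_one ht.ne']
    have h1 : |(w - z).re| < z.re / 2 :=
      (Complex.abs_re_le_norm _).trans_lt (by simpa [dist_eq_norm] using hw)
    rw [Complex.sub_re, abs_lt] at h1
    gcongr
    linarith [h1.1]
  · exact integrableOn_rpow_exp (by linarith) (half_pos hz)
  · refine Eventually.of_forall fun t w _ => ?_
    have h := ((((hasDerivAt_id w).mul_const (t : ℂ)).neg).cexp).const_mul ((t ^ (p - 1) : ℝ) : ℂ)
    refine h.congr_deriv ?_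
    simp only [id, Pi.neg_apply]
    ring

/-- Euler's integral with a complex rate, by analytic continuation from positive rates. -/
lemma integral_laplace {p : ℝ} (hp : 0 < p) {z : ℂ} (hz : 0 < z.re) :
    ∫ t in Ioi (0 : ℝ), ((t ^ (p - 1) : ℝ) : ℂ) * Complex.exp (-(z * t)) =
      (1 / z) ^ (p : ℂ) * Real.Gamma p := by
  have ho : IsOpen {z : ℂ | 0 < z.re} := isOpen_lt continuous_const Complex.continuous_re
  have hpc : IsPreconnected {z : ℂ | 0 < z.re} := (convex_halfSpace_re_gt 0).isPreconnected
  have hf : DifferentiableOn ℂ (fun z : ℂ => ∫ t in Ioi (0 : ℝ), ((t ^ (p - 1) : ℝ) : ℂ) *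
      Complex.exp (-(z * t))) {z : ℂ | 0 < z.re} :=
    fun z hz => (differentiableAt_laplace hp hz).differentiableWithinAt
  have hg : DifferentiableOn ℂ (fun z : ℂ => (1 / z) ^ (p : ℂ) * Real.Gamma p)
      {z : ℂ | 0 < z.re} := by
    intro z hz
    have hz0 : z ≠ 0 := fun h => by simp [h] at hz
    refine DifferentiableAt.differentiableWithinAt ?_
    refine DifferentiableAt.mul_const (DifferentiableAt.cpow ?_ (by fun_prop) ?_) _
    · exact (differentiableAt_const _).div differentiableAt_id hz0
    · left
      rw [one_div, Complex.inv_re]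
      exact div_pos hz (Complex.normSq_pos.2 hz0)
  have hreal : ∀ x : ℝ, 0 < x → (∫ t in Ioi (0 : ℝ), ((t ^ (p - 1) : ℝ) : ℂ) *
      Complex.exp (-((x : ℂ) * t))) = (1 / (x : ℂ)) ^ (p : ℂ) * Real.Gamma p := by
    intro x hx
    rw [← Complex.Gamma_ofReal, ← Complex.integral_cpow_mul_exp_neg_mul_Ioi (by simpa using hp) hx]
    refine setIntegral_congr_fun measurableSet_Ioi fun t (ht : 0 < t) => ?_
    rw [Complex.ofReal_cpow ht.le]
    push_cast
    rfl
  refine (hf.analyticOnNhd ho).eqOn_of_preconnected_of_frequently_eq (hg.analyticOnNhd ho) hpc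
    (z₀ := 1) (by simp) ?_ hz
  have ht : Tendsto (fun x : ℝ => (x : ℂ)) (𝓝[>] 1) (𝓝[≠] 1) := by
    refine tendsto_nhdsWithin_iff.2 ⟨?_, ?_⟩
    · exact (Complex.continuous_ofReal.tendsto' 1 1 (by simp)).mono_left nhdsWithin_le_nhds
    · filter_upwards [self_mem_nhdsWithin] with x (hx : 1 < x)
      simpa using hx.ne'
  refine ht.frequently (Eventually.frequently ?_)
  filter_upwards [self_mem_nhdsWithin] with x (hx : 1 < x)
  exact hreal x (by linarith)

lemma integral_rpow_exp_cos {p ε : ℝ} (hp : 0 < p) (hε : 0 < ε) (r : ℝ) :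
    ∫ u in Ioi (0 : ℝ), u ^ (p - 1) * Real.exp (-(ε * u)) * Real.cos (2 * π * u * r) =
      ((1 / ((ε : ℂ) + 2 * π * r * Complex.I)) ^ (p : ℂ) * Real.Gamma p).re := by
  have h := integral_laplace hp (z := (ε : ℂ) + 2 * π * r * Complex.I) (by simpa using hε)
  rw [← h]
  have e : ∀ u ∈ Ioi (0 : ℝ), ((u ^ (p - 1) : ℝ) : ℂ) *
      Complex.exp (-(((ε : ℂ) + 2 * π * r * Complex.I) * u)) =
      ((u ^ (p - 1) * Real.exp (-(ε * u)) : ℝ) : ℂ) *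
        Complex.exp ((-(2 * π * u * r) : ℝ) * Complex.I) := by
    intro u _
    rw [Complex.ofReal_mul, Complex.ofReal_exp, mul_assoc (((u ^ (p - 1) : ℝ) : ℂ)),
      ← Complex.exp_add]
    push_cast
    congr 2
    ring
  rw [setIntegral_congr_fun measurableSet_Ioi e]
  have hi : IntegrableOn (fun u : ℝ => ((u ^ (p - 1) * Real.exp (-(ε * u)) : ℝ) : ℂ) *
        Complex.exp ((-(2 * π * u * r) : ℝ) * Complex.I)) (Ioi 0) := by
    refine Integrable.mul_bdd (c := 1) (integrableOn_rpow_exp hp hε).ofReal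
      (Continuous.aestronglyMeasurable (by fun_prop)) (Eventually.of_forall fun v => ?_)
    rw [Complex.norm_exp_ofReal_mul_I]
  refine (Eq.trans ?_ (Complex.reCLM.integral_comp_comm hi))
  refine setIntegral_congr_fun measurableSet_Ioi fun u _ => ?_
  simp only [Complex.reCLM_apply]
  rw [Complex.re_ofReal_mul, Complex.exp_ofReal_mul_I_re, Real.cos_neg]

lemma integrableOn_rpow_hh {s : ℝ} (hs0 : 0 < s) (hs2 : s < 2) {c : ℝ} (hc : c ≠ 0) :
    IntegrableOn (fun b : ℝ => b ^ (1 - s) * hh (b * c)) (Ioi 0) := by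
  obtain ⟨C, hC, h⟩ := hh_decay
  have hm := continuous_hh.measurable
  refine Integrable.mono' (((integrableOn_decay_scaled hs0 hs2 (abs_pos.2 hc)).1).const_mul C)
    (Measurable.aestronglyMeasurable (by fun_prop)) ?_
  filter_upwards [self_mem_ae_restrict measurableSet_Ioi] with b (hb : 0 < b)
  rw [norm_mul, Real.norm_of_nonneg (by positivity), mul_left_comm]
  refine mul_le_mul_of_nonneg_left ?_ (by positivity)
  refine (h _).trans_eq ?_
  rw [mul_pow, mul_pow, sq_abs]

/-- For `ε > 0` the order of integration can be exchanged. -/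
lemma integral_exp_hh {p ε : ℝ} (hp : 0 < p) (hε : 0 < ε) :
    ∫ u in Ioi (0 : ℝ), u ^ (p - 1) * Real.exp (-(ε * u)) * hh u =
      ∫ r in Ioi (0 : ℝ), r * bmp r *
        ((1 / ((ε : ℂ) + 2 * π * r * Complex.I)) ^ (p : ℂ) * Real.Gamma p).re := by
  have hb := continuous_bmp.measurable
  calc _ = ∫ u in Ioi (0 : ℝ), ∫ r in Ioi (0 : ℝ), (u ^ (p - 1) * Real.exp (-(ε * u))) *
        (r * bmp r) * Real.cos (2 * π * u * r) := by
        refine setIntegral_congr_fun measurableSet_Ioi fun u _ => ?_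
        simp only [hh]
        rw [← integral_const_mul]
        congr 1
        ext r
        ring
    _ = ∫ r in Ioi (0 : ℝ), ∫ u in Ioi (0 : ℝ), (u ^ (p - 1) * Real.exp (-(ε * u))) *
        (r * bmp r) * Real.cos (2 * π * u * r) := by
        refine integral_integral_swap ?_
        have h1 := integrableOn_bmp 1
        simp only [Real.rpow_one] at h1
        refine (Integrable.mul_prod (integrableOn_rpow_exp hp hε) h1).mul_bdd (c := 1)
          (Measurable.aestronglyMeasurable (by fun_prop)) (Eventually.of_forall fun q => ?_)
        exact Real.abs_cos_le_one _
    _ = _ := by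
        refine setIntegral_congr_fun measurableSet_Ioi fun r _ => ?_
        rw [← integral_rpow_exp_cos hp hε r, ← integral_const_mul]
        congr 1
        ext u
        ring

lemma norm_cpow_le {p ε r : ℝ} (hp : 0 < p) (hr : 0 < r) :
    ‖(1 / ((ε : ℂ) + 2 * π * r * Complex.I)) ^ (p : ℂ)‖ ≤ (2 * π * r) ^ (-p) := by
  rw [Complex.norm_cpow_real, norm_div, norm_one, one_div, Real.inv_rpow (norm_nonneg _),
    ← Real.rpow_neg (norm_nonneg _)]
  refine Real.rpow_le_rpow_of_nonpos (by positivity) ?_ (by linarith)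
  refine le_trans (le_of_eq ?_) (Complex.abs_im_le_norm _)
  simp
  rw [abs_of_pos hr, abs_of_pos pi_pos]

lemma cpow_limit {p r : ℝ} (hr : 0 < r) :
    Tendsto (fun ε : ℝ => ((1 / ((ε : ℂ) + 2 * π * r * Complex.I)) ^ (p : ℂ) * Real.Gamma p).re)
      (𝓝[>] 0) (𝓝 ((2 * π * r) ^ (-p) * Real.Gamma p * Real.cos (p * π / 2))) := by
  have hx : 0 < 2 * π * r := by positivity
  have e1 : (1 / (((0 : ℝ) : ℂ) + 2 * π * r * Complex.I)) =
      ((2 * π * r)⁻¹ : ℝ) * Complex.exp ((-(π / 2) : ℝ) * Complex.I) := by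
    rw [Complex.exp_ofReal_mul_I]
    simp
    ring
  have e2 : (1 / (((0 : ℝ) : ℂ) + 2 * π * r * Complex.I)) ^ (p : ℂ) =
      ((2 * π * r) ^ (-p) : ℝ) * Complex.exp ((-(p * π / 2) : ℝ) * Complex.I) := by
    have hlog : Complex.log (Complex.exp ((-(π / 2) : ℝ) * Complex.I)) =
        (-(π / 2) : ℝ) * Complex.I := by
      have := pi_pos
      apply Complex.log_exp <;> simp <;> linarith
    rw [e1, Complex.cpow_def_of_ne_zero (mul_ne_zero (by exact_mod_cast (inv_pos.2 hx).ne')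
      (Complex.exp_ne_zero _)), Complex.log_ofReal_mul (inv_pos.2 hx) (Complex.exp_ne_zero _), hlog,
      Real.rpow_def_of_pos hx, Complex.ofReal_exp, ← Complex.exp_add, Real.log_inv]
    congr 1
    push_cast
    ring
  have hc : ContinuousAt (fun ε : ℝ =>
      ((1 / ((ε : ℂ) + 2 * π * r * Complex.I)) ^ (p : ℂ) * Real.Gamma p).re) 0 := by
    refine Complex.continuous_re.continuousAt.comp (ContinuousAt.mul ?_ continuousAt_const)
    refine ContinuousAt.cpow ?_ continuousAt_const ?_
    · refine ContinuousAt.div continuousAt_const (by fun_prop) ?_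
      intro h0
      have := congrArg Complex.im h0
      simp at this
      exact hr.ne' this
    · rw [e1, Complex.exp_ofReal_mul_I]
      right
      simp
      exact hr.ne'
  have := hc.tendsto.mono_left (nhdsWithin_le_nhds (s := Ioi 0))
  convert this using 2
  rw [e2, Complex.re_mul_ofReal, Complex.re_ofReal_mul, Complex.exp_ofReal_mul_I_re,
    Real.cos_neg]
  ring

/-- The weighted integral of the cosine transform, obtained from a convergence factor
`e^{-εu}` with `ε → 0`. The constant produces `τ_{2-s}`. -/
lemma integral_hh {s : ℝ} (hs0 : 0 < s) (hs2 : s < 2) :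
    ∫ u in Ioi (0 : ℝ), u ^ (1 - s) * hh u = tauC (2 - s) * Mg s := by
  have hp : 0 < 2 - s := by linarith
  have hm := continuous_hh.measurable
  have hmb := continuous_bmp.measurable
  have h0 := integrableOn_rpow_hh hs0 hs2 one_ne_zero
  simp only [mul_one] at h0
  have t1 : Tendsto (fun ε : ℝ => ∫ u in Ioi (0 : ℝ), u ^ ((2 - s) - 1) * Real.exp (-(ε * u)) * hh u)
      (𝓝[>] 0) (𝓝 (∫ u in Ioi (0 : ℝ), u ^ (1 - s) * hh u)) := by
    refine tendsto_integral_filter_of_dominated_convergence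
      (fun u => ‖u ^ (1 - s) * hh u‖) ?_ ?_ h0.norm ?_
    · exact Eventually.of_forall fun ε => Measurable.aestronglyMeasurable (by fun_prop)
    · filter_upwards [self_mem_nhdsWithin] with ε (hε : 0 < ε)
      filter_upwards [self_mem_ae_restrict measurableSet_Ioi] with u (hu : 0 < u)
      rw [show 2 - s - 1 = 1 - s by ring, mul_right_comm, norm_mul]
      refine mul_le_of_le_one_right (norm_nonneg _) ?_
      rw [Real.norm_of_nonneg (Real.exp_pos _).le, Real.exp_le_one_iff]
      have := mul_pos hε hu
      linarith
    · refine Eventually.of_forall fun u => ?_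
      have hc : ContinuousAt (fun ε : ℝ => u ^ ((2 - s) - 1) * Real.exp (-(ε * u)) * hh u) 0 := by
        fun_prop
      have := hc.tendsto.mono_left (nhdsWithin_le_nhds (s := Ioi 0))
      simp only [zero_mul, neg_zero, Real.exp_zero, mul_one] at this
      simpa only [show 2 - s - 1 = 1 - s by ring] using this
  have t2 : Tendsto (fun ε : ℝ => ∫ r in Ioi (0 : ℝ), r * bmp r *
        ((1 / ((ε : ℂ) + 2 * π * r * Complex.I)) ^ ((2 - s : ℝ) : ℂ) * Real.Gamma (2 - s)).re)
      (𝓝[>] 0) (𝓝 (∫ r in Ioi (0 : ℝ), r * bmp r *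
        ((2 * π * r) ^ (-(2 - s)) * Real.Gamma (2 - s) * Real.cos ((2 - s) * π / 2)))) := by
    refine tendsto_integral_filter_of_dominated_convergence
      (fun r => (2 * π) ^ (-(2 - s)) * Real.Gamma (2 - s) * (r ^ (s - 1) * bmp r)) ?_ ?_ ?_ ?_
    · exact Eventually.of_forall fun ε => Measurable.aestronglyMeasurable (by fun_prop)
    · filter_upwards [self_mem_nhdsWithin] with ε (hε : 0 < ε)
      filter_upwards [self_mem_ae_restrict measurableSet_Ioi] with r (hr : 0 < r)
      have hG := Real.Gamma_pos_of_pos hp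
      have hb := bmp_nonneg r
      rw [norm_mul, Real.norm_of_nonneg (by positivity)]
      have h1 : ‖((1 / ((ε : ℂ) + 2 * π * r * Complex.I)) ^ ((2 - s : ℝ) : ℂ) *
          Real.Gamma (2 - s)).re‖ ≤ (2 * π * r) ^ (-(2 - s)) * Real.Gamma (2 - s) := by
        refine (Complex.abs_re_le_norm _).trans ?_
        rw [norm_mul, Complex.norm_real, Real.norm_of_nonneg hG.le]
        exact mul_le_mul_of_nonneg_right (norm_cpow_le hp hr) hG.le
      refine (mul_le_mul_of_nonneg_left h1 (by positivity)).trans_eq ?_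
      rw [Real.mul_rpow (by positivity) hr.le, show s - 1 = -(2 - s) + 1 by ring,
        Real.rpow_add_one hr.ne']
      ring
    · exact (integrableOn_bmp (s - 1)).const_mul _
    · filter_upwards [self_mem_ae_restrict measurableSet_Ioi] with r (hr : 0 < r)
      exact (cpow_limit hr).const_mul _
  have t3 := tendsto_nhds_unique (t1.congr' (by
    filter_upwards [self_mem_nhdsWithin] with ε (hε : 0 < ε)
    exact integral_exp_hh hp hε)) t2
  rw [t3, tauC, Mg, ← integral_const_mul]
  refine setIntegral_congr_fun measurableSet_Ioi fun r (hr : 0 < r) => ?_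
  rw [Real.mul_rpow (by positivity) hr.le, show s - 1 = -(2 - s) + 1 by ring,
    Real.rpow_add_one hr.ne']
  ring

/-! ### The multiplier is the transformed angle function -/

lemma re_FbK {Ω : ℝ → ℝ} (hΩ : SatisfiesH Ω) (ξ : ℂ) :
    (𝓕 (bK Ω) ξ).re = ∫ z : ℂ, bmp ‖z‖ * Ω z.arg * Real.cos (2 * π * inner ℝ z ξ) := by
  rw [Real.fourier_eq']
  have hi : Integrable (fun v : ℂ =>
      Complex.exp (↑(-2 * π * inner ℝ v ξ) * Complex.I) • bK Ω v) := by
    refine (integrable_bK hΩ).bdd_mul (c := 1) (Continuous.aestronglyMeasurable (by fun_prop))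
      (Eventually.of_forall fun v => ?_)
    rw [Complex.norm_exp_ofReal_mul_I]
  refine (Complex.reCLM.integral_comp_comm hi).symm.trans ?_
  refine integral_congr_ae (Eventually.of_forall fun r => ?_)
  simp only [bK, smul_eq_mul, Complex.reCLM_apply]
  rw [mul_comm (Complex.exp _), Complex.re_ofReal_mul, Complex.exp_ofReal_mul_I_re, ← Real.cos_neg]
  congr 2
  ring

lemma inner_polar (b φ r θ : ℝ) :
    inner ℝ ((r : ℂ) * (Real.cos θ + Real.sin θ * Complex.I)) (b • Complex.exp (φ * Complex.I)) =
      b * Real.cos (θ - φ) * r := by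
  rw [Complex.inner, Complex.exp_mul_I, ← Complex.ofReal_cos, ← Complex.ofReal_sin,
    Complex.real_smul, Real.cos_sub]
  simp [-Complex.ofReal_cos, -Complex.ofReal_sin]
  ring

/-- The Fourier transform of `bK Ω` in polar coordinates. -/
lemma re_FbK_polar {Ω : ℝ → ℝ} (hΩ : SatisfiesH Ω) (b φ : ℝ) :
    (𝓕 (bK Ω) (b • Complex.exp (φ * Complex.I))).re =
      ∫ θ in Ioo (-π) π, Ω θ * hh (b * Real.cos (θ - φ)) := by
  obtain ⟨m, M, hm, hM, hbd⟩ := Om_bounds hΩ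
  have hmb := continuous_bmp.measurable
  have hmO := hΩ.1.continuous.measurable
  rw [re_FbK hΩ, ← Complex.integral_comp_polarCoord_symm, polarCoord_target]
  have e : ∀ p ∈ Ioi (0 : ℝ) ×ˢ Ioo (-π) π, p.1 • (bmp ‖Complex.polarCoord.symm p‖ *
      Ω (Complex.polarCoord.symm p).arg * Real.cos (2 * π * inner ℝ (Complex.polarCoord.symm p)
        (b • Complex.exp (φ * Complex.I)))) =
      Ω p.2 * (p.1 * bmp p.1 * Real.cos (2 * π * (b * Real.cos (p.2 - φ)) * p.1)) := by
    rintro ⟨r, θ⟩ ⟨hr, hθ⟩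
    have hr' : 0 < r := hr
    rw [Complex.norm_polarCoord_symm, Complex.polarCoord_symm_apply]
    simp only
    rw [inner_polar, abs_of_pos hr', Complex.ofReal_cos, Complex.ofReal_sin,
      Complex.arg_mul_cos_add_sin_mul_I hr' ⟨hθ.1, hθ.2.le⟩, smul_eq_mul,
      ← mul_assoc (2 * π)]
    ring
  rw [setIntegral_congr_fun (measurableSet_Ioi.prod measurableSet_Ioo) e,
    Measure.volume_eq_prod, ← Measure.prod_restrict, integral_prod_symm]
  · refine setIntegral_congr_fun measurableSet_Ioo fun θ _ => ?_
    simp only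
    rw [integral_const_mul, hh]
  · have h1 := integrableOn_bmp 1
    simp only [Real.rpow_one] at h1
    have h2 : IntegrableOn (fun _ : ℝ => M) (Ioo (-π) π) := integrableOn_const (by simp)
    refine Integrable.mono' (Integrable.mul_prod h1.norm h2)
      (Measurable.aestronglyMeasurable (by fun_prop)) (Eventually.of_forall fun p => ?_)
    rw [norm_mul, norm_mul (p.1 * bmp p.1), mul_comm]
    have h3 : ‖Ω p.2‖ ≤ M := by
      rw [Real.norm_of_nonneg (hm.le.trans (hbd _).1)]
      exact (hbd _).2
    have h4 : ‖Real.cos (2 * π * (b * Real.cos (p.2 - φ)) * p.1)‖ ≤ 1 := Real.abs_cos_le_one _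
    exact mul_le_mul (mul_le_of_le_one_right (norm_nonneg _) h4) h3 (norm_nonneg _) (norm_nonneg _)

lemma satisfiesH_one : SatisfiesH (fun _ => 1) :=
  ⟨contDiff_const, fun _ => rfl, fun _ => one_pos, fun _ => rfl⟩

/-- For the constant angle function the multiplier is radial. -/
lemma Qc_one_indep (s φ : ℝ) :
    Qc s (fun _ => 1) (Complex.exp (φ * Complex.I)) = Qc s (fun _ => 1) 1 := by
  have key : ∀ b φ : ℝ, ∫ θ in Ioo (-π) π, (1 : ℝ) * hh (b * Real.cos (θ - φ)) =
      ∫ θ in (-π)..π, hh (b * Real.cos θ) := by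
    intro b φ
    simp only [one_mul]
    rw [← integral_Ioc_eq_integral_Ioo, ← intervalIntegral.integral_of_le (by linarith [pi_pos]),
      intervalIntegral.integral_comp_sub_right (fun θ => hh (b * Real.cos θ))]
    have hp : Function.Periodic (fun θ => hh (b * Real.cos θ)) (2 * π) := fun θ => by simp
    have := hp.intervalIntegral_add_eq (-π - φ) (-π)
    rwa [show -π - φ + 2 * π = π - φ by ring, show -π + 2 * π = π by ring] at this
  have e : ∀ b φ : ℝ, (𝓕 (bK fun _ => 1) (b • Complex.exp (φ * Complex.I))).re =
      ∫ θ in (-π)..π, hh (b * Real.cos θ) := fun b φ => by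
    rw [re_FbK_polar satisfiesH_one, key]
  have e0 : (1 : ℂ) = Complex.exp ((0 : ℝ) * Complex.I) := by simp
  rw [e0]
  simp only [Qc]
  simp_rw [e]

lemma Qc_smul {s : ℝ} (Ω : ℝ → ℝ) {t : ℝ} (ht : 0 < t) (ξ : ℂ) :
    Qc s Ω (t • ξ) = t ^ (s - 2) * Qc s Ω ξ := by
  have e : ∀ b ∈ Ioi (0 : ℝ), b ^ (1 - s) * (𝓕 (bK Ω) (b • t • ξ)).re
      = t ^ (s - 1) * ((t * b) ^ (1 - s) * (𝓕 (bK Ω) ((t * b) • ξ)).re) := by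
    intro b hb
    rw [Real.mul_rpow ht.le (le_of_lt hb), smul_smul, mul_comm b t, show 1 - s = -(s - 1) by ring,
      Real.rpow_neg ht.le]
    have := (Real.rpow_pos_of_pos ht (s - 1)).ne'
    field_simp
  rw [Qc, setIntegral_congr_fun measurableSet_Ioi e, integral_const_mul,
    integral_comp_mul_left_Ioi (fun b : ℝ => b ^ (1 - s) * (𝓕 (bK Ω) (b • ξ)).re) 0 ht, mul_zero,
    ← Qc, smul_eq_mul, ← mul_assoc, show s - 2 = (s - 1) - 1 by ring,
    Real.rpow_sub_one ht.ne' (s - 1), div_eq_mul_inv]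

lemma Qc_polar {s : ℝ} (Ω : ℝ → ℝ) {ξ : ℂ} (hξ : ξ ≠ 0) :
    Qc s Ω ξ = ‖ξ‖ ^ (s - 2) * Qc s Ω (Complex.exp (ξ.arg * Complex.I)) := by
  rw [← Qc_smul Ω (norm_pos_iff.2 hξ), Complex.real_smul, Complex.norm_mul_exp_arg_mul_I]

/-- The constant is found by comparing the two evaluations of one finite isotropic energy. -/
lemma Qc_one {s : ℝ} (hs0 : 0 < s) (hs2 : s < 2) : Qc s (fun _ => 1) 1 = Mg s * cC s := by
  set ν : Measure ℂ := rect 0 1 1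
  have hfin : iso s ν < ⊤ := iso_rect hs0 hs2 0 le_rfl le_rfl
  have h1 := Kr_energy hs0 hs2 satisfiesH_one ν hfin
  have hm := (continuous_ft ν).measurable
  have hc : 0 ≤ cC s := by
    have := Real.Gamma_pos_of_pos (show 0 < s / 2 by linarith)
    have := Real.Gamma_pos_of_pos (show 0 < (2 - s) / 2 by linarith)
    unfold cC
    positivity
  have h2 : (iso s ν).toReal = ∫ p : ℂ × ℂ, Kr s (fun _ => 1) (p.1 - p.2) ∂(ν.prod ν) := by
    rw [iso, ← integral_toReal (by fun_prop) (ae_lt_top (by fun_prop) hfin.ne)]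
    refine integral_congr_ae (Eventually.of_forall fun p => ?_)
    simp only [Kr, mul_one]
    rw [← ENNReal.toReal_rpow, toReal_enorm]
  have hI : Integrable (fun ξ : ℂ => ‖ξ‖ ^ (s - 2) * ‖ft ν ξ‖ ^ 2) :=
    integrable_ft_of_iso hs0 hs2 ν hfin
  have h3 : (iso s ν).toReal = cC s * ∫ ξ : ℂ, ‖ξ‖ ^ (s - 2) * ‖ft ν ξ‖ ^ 2 := by
    rw [iso_eq hs0 hs2, ENNReal.toReal_mul, ENNReal.toReal_ofReal hc,
      integral_eq_lintegral_of_nonneg_ae (Eventually.of_forall fun ξ => by positivity)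
        hI.aestronglyMeasurable]
    congr 2
    refine lintegral_congr_ae ?_
    filter_upwards [Measure.ae_ne volume 0] with ξ hξ
    have hn : 0 < ‖ξ‖ := norm_pos_iff.2 hξ
    rw [ENNReal.ofReal_mul (by positivity), ← ENNReal.ofReal_rpow_of_pos hn, ofReal_norm,
      ENNReal.ofReal_pow (norm_nonneg _), ofReal_norm]
  have h4 : ∫ ξ, Qc s (fun _ => 1) ξ * ‖ft ν ξ‖ ^ 2 =
      Qc s (fun _ => 1) 1 * ∫ ξ : ℂ, ‖ξ‖ ^ (s - 2) * ‖ft ν ξ‖ ^ 2 := by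
    rw [← integral_const_mul]
    refine integral_congr_ae ?_
    filter_upwards [Measure.ae_ne volume 0] with ξ hξ
    rw [Qc_polar _ hξ, Qc_one_indep]
    ring
  rw [h4, ← h2] at h1
  have h5 : (iso s ν).toReal ≠ 0 := ENNReal.toReal_ne_zero.2 ⟨iso_ne_zero hs0 ν, hfin.ne⟩
  rw [h3] at h1 h5
  have h6 := right_ne_zero_of_mul h5
  apply mul_right_cancel₀ h6
  rw [← h1]
  ring

/-- `Ω` is Lipschitz; `π`-periodicity allows the increment to be measured by `|sin ψ|`, which is the
cancellation that makes the integral defining `Ω̃` converge. -/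
lemma Om_diff_le {Ω : ℝ → ℝ} (hΩ : SatisfiesH Ω) :
    ∃ C, 0 < C ∧ ∀ a ψ, |Ω (a + ψ) - Ω a| ≤ C * |Real.sin ψ| := by
  have hper := periodic_pi hΩ
  have hd : Continuous (deriv Ω) := hΩ.1.continuous_deriv (by simp)
  have hpd : Function.Periodic (deriv Ω) π := fun x => by
    rw [← deriv_comp_add_const, show (fun x => Ω (x + π)) = Ω from funext hper]
  obtain ⟨C0, hC0⟩ := (hpd.compact_of_continuous pi_pos.ne' hd).isBounded.exists_norm_le
  set C := max C0 1
  have hC1 : (1 : ℝ) ≤ C := le_max_right _ _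
  have hlip : ∀ x y, |Ω y - Ω x| ≤ C * |y - x| := fun x y =>
    convex_univ.norm_image_sub_le_of_norm_deriv_le (f := Ω) (C := C)
      (fun z _ => (hΩ.1.differentiable (by simp)).differentiableAt)
      (fun z _ => (hC0 _ ⟨z, rfl⟩).trans (le_max_left _ _)) (mem_univ x) (mem_univ y)
  refine ⟨C * (π / 2), by positivity, fun a ψ => ?_⟩
  -- reduce `ψ` modulo `π` to `[-π/2, π/2)`, where `|sin ψ| ≥ 2|ψ|/π`
  set ψ0 := toIcoMod pi_pos (-(π / 2)) ψ with hψ0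
  have hmem := toIcoMod_mem_Ico pi_pos (-(π / 2)) ψ
  have hdec : ψ = ψ0 + toIcoDiv pi_pos (-(π / 2)) ψ • π :=
    (toIcoMod_add_toIcoDiv_zsmul pi_pos _ _).symm
  rw [← hψ0] at hmem
  set k := toIcoDiv pi_pos (-(π / 2)) ψ
  have habs : |ψ0| ≤ π / 2 := abs_le.2 ⟨hmem.1, by linarith [hmem.2]⟩
  have hsin : |Real.sin ψ| = |Real.sin ψ0| := by
    rw [hdec, zsmul_eq_mul, Real.sin_add_int_mul_pi, abs_mul]
    simp
  have hOm : Ω (a + ψ) = Ω (a + ψ0) := by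
    rw [hdec, ← add_assoc, zsmul_eq_mul, hper.int_mul k]
  rw [hOm, hsin]
  have h1 := hlip a (a + ψ0)
  have h2 := Real.mul_abs_le_abs_sin habs
  rw [add_sub_cancel_left] at h1
  have h3 : |ψ0| ≤ π / 2 * |Real.sin ψ0| := by
    have := pi_pos
    calc |ψ0| = π / 2 * (2 / π * |ψ0|) := by field_simp
      _ ≤ _ := by gcongr
  calc _ ≤ C * |ψ0| := h1
    _ ≤ C * (π / 2 * |Real.sin ψ0|) := by gcongr
    _ = _ := by ring

lemma integrableOn_cos_rpow {q : ℝ} (hq : -1 < q) (hq0 : q < 0) (φ : ℝ) :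
    IntegrableOn (fun θ => |Real.cos (θ - φ)| ^ q) (Ioo (-π) π) := by
  have h0 : IntervalIntegrable (fun u : ℝ => |u| ^ q) volume (-(π / 2)) (π / 2) := by
    have h1 : IntervalIntegrable (fun u : ℝ => |u| ^ q) volume 0 (π / 2) := by
      refine (intervalIntegral.intervalIntegrable_rpow' hq).congr ?_
      intro u hu
      rw [uIoc_of_le (by positivity)] at hu
      simp only
      rw [abs_of_pos hu.1]
    have h2 : IntervalIntegrable (fun u : ℝ => |u| ^ q) volume 0 (-(π / 2)) := by
      rw [IntervalIntegrable.iff_comp_neg]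
      simpa only [abs_neg, neg_zero, neg_neg] using h1
    exact h2.symm.trans h1
  have h1 : IntervalIntegrable (fun x : ℝ => |Real.sin x| ^ q) volume (-(π / 2))
      (-(π / 2) + π) := by
    rw [show -(π / 2) + π = π / 2 by ring]
    refine (h0.const_mul ((2 / π) ^ q)).mono_fun'
      (Measurable.aestronglyMeasurable (by fun_prop)) ?_
    have hne : ∀ᵐ x : ℝ ∂(volume.restrict (uIoc (-(π / 2)) (π / 2))), x ≠ 0 :=
      ae_restrict_of_ae (Measure.ae_ne volume 0)
    filter_upwards [hne, ae_restrict_mem measurableSet_uIoc] with x hx hmem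
    rw [uIoc_of_le (by linarith [pi_pos])] at hmem
    have habs : |x| ≤ π / 2 := abs_le.2 ⟨hmem.1.le, hmem.2⟩
    have hx' := abs_pos.2 hx
    rw [Real.norm_of_nonneg (by positivity), ← Real.mul_rpow (by positivity) hx'.le]
    exact Real.rpow_le_rpow_of_nonpos (by positivity) (Real.mul_abs_le_abs_sin habs) hq0.le
  have hp : Function.Periodic (fun x : ℝ => |Real.sin x| ^ q) π := fun x => by
    simp [Real.sin_add_pi]
  have h2 := hp.intervalIntegrable pi_pos.ne' h1 (-π - φ + π / 2) (π - φ + π / 2)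
  have h3 := h2.comp_sub_right (φ - π / 2)
  rw [show -π - φ + π / 2 + (φ - π / 2) = -π by ring,
    show π - φ + π / 2 + (φ - π / 2) = π by ring,
    intervalIntegrable_iff_integrableOn_Ioo_of_le (by linarith [pi_pos])] at h3
  refine h3.congr_fun (fun x _ => ?_) measurableSet_Ioo
  simp only
  rw [← Real.sin_add_pi_div_two, show x - (φ - π / 2) = x - φ + π / 2 by ring]

/-- Scaling of the weighted cosine transform in the frequency. -/
lemma integral_hh_scaled {s : ℝ} (hs0 : 0 < s) (hs2 : s < 2) {c : ℝ} (hc : c ≠ 0) :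
    ∫ b in Ioi (0 : ℝ), b ^ (1 - s) * hh (b * c) = |c| ^ (s - 2) * (tauC (2 - s) * Mg s) := by
  have ht : 0 < |c| := abs_pos.2 hc
  have e : ∀ b ∈ Ioi (0 : ℝ), b ^ (1 - s) * hh (b * c)
      = |c| ^ (s - 1) * ((|c| * b) ^ (1 - s) * hh (|c| * b)) := by
    intro b hb
    rw [Real.mul_rpow ht.le (le_of_lt hb), ← hh_abs (b * c), abs_mul, abs_of_pos (show 0 < b from hb),
      mul_comm b, show 1 - s = -(s - 1) by ring, Real.rpow_neg ht.le]
    have := (Real.rpow_pos_of_pos ht (s - 1)).ne'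
    field_simp
  rw [setIntegral_congr_fun measurableSet_Ioi e, integral_const_mul,
    integral_comp_mul_left_Ioi (fun b : ℝ => b ^ (1 - s) * hh b) 0 ht, mul_zero,
    integral_hh hs0 hs2, smul_eq_mul, ← mul_assoc, show s - 2 = (s - 1) - 1 by ring,
    Real.rpow_sub_one ht.ne' (s - 1), div_eq_mul_inv]

/-- On the unit circle the multiplier is `Ω̃`, up to the constant `Mg s`. The value `Ω(φ + π/2)` is
subtracted to get absolute convergence and restored through the constant angle function. -/
lemma Qc_exp {s : ℝ} (hs0 : 0 < s) (hs2 : s < 2) {Ω : ℝ → ℝ} (hΩ : SatisfiesH Ω) (φ : ℝ) :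
    Qc s Ω (Complex.exp (φ * Complex.I)) = Mg s * Omt s Ω φ := by
  obtain ⟨CO, hCO, hO⟩ := Om_diff_le hΩ
  obtain ⟨C, hC, hCh⟩ := hh_decay
  have hmh := continuous_hh.measurable
  have hmO := hΩ.1.continuous.measurable
  set Ω0 := Ω (φ + π / 2) with hΩ0
  have hF : ∀ θ, |Ω θ - Ω0| ≤ CO * |Real.cos (θ - φ)| := fun θ => by
    have := hO (φ + π / 2) (θ - φ - π / 2)
    rwa [show φ + π / 2 + (θ - φ - π / 2) = θ by ring, Real.sin_sub_pi_div_two, abs_neg] at this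
  have hE : ∀ φ : ℝ, Complex.exp (φ * Complex.I) ≠ 0 := fun φ => Complex.exp_ne_zero _
  have i1 := integrableOn_Qc hs0 hs2 hΩ (hE φ)
  have i2 := integrableOn_Qc hs0 hs2 satisfiesH_one (hE φ)
  have hsub : ∀ b : ℝ, (𝓕 (bK Ω) (b • Complex.exp (φ * Complex.I))).re -
      Ω0 * (𝓕 (bK fun _ => 1) (b • Complex.exp (φ * Complex.I))).re =
      ∫ θ in Ioo (-π) π, (Ω θ - Ω0) * hh (b * Real.cos (θ - φ)) := by
    intro b
    have hci : ∀ f : ℝ → ℝ, Continuous f → IntegrableOn f (Ioo (-π) π) := fun f hf =>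
      (hf.integrableOn_Icc (a := -π) (b := π)).mono_set Ioo_subset_Icc_self
    have hcO := hΩ.1.continuous
    have hch := continuous_hh
    rw [re_FbK_polar hΩ, re_FbK_polar satisfiesH_one, ← integral_const_mul, ← integral_sub]
    · congr 1
      ext θ
      ring
    · exact hci _ (by fun_prop)
    · exact hci _ (by fun_prop)
  have hswap : ∫ b in Ioi (0 : ℝ), ∫ θ in Ioo (-π) π,
      b ^ (1 - s) * ((Ω θ - Ω0) * hh (b * Real.cos (θ - φ))) =
      ∫ θ in Ioo (-π) π, ∫ b in Ioi (0 : ℝ),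
      b ^ (1 - s) * ((Ω θ - Ω0) * hh (b * Real.cos (θ - φ))) := by
    refine integral_integral_swap ?_
    have hmeas : Measurable (Function.uncurry fun b θ : ℝ =>
        b ^ (1 - s) * ((Ω θ - Ω0) * hh (b * Real.cos (θ - φ)))) := by
      unfold Function.uncurry
      fun_prop
    rw [integrable_prod_iff' hmeas.aestronglyMeasurable]
    constructor
    · refine Eventually.of_forall fun θ => ?_
      simp only [Function.uncurry]
      by_cases hc : Real.cos (θ - φ) = 0
      · have h0 := hF θ
        rw [hc, abs_zero, mul_zero, abs_nonpos_iff] at h0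
        simp [h0]
      · refine ((integrableOn_rpow_hh hs0 hs2 hc).const_mul (Ω θ - Ω0)).congr
          (Eventually.of_forall fun b => ?_)
        simp only
        ring
    · refine ((integrableOn_cos_rpow (q := s / 2 - 1) (by linarith) (by linarith) φ).const_mul
        (CO * (C * Ac s))).mono' ?_ (Eventually.of_forall fun θ => ?_)
      · refine StronglyMeasurable.aestronglyMeasurable ?_
        exact StronglyMeasurable.integral_prod_right' (f := fun p : ℝ × ℝ =>
          ‖p.2 ^ (1 - s) * ((Ω p.1 - Ω0) * hh (p.2 * Real.cos (p.1 - φ)))‖)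
          (Measurable.stronglyMeasurable (by fun_prop))
      · simp only [Function.uncurry]
        have hA := Ac_nonneg s
        rw [Real.norm_of_nonneg (integral_nonneg fun b => norm_nonneg _)]
        by_cases hc : Real.cos (θ - φ) = 0
        · have h0 := hF θ
          rw [hc, abs_zero, mul_zero, abs_nonpos_iff] at h0
          simp only [h0, zero_mul, mul_zero, norm_zero, integral_zero]
          positivity
        · set c := Real.cos (θ - φ)
          have hc' : 0 < |c| := abs_pos.2 hc
          have hd := integrableOn_decay_scaled hs0 hs2 hc'
          have h1 : ∫ b in Ioi (0 : ℝ), ‖b ^ (1 - s) * ((Ω θ - Ω0) * hh (b * c))‖ ≤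
              ∫ b in Ioi (0 : ℝ), |Ω θ - Ω0| * C * (b ^ (1 - s) * (1 + (b * |c|) ^ 2)⁻¹) := by
            refine setIntegral_mono_on ?_ (hd.1.const_mul _) measurableSet_Ioi
              fun b (hb : 0 < b) => ?_
            · refine Integrable.norm ?_
              refine ((integrableOn_rpow_hh hs0 hs2 hc).const_mul (Ω θ - Ω0)).congr
                (Eventually.of_forall fun b => ?_)
              simp only
              ring
            · have h2 := hCh (b * c)
              rw [norm_mul, norm_mul, Real.norm_of_nonneg (by positivity : 0 ≤ b ^ (1 - s)),
                Real.norm_eq_abs, Real.norm_eq_abs, mul_pow, sq_abs, ← mul_pow]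
              calc _ ≤ b ^ (1 - s) * (|Ω θ - Ω0| * (C * (1 + (b * c) ^ 2)⁻¹)) := by gcongr
                _ = _ := by ring
          refine h1.trans ?_
          rw [integral_const_mul, hd.2]
          calc |Ω θ - Ω0| * C * (|c| ^ (s - 2) * Ac s)
              ≤ (CO * |c|) * C * (|c| ^ (s - 2) * Ac s) := by
                gcongr
                exact hF θ
            _ = CO * (C * Ac s) * |c| ^ (s - 2 + 1) := by
                rw [Real.rpow_add_one hc'.ne']
                ring
            _ ≤ _ := by
                refine mul_le_mul_of_nonneg_left ?_ (by positivity)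
                exact Real.rpow_le_rpow_of_exponent_ge hc' (Real.abs_cos_le_one _) (by linarith)
  have hmain : Qc s Ω (Complex.exp (φ * Complex.I)) -
      Ω0 * Qc s (fun _ => 1) (Complex.exp (φ * Complex.I)) =
      ∫ θ in Ioo (-π) π, (Ω θ - Ω0) * (|Real.cos (θ - φ)| ^ (s - 2) * (tauC (2 - s) * Mg s)) := by
    rw [Qc, Qc, ← integral_const_mul, ← integral_sub i1 (i2.const_mul Ω0)]
    calc _ = ∫ b in Ioi (0 : ℝ), ∫ θ in Ioo (-π) π,
          b ^ (1 - s) * ((Ω θ - Ω0) * hh (b * Real.cos (θ - φ))) := by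
          refine setIntegral_congr_fun measurableSet_Ioi fun b _ => ?_
          rw [integral_const_mul, ← hsub]
          ring
      _ = _ := by
          rw [hswap]
          refine setIntegral_congr_fun measurableSet_Ioo fun θ _ => ?_
          by_cases hc : Real.cos (θ - φ) = 0
          · have h0 := hF θ
            rw [hc, abs_zero, mul_zero, abs_nonpos_iff] at h0
            simp [h0]
          · rw [← integral_hh_scaled hs0 hs2 hc, ← integral_const_mul]
            congr 1
            ext b
            ring
  rw [Qc_one_indep, Qc_one hs0 hs2, sub_eq_iff_eq_add] at hmain
  rw [hmain, Omt, ← hΩ0, intervalIntegral.integral_of_le (by linarith [pi_pos]),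
    integral_Ioc_eq_integral_Ioo, mul_add, ← integral_const_mul, ← integral_const_mul]
  congr 1
  · congr 1
    ext θ
    rw [← Real.cos_neg, neg_sub, show -2 + s = s - 2 by ring]
    ring
  · ring

/-- The multiplier in polar coordinates. -/
lemma Qc_eq {s : ℝ} (hs0 : 0 < s) (hs2 : s < 2) {Ω : ℝ → ℝ} (hΩ : SatisfiesH Ω) {ξ : ℂ}
    (hξ : ξ ≠ 0) : Qc s Ω ξ = ‖ξ‖ ^ (s - 2) * (Mg s * Omt s Ω ξ.arg) := by
  rw [Qc_polar Ω hξ, Qc_exp hs0 hs2 hΩ]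

/-! ### The energy in Fourier variables along a linear interpolation -/

/-- The measure `ρ` on `ℝ × ℝ` regarded as a measure on `ℂ`. -/
def tr (ρ : Measure (ℝ × ℝ)) : Measure ℂ := ρ.map Complex.measurableEquivRealProd.symm

/-- The `[0,∞]`-valued potential on `ℂ`. -/
def Wc (s : ℝ) (Ω : ℝ → ℝ) (z : ℂ) : ℝ≥0∞ :=
  if z = 0 then ⊤ else ENNReal.ofReal (Kr s Ω z + ‖z‖ ^ 2)

lemma measurable_Wc (s : ℝ) {Ω : ℝ → ℝ} (hΩ : SatisfiesH Ω) : Measurable (Wc s Ω) := by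
  have := measurable_Kr s hΩ
  exact Measurable.ite (measurableSet_singleton 0) measurable_const (by fun_prop)

lemma symm_apply (x : ℝ × ℝ) : Complex.measurableEquivRealProd.symm x = ⟨x.1, x.2⟩ := rfl

lemma Wkernel_eq (s : ℝ) {Ω : ℝ → ℝ} (hΩ : SatisfiesH Ω) (x y : ℝ × ℝ) :
    Wkernel s Ω (x - y) = Wc s Ω (Complex.measurableEquivRealProd.symm x -
      Complex.measurableEquivRealProd.symm y) := by
  have h : Complex.measurableEquivRealProd.symm x - Complex.measurableEquivRealProd.symm y =
      ⟨(x - y).1, (x - y).2⟩ := by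
    apply Complex.ext <;> simp
  rw [h]
  generalize x - y = w
  have h0 : (⟨w.1, w.2⟩ : ℂ) = 0 ↔ w = 0 := by
    rw [Complex.ext_iff, Prod.ext_iff]
    rfl
  have hn : nrm w = ‖(⟨w.1, w.2⟩ : ℂ)‖ := by
    rw [nrm, Complex.norm_def, Complex.normSq_mk, sq, sq]
  have ha : Ω (ang w) = Ω (Complex.arg ⟨w.1, w.2⟩) := by
    rw [ang]
    split_ifs with h
    · rw [h, ← hΩ.2.1 (-π)]
      congr 1
      ring
    · rfl
  rw [Wkernel, Wc, Kr, hn, ha]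
  simp only [h0]

instance (ρ : Measure (ℝ × ℝ)) [IsProbabilityMeasure ρ] : IsProbabilityMeasure (tr ρ) :=
  Measure.isProbabilityMeasure_map (MeasurableEquiv.measurable _).aemeasurable

lemma energy_eq (s : ℝ) {Ω : ℝ → ℝ} (hΩ : SatisfiesH Ω) (ρ : Measure (ℝ × ℝ))
    [IsProbabilityMeasure ρ] : energy s Ω ρ =
      (1 / 2 : ℝ≥0∞) * ∫⁻ p : ℂ × ℂ, Wc s Ω (p.1 - p.2) ∂((tr ρ).prod (tr ρ)) := by
  have hW := measurable_Wc s hΩ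
  have hm : Measurable fun p : ℂ × ℂ => Wc s Ω (p.1 - p.2) := by fun_prop
  rw [energy, lintegral_prod _ hm.aemeasurable]
  conv_rhs => rw [tr, lintegral_map hm.lintegral_prod_right' (MeasurableEquiv.measurable _)]
  congr 1
  refine lintegral_congr fun x => ?_
  have hx : Measurable fun w : ℂ => Wc s Ω (Complex.measurableEquivRealProd.symm x - w) := by
    fun_prop
  change _ = ∫⁻ w, Wc s Ω (Complex.measurableEquivRealProd.symm x - w) ∂(tr ρ)
  rw [tr, lintegral_map hx (MeasurableEquiv.measurable _)]
  exact lintegral_congr fun y => Wkernel_eq s hΩ x y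

lemma iso_of_energy {s : ℝ} {Ω : ℝ → ℝ} (hΩ : SatisfiesH Ω) (ρ : Measure (ℝ × ℝ))
    [IsProbabilityMeasure ρ] (h : energy s Ω ρ < ⊤) : iso s (tr ρ) < ⊤ := by
  obtain ⟨m, M, hm, hM, hb⟩ := Om_bounds hΩ
  rw [energy_eq s hΩ] at h
  have h1 : ∫⁻ p : ℂ × ℂ, Wc s Ω (p.1 - p.2) ∂((tr ρ).prod (tr ρ)) < ⊤ := by
    rcases ENNReal.mul_lt_top_iff.1 h with h | h | h
    · exact h.2
    · simp at h
    · rw [h]; exact ENNReal.zero_lt_top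
  have h2 : ENNReal.ofReal m * iso s (tr ρ) < ⊤ := by
    rw [iso, ← lintegral_const_mul' _ _ ENNReal.ofReal_ne_top]
    refine lt_of_le_of_lt (lintegral_mono fun p => ?_) h1
    rw [Wc]
    split_ifs with h0
    · exact le_top
    · rw [← ofReal_norm, ENNReal.ofReal_rpow_of_pos (norm_pos_iff.2 h0),
        ← ENNReal.ofReal_mul hm.le]
      refine ENNReal.ofReal_le_ofReal ?_
      have : m * ‖p.1 - p.2‖ ^ (-s) ≤ Kr s Ω (p.1 - p.2) := by
        rw [Kr, mul_comm]
        exact mul_le_mul_of_nonneg_left (hb _).1 (by positivity)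
      nlinarith [sq_nonneg ‖p.1 - p.2‖]
  rcases ENNReal.mul_lt_top_iff.1 h2 with h | h | h
  · exact h.2
  · rw [ENNReal.ofReal_eq_zero] at h
    linarith
  · rw [h]; exact ENNReal.zero_lt_top

/-- Finite isotropic energy forbids charging the diagonal. -/
lemma ae_offdiag {s : ℝ} (hs0 : 0 < s) (ν : Measure ℂ) [IsFiniteMeasure ν] (h : iso s ν < ⊤) :
    ∀ᵐ p ∂(ν.prod ν), p.1 - p.2 ≠ 0 := by
  filter_upwards [ae_lt_top (by fun_prop) h.ne] with p hp h0
  rw [h0, enorm_zero, ENNReal.zero_rpow_of_neg (by linarith)] at hp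
  exact lt_irrefl _ hp

lemma integrable_of_ae_bdd {ν : Measure ℂ} [IsFiniteMeasure ν] {R : ℝ} (hR : ∀ᵐ z ∂ν, ‖z‖ ≤ R) :
    Integrable (fun z : ℂ => z) ν := Integrable.of_bound (by fun_prop) R hR

lemma integrable_sq_of_ae_bdd {ν : Measure ℂ} [IsFiniteMeasure ν] {R : ℝ}
    (hR : ∀ᵐ z ∂ν, ‖z‖ ≤ R) : Integrable (fun z : ℂ => ‖z‖ ^ 2) ν := by
  refine Integrable.of_bound (C := R ^ 2) (by fun_prop) ?_
  filter_upwards [hR] with z hz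
  rw [Real.norm_of_nonneg (by positivity)]
  gcongr

lemma second_moment (ν : Measure ℂ) [IsProbabilityMeasure ν] {R : ℝ} (hR : ∀ᵐ z ∂ν, ‖z‖ ≤ R) :
    Integrable (fun p : ℂ × ℂ => ‖p.1 - p.2‖ ^ 2) (ν.prod ν) ∧
    ∫ p : ℂ × ℂ, ‖p.1 - p.2‖ ^ 2 ∂(ν.prod ν) = 2 * ∫ z, ‖z‖ ^ 2 ∂ν - 2 * ‖∫ z, z ∂ν‖ ^ 2 := by
  have hi := integrable_of_ae_bdd hR
  have hi2 := integrable_sq_of_ae_bdd hR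
  have i1 : Integrable (fun p : ℂ × ℂ => ‖p.1‖ ^ 2) (ν.prod ν) := hi2.comp_fst ν
  have i2 : Integrable (fun p : ℂ × ℂ => ‖p.2‖ ^ 2) (ν.prod ν) := hi2.comp_snd ν
  have i3 : Integrable (fun p : ℂ × ℂ => inner ℝ p.1 p.2) (ν.prod ν) := by
    refine Integrable.of_bound (C := R * R) (by fun_prop) ?_
    filter_upwards [Measure.quasiMeasurePreserving_fst.ae hR,
      Measure.quasiMeasurePreserving_snd.ae hR] with p h1 h2
    refine (norm_inner_le_norm _ _).trans ?_
    exact mul_le_mul h1 h2 (norm_nonneg _) ((norm_nonneg _).trans h1)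
  have e : (fun p : ℂ × ℂ => ‖p.1 - p.2‖ ^ 2) =
      fun p => ‖p.1‖ ^ 2 - 2 * inner ℝ p.1 p.2 + ‖p.2‖ ^ 2 := by
    ext p
    exact norm_sub_sq_real _ _
  have h3 : ∫ p : ℂ × ℂ, inner ℝ p.1 p.2 ∂(ν.prod ν) = ‖∫ z, z ∂ν‖ ^ 2 := by
    rw [integral_prod _ i3]
    simp_rw [integral_inner hi]
    have hsw : ∀ x : ℂ, inner ℝ x (∫ z, z ∂ν) = inner ℝ (∫ z, z ∂ν) x := fun x =>
      real_inner_comm _ _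
    simp_rw [hsw]
    rw [integral_inner hi, real_inner_self_eq_norm_sq]
  have h1 : ∫ p : ℂ × ℂ, ‖p.1‖ ^ 2 ∂(ν.prod ν) = ∫ z, ‖z‖ ^ 2 ∂ν := by
    rw [integral_fun_fst (fun z : ℂ => ‖z‖ ^ 2)]
    simp
  have h2 : ∫ p : ℂ × ℂ, ‖p.2‖ ^ 2 ∂(ν.prod ν) = ∫ z, ‖z‖ ^ 2 ∂ν := by
    rw [integral_fun_snd (fun z : ℂ => ‖z‖ ^ 2)]
    simp
  rw [e]
  refine ⟨(i1.sub (i3.const_mul 2)).add i2, ?_⟩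
  have i4 : Integrable (fun p : ℂ × ℂ => ‖p.1‖ ^ 2 - 2 * inner ℝ p.1 p.2) (ν.prod ν) :=
    i1.sub (i3.const_mul 2)
  rw [integral_add i4 i2, integral_sub i1 (i3.const_mul 2),
    integral_const_mul, h1, h2, h3]
  ring

lemma Kr_nonneg (s : ℝ) {Ω : ℝ → ℝ} (hΩ : SatisfiesH Ω) (z : ℂ) : 0 ≤ Kr s Ω z :=
  mul_nonneg (Real.rpow_nonneg (norm_nonneg _) _) (hΩ.2.2.1 _).le

lemma energy_toReal {s : ℝ} (hs0 : 0 < s) (hs2 : s < 2) {Ω : ℝ → ℝ} (hΩ : SatisfiesH Ω)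
    (ρ : Measure (ℝ × ℝ)) [IsProbabilityMeasure ρ] {R : ℝ} (hR : ∀ᵐ z ∂(tr ρ), ‖z‖ ≤ R)
    (h : iso s (tr ρ) < ⊤) : energy s Ω ρ < ⊤ ∧ (energy s Ω ρ).toReal =
      1 / (2 * Mg s) * (∫ ξ, Qc s Ω ξ * ‖ft (tr ρ) ξ‖ ^ 2) + ∫ z, ‖z‖ ^ 2 ∂(tr ρ)
        - ‖∫ z, z ∂(tr ρ)‖ ^ 2 := by
  obtain ⟨i2, h2⟩ := second_moment (tr ρ) hR
  have i1 := integrable_Kr hΩ (tr ρ) h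
  have e : ∫⁻ p : ℂ × ℂ, Wc s Ω (p.1 - p.2) ∂((tr ρ).prod (tr ρ)) =
      ENNReal.ofReal (∫ p : ℂ × ℂ, (Kr s Ω (p.1 - p.2) + ‖p.1 - p.2‖ ^ 2)
        ∂((tr ρ).prod (tr ρ))) := by
    have i12 : Integrable (fun p : ℂ × ℂ => Kr s Ω (p.1 - p.2) + ‖p.1 - p.2‖ ^ 2)
        ((tr ρ).prod (tr ρ)) := i1.add i2
    rw [ofReal_integral_eq_lintegral_ofReal i12]
    · refine lintegral_congr_ae ?_
      filter_upwards [ae_offdiag hs0 (tr ρ) h] with p hp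
      rw [Wc, if_neg hp]
    · refine Eventually.of_forall fun p => ?_
      have := Kr_nonneg s hΩ (p.1 - p.2)
      simp only [Pi.zero_apply]
      positivity
  have hn : 0 ≤ ∫ p : ℂ × ℂ, (Kr s Ω (p.1 - p.2) + ‖p.1 - p.2‖ ^ 2) ∂((tr ρ).prod (tr ρ)) := by
    refine integral_nonneg fun p => ?_
    have := Kr_nonneg s hΩ (p.1 - p.2)
    simp only [Pi.zero_apply]
    positivity
  rw [energy_eq s hΩ, e]
  refine ⟨ENNReal.mul_lt_top (by simp) ENNReal.ofReal_lt_top, ?_⟩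
  rw [ENNReal.toReal_mul, ENNReal.toReal_ofReal hn, integral_add i1 i2, h2,
    ← Kr_energy hs0 hs2 hΩ (tr ρ) h]
  have := (Mg_pos s).ne'
  field_simp
  simp
  ring

lemma tr_mix (ρ₀ ρ₁ : Measure (ℝ × ℝ)) (t : ℝ) :
    tr (mix ρ₀ ρ₁ t) = ENNReal.ofReal (1 - t) • tr ρ₀ + ENNReal.ofReal t • tr ρ₁ := by
  have hm : Measurable (Complex.measurableEquivRealProd.symm : ℝ × ℝ → ℂ) :=
    MeasurableEquiv.measurable _
  rw [tr, mix, Measure.map_add _ _ hm, Measure.map_smul, Measure.map_smul]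
  rfl

lemma integral_mix {E : Type*} [NormedAddCommGroup E] [NormedSpace ℝ E] (ν₀ ν₁ : Measure ℂ)
    {t : ℝ} (h0 : 0 ≤ t) (h1 : t ≤ 1) {f : ℂ → E} (i0 : Integrable f ν₀) (i1 : Integrable f ν₁) :
    ∫ z, f z ∂(ENNReal.ofReal (1 - t) • ν₀ + ENNReal.ofReal t • ν₁) =
      (1 - t) • (∫ z, f z ∂ν₀) + t • ∫ z, f z ∂ν₁ := by
  rw [integral_add_measure (i0.smul_measure ENNReal.ofReal_ne_top)
    (i1.smul_measure ENNReal.ofReal_ne_top), integral_smul_measure, integral_smul_measure,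
    ENNReal.toReal_ofReal (by linarith), ENNReal.toReal_ofReal h0]

lemma isProb_mix (ρ₀ ρ₁ : Measure (ℝ × ℝ)) [IsProbabilityMeasure ρ₀] [IsProbabilityMeasure ρ₁]
    {t : ℝ} (h0 : 0 ≤ t) (h1 : t ≤ 1) : IsProbabilityMeasure (mix ρ₀ ρ₁ t) := by
  constructor
  rw [mix, Measure.add_apply, Measure.smul_apply, Measure.smul_apply, measure_univ, measure_univ,
    smul_eq_mul, smul_eq_mul, mul_one, mul_one, ← ENNReal.ofReal_add (by linarith) h0]
  simp

lemma ft_mix (ρ₀ ρ₁ : Measure (ℝ × ℝ)) [IsProbabilityMeasure ρ₀] [IsProbabilityMeasure ρ₁]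
    {t : ℝ} (h0 : 0 ≤ t) (h1 : t ≤ 1) (ξ : ℂ) :
    ft (tr (mix ρ₀ ρ₁ t)) ξ = (1 - t) • ft (tr ρ₀) ξ + t • ft (tr ρ₁) ξ := by
  have hi : ∀ (ν : Measure ℂ) [IsProbabilityMeasure ν], Integrable
      (fun x => Complex.exp (((2 * π * inner ℝ ξ x : ℝ) : ℂ) * Complex.I)) ν := fun ν _ =>
    Integrable.of_bound (C := 1) (Continuous.aestronglyMeasurable (by fun_prop))
      (Eventually.of_forall fun x => by rw [Complex.norm_exp_ofReal_mul_I])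
  rw [ft_eq, ft_eq, ft_eq, tr_mix, integral_mix _ _ h0 h1 (hi _) (hi _)]

/-- The quadratic identity `|(1-t)a + tb|² = (1-t)|a|² + t|b|² - t(1-t)|a-b|²`. -/
lemma norm_sq_interp (a b : ℂ) (t : ℝ) : ‖(1 - t) • a + t • b‖ ^ 2 =
    (1 - t) * ‖a‖ ^ 2 + t * ‖b‖ ^ 2 - t * (1 - t) * ‖a - b‖ ^ 2 := by
  rw [norm_add_sq_real, norm_sub_sq_real, norm_smul, norm_smul, real_inner_smul_left,
    real_inner_smul_right, mul_pow, mul_pow, Real.norm_eq_abs, Real.norm_eq_abs, sq_abs, sq_abs]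
  ring

/-- The second variation of the energy in the direction `ν₁ - ν₀`, up to a positive factor. -/
def Dv (s : ℝ) (Ω : ℝ → ℝ) (ν₀ ν₁ : Measure ℂ) : ℝ := ∫ ξ, Qc s Ω ξ * ‖ft ν₀ ξ - ft ν₁ ξ‖ ^ 2

lemma integrable_diff {s : ℝ} (hs0 : 0 < s) (hs2 : s < 2) (ν₀ ν₁ : Measure ℂ)
    [IsProbabilityMeasure ν₀] [IsProbabilityMeasure ν₁] (h₀ : iso s ν₀ < ⊤) (h₁ : iso s ν₁ < ⊤) :
    Integrable (fun ξ : ℂ => ‖ξ‖ ^ (s - 2) * ‖ft ν₀ ξ - ft ν₁ ξ‖ ^ 2) := by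
  have hm0 := (continuous_ft ν₀).measurable
  have hm1 := (continuous_ft ν₁).measurable
  refine (((integrable_ft_of_iso hs0 hs2 ν₀ h₀).const_mul 2).add
    ((integrable_ft_of_iso hs0 hs2 ν₁ h₁).const_mul 2)).mono'
    (Measurable.aestronglyMeasurable (by fun_prop)) (Eventually.of_forall fun ξ => ?_)
  rw [Real.norm_of_nonneg (by positivity), Pi.add_apply, mul_left_comm, mul_left_comm 2, ← mul_add]
  refine mul_le_mul_of_nonneg_left ?_ (by positivity)
  have := parallelogram_law_with_norm ℝ (ft ν₀ ξ) (ft ν₁ ξ)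
  nlinarith [norm_nonneg (ft ν₀ ξ + ft ν₁ ξ)]

/-- Along the interpolation the energy is a quadratic polynomial with leading coefficient
proportional to `Dv`. -/
lemma energy_mix {s : ℝ} (hs0 : 0 < s) (hs2 : s < 2) {Ω : ℝ → ℝ} (hΩ : SatisfiesH Ω)
    (ρ₀ ρ₁ : Measure (ℝ × ℝ)) [IsProbabilityMeasure ρ₀] [IsProbabilityMeasure ρ₁] {R : ℝ}
    (hR₀ : ∀ᵐ z ∂(tr ρ₀), ‖z‖ ≤ R) (hR₁ : ∀ᵐ z ∂(tr ρ₁), ‖z‖ ≤ R)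
    (h₀ : iso s (tr ρ₀) < ⊤) (h₁ : iso s (tr ρ₁) < ⊤)
    (hc : ∫ z, z ∂(tr ρ₀) = ∫ z, z ∂(tr ρ₁)) :
    ∃ α β : ℝ, ∀ t ∈ Icc (0 : ℝ) 1, (energy s Ω (mix ρ₀ ρ₁ t)).toReal =
      α + β * t - t * (1 - t) * (1 / (2 * Mg s) * Dv s Ω (tr ρ₀) (tr ρ₁)) := by
  set ν₀ := tr ρ₀ with hν₀
  set ν₁ := tr ρ₁ with hν₁
  have j0 := integrable_ft_of_iso hs0 hs2 ν₀ h₀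
  have j1 := integrable_ft_of_iso hs0 hs2 ν₁ h₁
  have jd := integrable_diff hs0 hs2 ν₀ ν₁ h₀ h₁
  have hm0 := (continuous_ft ν₀).measurable
  have hm1 := (continuous_ft ν₁).measurable
  have q0 := integrable_Qc_ft hs0 hs2 hΩ (u := fun ξ => ‖ft ν₀ ξ‖ ^ 2) (by fun_prop) j0
  have q1 := integrable_Qc_ft hs0 hs2 hΩ (u := fun ξ => ‖ft ν₁ ξ‖ ^ 2) (by fun_prop) j1
  have qd := integrable_Qc_ft hs0 hs2 hΩ (u := fun ξ => ‖ft ν₀ ξ - ft ν₁ ξ‖ ^ 2) (by fun_prop) jd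
  set A0 := ∫ ξ, Qc s Ω ξ * ‖ft ν₀ ξ‖ ^ 2
  set A1 := ∫ ξ, Qc s Ω ξ * ‖ft ν₁ ξ‖ ^ 2
  set V0 := ∫ z, ‖z‖ ^ 2 ∂ν₀
  set V1 := ∫ z, ‖z‖ ^ 2 ∂ν₁
  refine ⟨1 / (2 * Mg s) * A0 + V0 - ‖∫ z, z ∂ν₀‖ ^ 2, 1 / (2 * Mg s) * (A1 - A0) + (V1 - V0),
    fun t ht => ?_⟩
  have := isProb_mix ρ₀ ρ₁ ht.1 ht.2
  have hft : ∀ ξ, ‖ft (tr (mix ρ₀ ρ₁ t)) ξ‖ ^ 2 = (1 - t) * ‖ft ν₀ ξ‖ ^ 2 + t * ‖ft ν₁ ξ‖ ^ 2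
      - t * (1 - t) * ‖ft ν₀ ξ - ft ν₁ ξ‖ ^ 2 := fun ξ => by
    rw [ft_mix ρ₀ ρ₁ ht.1 ht.2, norm_sq_interp]
  have hRt : ∀ᵐ z ∂(tr (mix ρ₀ ρ₁ t)), ‖z‖ ≤ R := by
    rw [tr_mix, ae_add_measure_iff]
    exact ⟨Measure.ae_smul_measure hR₀ _, Measure.ae_smul_measure hR₁ _⟩
  have hiso : iso s (tr (mix ρ₀ ρ₁ t)) < ⊤ := by
    refine iso_lt_top hs0 hs2 _ ?_
    simp_rw [hft]
    refine ((((j0.const_mul (1 - t)).add (j1.const_mul t)).sub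
      (jd.const_mul (t * (1 - t)))).congr (Eventually.of_forall fun ξ => ?_))
    simp only [Pi.add_apply, Pi.sub_apply]
    ring
  rw [(energy_toReal hs0 hs2 hΩ _ hRt hiso).2]
  have e1 : ∫ ξ, Qc s Ω ξ * ‖ft (tr (mix ρ₀ ρ₁ t)) ξ‖ ^ 2 =
      (1 - t) * A0 + t * A1 - t * (1 - t) * Dv s Ω ν₀ ν₁ := by
    have qa : Integrable (fun ξ => (1 - t) * (Qc s Ω ξ * ‖ft ν₀ ξ‖ ^ 2) +
        t * (Qc s Ω ξ * ‖ft ν₁ ξ‖ ^ 2)) := (q0.const_mul _).add (q1.const_mul _)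
    rw [Dv, ← integral_const_mul, ← integral_const_mul, ← integral_const_mul,
      ← integral_add (q0.const_mul _) (q1.const_mul _), ← integral_sub qa (qd.const_mul _)]
    refine integral_congr_ae (Eventually.of_forall fun ξ => ?_)
    simp only
    rw [hft]
    ring
  have e2 : ∫ z, ‖z‖ ^ 2 ∂(tr (mix ρ₀ ρ₁ t)) = (1 - t) * V0 + t * V1 := by
    rw [tr_mix, integral_mix _ _ ht.1 ht.2 (integrable_sq_of_ae_bdd hR₀)
      (integrable_sq_of_ae_bdd hR₁)]
    rfl
  have e3 : ∫ z, z ∂(tr (mix ρ₀ ρ₁ t)) = ∫ z, z ∂ν₀ := by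
    rw [tr_mix, integral_mix _ _ ht.1 ht.2 (integrable_of_ae_bdd hR₀)
      (integrable_of_ae_bdd hR₁), ← hc, ← add_smul]
    simp
  rw [e1, e2, e3]
  ring

lemma strictConvexOn_quadratic {f : ℝ → ℝ} {α β D : ℝ}
    (h : ∀ t ∈ Icc (0 : ℝ) 1, f t = α + β * t - t * (1 - t) * D) :
    StrictConvexOn ℝ (Icc (0 : ℝ) 1) f ↔ 0 < D := by
  constructor
  · intro hf
    have h1 := hf.2 (show (0 : ℝ) ∈ Icc (0 : ℝ) 1 by simp) (show (1 : ℝ) ∈ Icc (0 : ℝ) 1 by simp)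
      zero_ne_one (show (0 : ℝ) < 1 / 2 by norm_num) (show (0 : ℝ) < 1 / 2 by norm_num)
      (by norm_num)
    simp only [smul_eq_mul] at h1
    rw [h _ ⟨by norm_num, by norm_num⟩, h _ ⟨by norm_num, by norm_num⟩,
      h _ ⟨by norm_num, by norm_num⟩] at h1
    linarith
  · intro hD
    refine ⟨convex_Icc 0 1, fun x hx y hy hxy a b ha hb hab => ?_⟩
    have hz := (convex_Icc (0 : ℝ) 1) hx hy ha.le hb.le hab
    simp only [smul_eq_mul] at hz ⊢
    rw [h _ hz, h _ hx, h _ hy]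
    obtain rfl : b = 1 - a := by linarith
    have h2 : 0 < (x - y) ^ 2 := by
      have : x - y ≠ 0 := sub_ne_zero.2 hxy
      positivity
    have h3 : 0 < a * (1 - a) * D * (x - y) ^ 2 := by positivity
    nlinarith

lemma bdd_of_compact {ρ : Measure (ℝ × ℝ)} (h : HasCompactSupportM ρ) :
    ∃ R, ∀ᵐ z ∂(tr ρ), ‖z‖ ≤ R := by
  obtain ⟨K, hK, h0⟩ := h
  have hc : Continuous (fun x : ℝ × ℝ => Complex.measurableEquivRealProd.symm x) :=
    Complex.equivRealProdCLM.symm.continuous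
  obtain ⟨R, hR⟩ := (hK.image hc).isBounded.exists_norm_le
  refine ⟨R, ?_⟩
  rw [tr, ae_map_iff (MeasurableEquiv.measurable _).aemeasurable
    (measurableSet_le measurable_norm measurable_const)]
  have : ∀ᵐ x ∂ρ, x ∈ K := by rwa [ae_iff]
  filter_upwards [this] with x hx
  exact hR _ ⟨x, hx, rfl⟩

lemma integral_tr (ρ : Measure (ℝ × ℝ)) :
    ∫ z, z ∂(tr ρ) = Complex.equivRealProdCLM.symm (∫ x, x ∂ρ) := by
  rw [tr, integral_map (MeasurableEquiv.measurable _).aemeasurable (by fun_prop)]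
  exact Complex.equivRealProdCLM.symm.integral_comp_comm fun x => x

/-- Strict convexity along one interpolation is the positivity of `Dv`. -/
lemma convex_iff {s : ℝ} (hs0 : 0 < s) (hs2 : s < 2) {Ω : ℝ → ℝ} (hΩ : SatisfiesH Ω)
    (ρ₀ ρ₁ : Measure (ℝ × ℝ)) [IsProbabilityMeasure ρ₀] [IsProbabilityMeasure ρ₁]
    (hK₀ : HasCompactSupportM ρ₀) (hK₁ : HasCompactSupportM ρ₁)
    (h₀ : iso s (tr ρ₀) < ⊤) (h₁ : iso s (tr ρ₁) < ⊤) (hc : ∫ x, x ∂ρ₀ = ∫ x, x ∂ρ₁) :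
    (StrictConvexOn ℝ (Icc (0 : ℝ) 1) fun t => (energy s Ω (mix ρ₀ ρ₁ t)).toReal) ↔
      0 < Dv s Ω (tr ρ₀) (tr ρ₁) := by
  obtain ⟨R₀, hR₀⟩ := bdd_of_compact hK₀
  obtain ⟨R₁, hR₁⟩ := bdd_of_compact hK₁
  obtain ⟨α, β, h⟩ := energy_mix hs0 hs2 hΩ ρ₀ ρ₁ (R := max R₀ R₁)
    (hR₀.mono fun z hz => hz.trans (le_max_left _ _))
    (hR₁.mono fun z hz => hz.trans (le_max_right _ _)) h₀ h₁
    (by rw [integral_tr, integral_tr, hc])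
  rw [strictConvexOn_quadratic h]
  have := Mg_pos s
  exact mul_pos_iff_of_pos_left (by positivity)

/-! ### Nonnegativity of `Ω̃` implies convexity -/

/-- The kernel transform is continuous away from the origin. -/
lemma continuousAt_Qc {s : ℝ} (hs0 : 0 < s) (hs2 : s < 2) {Ω : ℝ → ℝ} (hΩ : SatisfiesH Ω)
    {ξ₀ : ℂ} (h0 : ξ₀ ≠ 0) : ContinuousAt (Qc s Ω) ξ₀ := by
  obtain ⟨C, hC, hd⟩ := FbK_decay hΩ
  have hcF := continuous_FbK hΩ
  have hmF := hcF.measurable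
  have hr : 0 < ‖ξ₀‖ / 2 := half_pos (norm_pos_iff.2 h0)
  set r := ‖ξ₀‖ / 2 with hrdef
  have key : Tendsto (fun ξ : ℂ => ∫ b in Ioi (0 : ℝ), b ^ (1 - s) * (𝓕 (bK Ω) (b • ξ)).re)
      (𝓝 ξ₀) (𝓝 (∫ b in Ioi (0 : ℝ), b ^ (1 - s) * (𝓕 (bK Ω) (b • ξ₀)).re)) := by
    refine tendsto_integral_filter_of_dominated_convergence
      (fun b => C * (1 + (r ^ 2)⁻¹) * (b ^ (1 - s) * (1 + b ^ 2)⁻¹)) ?_ ?_ ?_ ?_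
    · refine Eventually.of_forall fun ξ => Measurable.aestronglyMeasurable ?_
      have h1 : Measurable fun b : ℝ => 𝓕 (bK Ω) (b • ξ) := hmF.comp (by fun_prop)
      fun_prop
    · have hn : ∀ᶠ ξ : ℂ in 𝓝 ξ₀, r < ‖ξ‖ :=
        continuous_norm.continuousAt.eventually_const_lt (by rw [hrdef]; linarith)
      filter_upwards [hn] with ξ hξ
      filter_upwards [self_mem_ae_restrict measurableSet_Ioi] with b (hb : 0 < b)
      rw [norm_mul, Real.norm_of_nonneg (by positivity)]
      have h1 : ‖(𝓕 (bK Ω) (b • ξ)).re‖ ≤ C * (1 + ‖b • ξ‖ ^ 2)⁻¹ :=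
        (Complex.abs_re_le_norm _).trans (hd _)
      have h2 : (1 + ‖b • ξ‖ ^ 2)⁻¹ ≤ (1 + (r ^ 2)⁻¹) * (1 + b ^ 2)⁻¹ := by
        rw [norm_smul, Real.norm_of_nonneg hb.le, mul_pow, ← div_eq_mul_inv, inv_le_comm₀
          (by positivity) (by positivity), inv_div, div_le_iff₀ (by positivity)]
        have h3 : r ^ 2 ≤ ‖ξ‖ ^ 2 := by gcongr
        have h4 : (r ^ 2)⁻¹ * r ^ 2 = 1 := inv_mul_cancel₀ (by positivity)
        calc 1 + b ^ 2 ≤ (1 + b ^ 2 * r ^ 2) * (1 + (r ^ 2)⁻¹) := by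
              have : 0 ≤ (r ^ 2)⁻¹ := by positivity
              have : 0 ≤ b ^ 2 * r ^ 2 := by positivity
              nlinarith
          _ ≤ _ := by gcongr
      calc b ^ (1 - s) * ‖(𝓕 (bK Ω) (b • ξ)).re‖
          ≤ b ^ (1 - s) * (C * ((1 + (r ^ 2)⁻¹) * (1 + b ^ 2)⁻¹)) := by
            gcongr
            exact h1.trans (by gcongr)
        _ = _ := by ring
    · exact (integrableOn_decay hs0 hs2).const_mul _
    · refine Eventually.of_forall fun b => Continuous.tendsto ?_ ξ₀
      have h1 : Continuous fun ξ : ℂ => 𝓕 (bK Ω) (b • ξ) := hcF.comp (by fun_prop)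
      exact continuous_const.mul (Complex.continuous_re.comp h1)
  exact key

/-- The Fourier transform of a compactly supported measure extends to an entire function along
each line. -/
lemma differentiable_ft_line (ν : Measure ℂ) [IsFiniteMeasure ν] {R : ℝ}
    (hR : ∀ᵐ z ∂ν, ‖z‖ ≤ R) (ξ η : ℂ) :
    Differentiable ℂ fun w : ℂ => ∫ x, Complex.exp (2 * π * (((inner ℝ ξ x : ℝ) : ℂ) +
      w * ((inner ℝ η x : ℝ) : ℂ)) * Complex.I) ∂ν := by
  intro w₀
  have hn : ∀ (w x : ℂ), ‖x‖ ≤ R → w ∈ Metric.ball w₀ 1 →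
      ‖Complex.exp (2 * π * (((inner ℝ ξ x : ℝ) : ℂ) + w * ((inner ℝ η x : ℝ) : ℂ)) * Complex.I)‖
        ≤ Real.exp (2 * π * ((‖w₀‖ + 1) * (‖η‖ * R))) := by
    intro w x hx hw
    rw [Complex.norm_exp, Real.exp_le_exp]
    have e : (2 * π * (((inner ℝ ξ x : ℝ) : ℂ) + w * ((inner ℝ η x : ℝ) : ℂ)) *
        Complex.I).re = 2 * π * (-(w.im * inner ℝ η x)) := by
      simp
    rw [e]
    refine mul_le_mul_of_nonneg_left ?_ (by positivity)
    refine (neg_le_abs _).trans ?_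
    rw [abs_mul]
    have h1 : |w.im| ≤ ‖w₀‖ + 1 := by
      have : ‖w - w₀‖ < 1 := by simpa [dist_eq_norm] using hw
      have h3 := norm_sub_norm_le w w₀
      linarith [Complex.abs_im_le_norm w]
    have h2 : |inner ℝ η x| ≤ ‖η‖ * R :=
      (abs_real_inner_le_norm _ _).trans (by gcongr)
    exact mul_le_mul h1 h2 (abs_nonneg _) (by positivity)
  have hcont : ∀ w : ℂ, Continuous fun x : ℂ => Complex.exp (2 * π * (((inner ℝ ξ x : ℝ) : ℂ) +
      w * ((inner ℝ η x : ℝ) : ℂ)) * Complex.I) := fun w => by fun_prop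
  refine (hasDerivAt_integral_of_dominated_loc_of_deriv_le
    (F' := fun (w x : ℂ) => Complex.exp (2 * π * (((inner ℝ ξ x : ℝ) : ℂ) +
      w * ((inner ℝ η x : ℝ) : ℂ)) * Complex.I) *
      (2 * π * ((inner ℝ η x : ℝ) : ℂ) * Complex.I))
    (bound := fun _ => Real.exp (2 * π * ((‖w₀‖ + 1) * (‖η‖ * R))) * (2 * π * (‖η‖ * R)))
    (Metric.ball_mem_nhds w₀ one_pos) ?_ ?_ ?_ ?_ ?_ ?_).2.differentiableAt
  · exact Eventually.of_forall fun w => (hcont w).aestronglyMeasurable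
  · exact Integrable.of_bound (hcont w₀).aestronglyMeasurable _
      (hR.mono fun x hx => hn w₀ x hx (Metric.mem_ball_self one_pos))
  · exact Continuous.aestronglyMeasurable (by fun_prop)
  · filter_upwards [hR] with x hx w hw
    rw [norm_mul]
    refine mul_le_mul (hn w x hx hw) ?_ (norm_nonneg _) (Real.exp_pos _).le
    rw [norm_mul, norm_mul, norm_mul, Complex.norm_I, Complex.norm_real, Complex.norm_real,
      Real.norm_of_nonneg pi_pos.le, mul_one, Real.norm_eq_abs]
    have h2 : |inner ℝ η x| ≤ ‖η‖ * R :=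
      (abs_real_inner_le_norm _ _).trans (by gcongr)
    simp only [Complex.norm_ofNat]
    gcongr
  · exact integrable_const _
  · refine Eventually.of_forall fun x w _ => ?_
    refine HasDerivAt.cexp ?_
    have h := ((((hasDerivAt_id w).mul_const ((inner ℝ η x : ℝ) : ℂ)).const_add
      ((inner ℝ ξ x : ℝ) : ℂ)).const_mul (2 * π : ℂ)).mul_const Complex.I
    simpa using h

lemma ft_line (ν : Measure ℂ) (ξ η : ℂ) (t : ℝ) : ft ν (ξ + t • η) =
    ∫ x, Complex.exp (2 * π * (((inner ℝ ξ x : ℝ) : ℂ) +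
      (t : ℂ) * ((inner ℝ η x : ℝ) : ℂ)) * Complex.I) ∂ν := by
  rw [ft_eq]
  refine integral_congr_ae (Eventually.of_forall fun x => ?_)
  simp only
  rw [inner_add_left, real_inner_smul_left]
  push_cast
  rfl

/-- Compactly supported measures whose Fourier transforms agree near a point are equal. -/
lemma eq_of_ft_eventuallyEq (ν₀ ν₁ : Measure ℂ) [IsFiniteMeasure ν₀] [IsFiniteMeasure ν₁]
    {R₀ R₁ : ℝ} (hR₀ : ∀ᵐ z ∂ν₀, ‖z‖ ≤ R₀) (hR₁ : ∀ᵐ z ∂ν₁, ‖z‖ ≤ R₁) {ξ₀ : ℂ}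
    (h : ∀ᶠ ξ in 𝓝 ξ₀, ft ν₀ ξ = ft ν₁ ξ) : ν₀ = ν₁ := by
  have hft : ∀ ξ, ft ν₀ ξ = ft ν₁ ξ := by
    intro ξ
    have a0 := (differentiable_ft_line ν₀ hR₀ ξ₀ (ξ - ξ₀)).differentiableOn.analyticOnNhd
      isOpen_univ
    have a1 := (differentiable_ft_line ν₁ hR₁ ξ₀ (ξ - ξ₀)).differentiableOn.analyticOnNhd
      isOpen_univ
    have hl : Tendsto (fun t : ℝ => ξ₀ + t • (ξ - ξ₀)) (𝓝 0) (𝓝 ξ₀) := by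
      have : Continuous fun t : ℝ => ξ₀ + t • (ξ - ξ₀) := by fun_prop
      simpa using this.tendsto 0
    have hof : Tendsto (fun t : ℝ => (t : ℂ)) (𝓝[≠] 0) (𝓝[≠] (0 : ℂ)) := by
      refine tendsto_nhdsWithin_iff.2 ⟨?_, ?_⟩
      · have : Tendsto (fun t : ℝ => (t : ℂ)) (𝓝 0) (𝓝 ((0 : ℝ) : ℂ)) :=
          Complex.continuous_ofReal.tendsto 0
        rw [Complex.ofReal_zero] at this
        exact this.mono_left nhdsWithin_le_nhds
      · filter_upwards [self_mem_nhdsWithin] with t ht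
        simpa using ht
    have hev := (hl.eventually h).filter_mono (nhdsWithin_le_nhds (s := {0}ᶜ))
    have hev2 := Eventually.frequently (hev.mono fun t ht => by
      rw [ft_line, ft_line] at ht; exact ht)
    have hfr := hof.frequently (p := fun w : ℂ =>
      (∫ x, Complex.exp (2 * π * (((inner ℝ ξ₀ x : ℝ) : ℂ) +
        w * ((inner ℝ (ξ - ξ₀) x : ℝ) : ℂ)) * Complex.I) ∂ν₀) =
      ∫ x, Complex.exp (2 * π * (((inner ℝ ξ₀ x : ℝ) : ℂ) +
        w * ((inner ℝ (ξ - ξ₀) x : ℝ) : ℂ)) * Complex.I) ∂ν₁) hev2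
    have := a0.eqOn_of_preconnected_of_frequently_eq a1 isPreconnected_univ (mem_univ 0) hfr
      (mem_univ ((1 : ℝ) : ℂ))
    simp only [← ft_line] at this
    simpa using this
  refine Measure.ext_of_charFun (funext fun t => ?_)
  have h1 := hft ((2 * π)⁻¹ • t)
  have h2 : (2 * π) ≠ 0 := by positivity
  rwa [ft, ft, smul_inv_smul₀ h2] at h1

/-- If `Qc` vanished off the origin, the anisotropic energy of `ν` would be zero although its kernel
is positive off the diagonal, which is a null set. -/
lemma Qc_ne_zero {s : ℝ} (hs0 : 0 < s) (hs2 : s < 2) {Ω : ℝ → ℝ} (hΩ : SatisfiesH Ω)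
    (ν : Measure ℂ) [IsProbabilityMeasure ν] (h : iso s ν < ⊤) : ∃ ξ ≠ 0, Qc s Ω ξ ≠ 0 := by
  by_contra! hcon
  have h1 := Kr_energy hs0 hs2 hΩ ν h
  have h2 : ∫ ξ, Qc s Ω ξ * ‖ft ν ξ‖ ^ 2 = 0 := by
    refine integral_eq_zero_of_ae ?_
    filter_upwards [Measure.ae_ne volume (0 : ℂ)] with ξ hξ
    simp [hcon ξ hξ]
  rw [h2, mul_eq_zero, or_iff_right (Mg_pos s).ne',
    integral_eq_zero_iff_of_nonneg (fun p => Kr_nonneg s hΩ _) (integrable_Kr hΩ ν h)] at h1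
  have h3 : ∀ᵐ p ∂(ν.prod ν), False := by
    filter_upwards [h1, ae_offdiag hs0 ν h] with p hp h0
    rw [Kr, Pi.zero_apply] at hp
    have := hΩ.2.2.1 (p.1 - p.2).arg
    have := Real.rpow_pos_of_pos (norm_pos_iff.2 h0) (-s)
    nlinarith [mul_pos this ‹0 < Ω _›]
  obtain ⟨_, hp⟩ := h3.exists
  exact hp

lemma Dv_pos {s : ℝ} (hs0 : 0 < s) (hs2 : s < 2) {Ω : ℝ → ℝ} (hΩ : SatisfiesH Ω)
    (hO : ∀ φ, 0 ≤ Omt s Ω φ) (ν₀ ν₁ : Measure ℂ) [IsProbabilityMeasure ν₀]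
    [IsProbabilityMeasure ν₁] {R₀ R₁ : ℝ} (hR₀ : ∀ᵐ z ∂ν₀, ‖z‖ ≤ R₀)
    (hR₁ : ∀ᵐ z ∂ν₁, ‖z‖ ≤ R₁) (h₀ : iso s ν₀ < ⊤) (h₁ : iso s ν₁ < ⊤) (hne : ν₀ ≠ ν₁) :
    0 < Dv s Ω ν₀ ν₁ := by
  have hm0 := (continuous_ft ν₀).measurable
  have hm1 := (continuous_ft ν₁).measurable
  have hQ : ∀ ξ : ℂ, ξ ≠ 0 → 0 ≤ Qc s Ω ξ := fun ξ hξ => by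
    rw [Qc_eq hs0 hs2 hΩ hξ]
    have := hO ξ.arg
    have := Mg_pos s
    positivity
  have hpos : 0 ≤ᵐ[volume] fun ξ => Qc s Ω ξ * ‖ft ν₀ ξ - ft ν₁ ξ‖ ^ 2 := by
    filter_upwards [Measure.ae_ne volume (0 : ℂ)] with ξ hξ
    exact mul_nonneg (hQ ξ hξ) (by positivity)
  have hi := integrable_Qc_ft hs0 hs2 hΩ (u := fun ξ => ‖ft ν₀ ξ - ft ν₁ ξ‖ ^ 2) (by fun_prop)
    (integrable_diff hs0 hs2 ν₀ ν₁ h₀ h₁)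
  rw [Dv]
  refine lt_of_le_of_ne (integral_nonneg_of_ae hpos) fun h => hne ?_
  rw [eq_comm, integral_eq_zero_iff_of_nonneg_ae hpos hi] at h
  obtain ⟨ξ₀, hξ₀, hq⟩ := Qc_ne_zero hs0 hs2 hΩ ν₀ h₀
  -- on a neighbourhood of `ξ₀` the multiplier is nonzero, so the transforms agree there
  have hev : ∀ᶠ ξ in 𝓝 ξ₀, Qc s Ω ξ ≠ 0 := (continuousAt_Qc hs0 hs2 hΩ hξ₀).eventually_ne hq
  obtain ⟨U, hU, hUo, hUm⟩ := eventually_nhds_iff.1 hev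
  refine eq_of_ft_eventuallyEq ν₀ ν₁ hR₀ hR₁ (ξ₀ := ξ₀) ?_
  have hae : ft ν₀ =ᵐ[volume.restrict U] ft ν₁ := by
    filter_upwards [ae_restrict_of_ae h, ae_restrict_mem hUo.measurableSet] with ξ h1 h2
    rw [Pi.zero_apply, mul_eq_zero, or_iff_right (hU ξ h2), sq_eq_zero_iff, norm_eq_zero,
      sub_eq_zero] at h1
    exact h1
  have := Measure.eqOn_open_of_ae_eq hae hUo (continuous_ft ν₀).continuousOn
    (continuous_ft ν₁).continuousOn
  exact eventually_nhds_iff.2 ⟨U, fun ξ hξ => this hξ, hUo, hUm⟩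

lemma LIC_of_nonneg {s : ℝ} (hs0 : 0 < s) (hs2 : s < 2) {Ω : ℝ → ℝ} (hΩ : SatisfiesH Ω)
    (hO : ∀ φ, 0 ≤ Omt s Ω φ) : LIC s Ω := by
  intro ρ₀ ρ₁ _ _ hK₀ hK₁ hE₀ hE₁ hne hc
  have h₀ := iso_of_energy hΩ ρ₀ hE₀
  have h₁ := iso_of_energy hΩ ρ₁ hE₁
  obtain ⟨R₀, hR₀⟩ := bdd_of_compact hK₀
  obtain ⟨R₁, hR₁⟩ := bdd_of_compact hK₁
  rw [convex_iff hs0 hs2 hΩ ρ₀ ρ₁ hK₀ hK₁ h₀ h₁ hc]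
  refine Dv_pos hs0 hs2 hΩ hO (tr ρ₀) (tr ρ₁) hR₀ hR₁ h₀ h₁ fun he => hne ?_
  have := congrArg (Measure.map Complex.measurableEquivRealProd) he
  rwa [tr, tr, MeasurableEquiv.map_map_symm, MeasurableEquiv.map_map_symm] at this

/-! ### A negative value of `Ω̃` destroys convexity -/

/-- The difference of the Fourier transforms of the uniform measures on `[-1,1]` and `[-2,2]`. -/
def dS (u : ℝ) : ℝ := sinc (2 * π * 1 * u) - sinc (2 * π * 2 * u)

lemma continuous_dS : Continuous dS := by
  have := continuous_sinc
  unfold dS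
  fun_prop

lemma abs_one_sub_sinc_le (x : ℝ) : |1 - sinc x| ≤ 2 * |x| := by
  wlog hx : 0 ≤ x generalizing x
  · have := this (-x) (by linarith)
    rwa [sinc_neg, abs_neg] at this
  rw [abs_of_nonneg hx]
  rcases hx.eq_or_lt with rfl | h0
  · simp
  have h1 := abs_le.1 (abs_sinc_le_one x)
  rw [abs_of_nonneg (by linarith [h1.2])]
  rcases le_total 1 x with h | h
  · linarith [h1.1]
  have h2 := sin_gt_sub_cube h0
  have h3 : 1 - x ^ 2 / 6 ≤ sinc x := by
    rw [sinc_of_ne_zero h0.ne', le_div_iff₀ h0]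
    nlinarith
  nlinarith

lemma dS_sq_le (u : ℝ) : dS u ^ 2 ≤ 48 * π * (|u| * (1 + u ^ 2)⁻¹) := by
  have hb1 := abs_sinc_le_one (2 * π * 1 * u)
  have hb2 := abs_sinc_le_one (2 * π * 2 * u)
  have h2 : |dS u| ≤ 2 := (abs_sub _ _).trans (by linarith)
  have hu := abs_nonneg u
  have h1 : |dS u| ≤ 12 * π * |u| := by
    have e : dS u = (1 - sinc (2 * π * 2 * u)) - (1 - sinc (2 * π * 1 * u)) := by
      rw [dS]; ring
    rw [e]
    refine (abs_sub _ _).trans ?_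
    have a1 := abs_one_sub_sinc_le (2 * π * 2 * u)
    have a2 := abs_one_sub_sinc_le (2 * π * 1 * u)
    rw [abs_mul, abs_of_pos (by positivity : (0 : ℝ) < 2 * π * 2)] at a1
    rw [abs_mul, abs_of_pos (by positivity : (0 : ℝ) < 2 * π * 1)] at a2
    linarith
  rw [← div_eq_mul_inv, ← mul_div_assoc, le_div_iff₀ (by positivity)]
  rcases le_total |u| 1 with h | h
  · have h3 : 1 + u ^ 2 ≤ 2 := by
      have : |u| ^ 2 ≤ 1 := pow_le_one₀ hu h
      rw [sq_abs] at this
      linarith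
    calc dS u ^ 2 * (1 + u ^ 2) ≤ dS u ^ 2 * 2 := by gcongr
      _ = |dS u| * |dS u| * 2 := by rw [← sq, sq_abs]
      _ ≤ 2 * (12 * π * |u|) * 2 := by gcongr
      _ = _ := by ring
  · have s1 := sinc_sq_le (one_le_two_pi_mul (le_refl 1)) u
    have s2 := sinc_sq_le (one_le_two_pi_mul (one_le_two (α := ℝ))) u
    rw [← div_eq_mul_inv, le_div_iff₀ (by positivity)] at s1 s2
    have h3 : dS u ^ 2 ≤ 2 * sinc (2 * π * 1 * u) ^ 2 + 2 * sinc (2 * π * 2 * u) ^ 2 := by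
      rw [dS]
      nlinarith [sq_nonneg (sinc (2 * π * 1 * u) + sinc (2 * π * 2 * u))]
    have h4 : dS u ^ 2 * (1 + u ^ 2) ≤ 8 := by nlinarith [sq_nonneg u]
    nlinarith [Real.pi_gt_three]

lemma integrable_rpow_dS {s : ℝ} (hs0 : 0 < s) (hs2 : s < 2) :
    Integrable fun u : ℝ => |u| ^ (s - 2) * dS u ^ 2 := by
  have h0 : IntegrableOn (fun u : ℝ => |u| ^ (s - 1) * (1 + u ^ 2)⁻¹) (Ioi 0) := by
    refine (integrableOn_decay (s := 2 - s) (by linarith) (by linarith)).congr_fun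
      (fun u (hu : 0 < u) => ?_) measurableSet_Ioi
    simp only
    rw [abs_of_pos hu]
    congr 2
    ring
  have h1 : Integrable (fun u : ℝ => |u| ^ (s - 1) * (1 + u ^ 2)⁻¹) := integrable_of_even (by simp) h0
  have hm := continuous_dS.measurable
  refine (h1.const_mul (48 * π)).mono' (Measurable.aestronglyMeasurable (by fun_prop)) ?_
  filter_upwards [Measure.ae_ne volume (0 : ℝ)] with u hu
  have hu' : 0 < |u| := abs_pos.2 hu
  rw [Real.norm_of_nonneg (by positivity)]
  have e : |u| ^ (s - 1) = |u| ^ (s - 2) * |u| := by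
    rw [← Real.rpow_add_one hu'.ne']
    congr 1
    ring
  rw [e]
  calc |u| ^ (s - 2) * dS u ^ 2 ≤ |u| ^ (s - 2) * (48 * π * (|u| * (1 + u ^ 2)⁻¹)) := by
        gcongr
        exact dS_sq_le u
    _ = _ := by ring

lemma integral_rpow_dS_pos {s : ℝ} (hs0 : 0 < s) (hs2 : s < 2) :
    0 < ∫ u : ℝ, |u| ^ (s - 2) * dS u ^ 2 := by
  rw [integral_pos_iff_support_of_nonneg (fun u => by positivity) (integrable_rpow_dS hs0 hs2)]
  -- on `(1/4, 1/2)` the two sines have opposite signs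
  refine lt_of_lt_of_le ?_ (measure_mono (s := Ioo (1 / 4 : ℝ) (1 / 2)) fun u hu => ?_)
  · rw [Real.volume_Ioo, ENNReal.ofReal_pos]
    norm_num
  · have hu0 : 0 < u := by linarith [hu.1]
    have hp := Real.pi_pos
    have h1 : 0 < sinc (2 * π * 1 * u) := by
      rw [sinc_of_ne_zero (by positivity)]
      refine div_pos (Real.sin_pos_of_pos_of_lt_pi (by positivity) ?_) (by positivity)
      nlinarith [hu.2]
    have h2 : sinc (2 * π * 2 * u) < 0 := by
      rw [sinc_of_ne_zero (by positivity)]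
      refine div_neg_of_neg_of_pos ?_ (by positivity)
      rw [← Real.sin_sub_two_pi]
      exact Real.sin_neg_of_neg_of_neg_pi_lt (by nlinarith [hu.2]) (by nlinarith [hu.1])
    have h3 : 0 < dS u := by rw [dS]; linarith
    rw [Function.mem_support]
    positivity

lemma integrable_sinc_sq : Integrable fun w : ℝ => sinc (2 * π * 1 * w) ^ 2 := by
  have hm := continuous_sinc.measurable
  refine (integrable_inv_one_add_sq.const_mul 2).mono' (Measurable.aestronglyMeasurable
    (by fun_prop)) (Eventually.of_forall fun w => ?_)
  rw [Real.norm_of_nonneg (by positivity)]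
  exact sinc_sq_le (one_le_two_pi_mul (le_refl 1)) w

lemma integral_sinc_sq_pos : 0 < ∫ w : ℝ, sinc (2 * π * 1 * w) ^ 2 := by
  rw [integral_pos_iff_support_of_nonneg (fun u => by positivity) integrable_sinc_sq]
  refine lt_of_lt_of_le ?_ (measure_mono (s := Ioo (0 : ℝ) (1 / 2)) fun u hu => ?_)
  · rw [Real.volume_Ioo, ENNReal.ofReal_pos]
    norm_num
  · have hu0 : 0 < u := hu.1
    have hp := Real.pi_pos
    have h1 : 0 < sinc (2 * π * 1 * u) := by
      rw [sinc_of_ne_zero (by positivity)]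
      refine div_pos (Real.sin_pos_of_pos_of_lt_pi (by positivity) ?_) (by positivity)
      nlinarith [hu.2]
    rw [Function.mem_support]
    positivity

lemma Omt_add_pi (s : ℝ) {Ω : ℝ → ℝ} (hΩ : SatisfiesH Ω) (φ : ℝ) :
    Omt s Ω (φ + π) = Omt s Ω φ := by
  rw [Omt, Omt, show φ + π + π / 2 = φ + π / 2 + π by ring, hΩ.2.2.2]
  congr 2
  refine intervalIntegral.integral_congr fun θ _ => ?_
  rw [show φ + π - θ = φ - θ + π by ring, Real.cos_add_pi, abs_neg]

lemma Qc_axis {s : ℝ} (hs0 : 0 < s) (hs2 : s < 2) {Ω : ℝ → ℝ} (hΩ : SatisfiesH Ω) (φ : ℝ) {u : ℝ}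
    (hu : u ≠ 0) : Qc s Ω (Tm φ (u, 0)) = |u| ^ (s - 2) * (Mg s * Omt s Ω φ) := by
  rcases lt_or_gt_of_ne hu with h | h
  · have e : Tm φ (u, 0) = |u| • Complex.exp (((φ + π : ℝ) : ℂ) * Complex.I) := by
      rw [Tm_eq, abs_of_neg h]
      push_cast
      rw [add_mul, Complex.exp_add, Complex.exp_pi_mul_I, Complex.real_smul]
      push_cast
      ring
    rw [e, Qc_smul Ω (abs_pos.2 hu), Qc_exp hs0 hs2 hΩ, Omt_add_pi s hΩ]
  · have e : Tm φ (u, 0) = |u| • Complex.exp ((φ : ℂ) * Complex.I) := by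
      rw [Tm_eq, abs_of_pos h, Complex.real_smul]
      push_cast
      ring
    rw [e, Qc_smul Ω (abs_pos.2 hu), Qc_exp hs0 hs2 hΩ]

lemma abs_Qc_Tm_le {s : ℝ} (hs2 : s < 2) {Ω : ℝ → ℝ} {C : ℝ} (hC : 0 < C)
    (h : ∀ ξ : ℂ, ξ ≠ 0 → |Qc s Ω ξ| ≤ C * ‖ξ‖ ^ (s - 2)) (φ : ℝ) {p : ℝ × ℝ} (hp : p.1 ≠ 0) :
    |Qc s Ω (Tm φ p)| ≤ C * |p.1| ^ (s - 2) := by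
  have h1 := norm_Tm_pos (φ := φ) hp
  refine (h _ (norm_pos_iff.1 h1)).trans ?_
  refine mul_le_mul_of_nonneg_left ?_ hC.le
  refine Real.rpow_le_rpow_of_nonpos (abs_pos.2 hp) ?_ (by linarith)
  refine abs_le_of_sq_le_sq ?_ h1.le
  rw [norm_Tm_sq]
  nlinarith [sq_nonneg p.2]

lemma ae_fst_ne : ∀ᵐ p : ℝ × ℝ, p.1 ≠ 0 := ae_prod_ne_zero.mono fun _ h => h.1

lemma integrable_bound {s : ℝ} (hs0 : 0 < s) (hs2 : s < 2) (C : ℝ) :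
    Integrable fun p : ℝ × ℝ => C * (|p.1| ^ (s - 2) * dS p.1 ^ 2 * sinc (2 * π * 1 * p.2) ^ 2) :=
  ((integrable_rpow_dS hs0 hs2).mul_prod integrable_sinc_sq).const_mul C

/-- Squeezing the second variable concentrates the integral of `Qc` on the axis of direction
`φ`. -/
lemma tendsto_squeeze {s : ℝ} (hs0 : 0 < s) (hs2 : s < 2) {Ω : ℝ → ℝ} (hΩ : SatisfiesH Ω)
    (φ : ℝ) : Tendsto (fun ε : ℝ => ∫ p : ℝ × ℝ,
      Qc s Ω (Tm φ (p.1, ε * p.2)) * (dS p.1 ^ 2 * sinc (2 * π * 1 * p.2) ^ 2)) (𝓝[>] 0)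
      (𝓝 ((Mg s * Omt s Ω φ) * ((∫ u : ℝ, |u| ^ (s - 2) * dS u ^ 2) *
        ∫ w : ℝ, sinc (2 * π * 1 * w) ^ 2))) := by
  obtain ⟨C, hC, hb⟩ := Qc_bound hs0 hs2 hΩ
  have hmQ := (stronglyMeasurable_Qc s hΩ).measurable
  have hmT := (continuous_Tm φ).measurable
  have hm := continuous_dS.measurable
  have hm2 := continuous_sinc.measurable
  have e : (Mg s * Omt s Ω φ) * ((∫ u : ℝ, |u| ^ (s - 2) * dS u ^ 2) *
        ∫ w : ℝ, sinc (2 * π * 1 * w) ^ 2) = ∫ p : ℝ × ℝ,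
      Qc s Ω (Tm φ (p.1, 0)) * (dS p.1 ^ 2 * sinc (2 * π * 1 * p.2) ^ 2) := by
    rw [← integral_prod_mul, ← integral_const_mul]
    refine integral_congr_ae ?_
    filter_upwards [ae_fst_ne] with p hp
    rw [Qc_axis hs0 hs2 hΩ φ hp]
    ring
  rw [e]
  refine tendsto_integral_filter_of_dominated_convergence _ ?_ ?_
    (integrable_bound hs0 hs2 C) ?_
  · refine Eventually.of_forall fun ε => Measurable.aestronglyMeasurable ?_
    have : Measurable fun p : ℝ × ℝ => Qc s Ω (Tm φ (p.1, ε * p.2)) :=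
      hmQ.comp (hmT.comp (by fun_prop))
    fun_prop
  · refine Eventually.of_forall fun ε => ?_
    filter_upwards [ae_fst_ne] with p hp
    have := abs_Qc_Tm_le hs2 hC hb φ (p := (p.1, ε * p.2)) hp
    rw [norm_mul, Real.norm_eq_abs, Real.norm_of_nonneg (by positivity)]
    calc _ ≤ C * |p.1| ^ (s - 2) * (dS p.1 ^ 2 * sinc (2 * π * 1 * p.2) ^ 2) := by gcongr
      _ = _ := by ring
  · filter_upwards [ae_fst_ne] with p hp
    refine Tendsto.mul_const _ ?_
    have h0 : Tm φ (p.1, 0) ≠ 0 := norm_pos_iff.1 (norm_Tm_pos (p := (p.1, 0)) hp)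
    refine (continuousAt_Qc hs0 hs2 hΩ h0).tendsto.comp ?_
    have hc : Continuous fun ε : ℝ => Tm φ (p.1, ε * p.2) :=
      (continuous_Tm φ).comp (by fun_prop)
    have := hc.tendsto 0
    rw [zero_mul] at this
    exact this.mono_left nhdsWithin_le_nhds

/-- The second variation for two rectangles of half-length `ε⁻¹` orthogonally to `φ`. -/
lemma Dv_rect {s : ℝ} (hs0 : 0 < s) (hs2 : s < 2) {Ω : ℝ → ℝ} (hΩ : SatisfiesH Ω) (φ : ℝ)
    {ε : ℝ} (hε : 0 < ε) (hε1 : ε ≤ 1) :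
    Dv s Ω (rect φ 1 ε⁻¹) (rect φ 2 ε⁻¹) = ε * ∫ p : ℝ × ℝ,
      Qc s Ω (Tm φ (p.1, ε * p.2)) * (dS p.1 ^ 2 * sinc (2 * π * 1 * p.2) ^ 2) := by
  obtain ⟨C, hC, hb⟩ := Qc_bound hs0 hs2 hΩ
  have hmQ := (stronglyMeasurable_Qc s hΩ).measurable
  have hmT := (continuous_Tm φ).measurable
  have hm := continuous_dS.measurable
  have hm2 := continuous_sinc.measurable
  have hL : 1 ≤ ε⁻¹ := (one_le_inv₀ hε).2 hε1
  have hi := integrable_Qc_ft hs0 hs2 hΩ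
    (u := fun ξ => ‖ft (rect φ 1 ε⁻¹) ξ - ft (rect φ 2 ε⁻¹) ξ‖ ^ 2)
    (by
      have := (continuous_ft (rect φ 1 ε⁻¹)).measurable
      have := (continuous_ft (rect φ 2 ε⁻¹)).measurable
      fun_prop)
    (integrable_diff hs0 hs2 _ _ (iso_rect hs0 hs2 φ le_rfl hL)
      (iso_rect hs0 hs2 φ one_le_two hL))
  rw [← (measurePreserving_Tm φ).integrable_comp_emb (measurableEmbedding_Tm φ)] at hi
  have e1 : ∀ p : ℝ × ℝ, ‖ft (rect φ 1 ε⁻¹) (Tm φ p) - ft (rect φ 2 ε⁻¹) (Tm φ p)‖ ^ 2 =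
      dS p.1 ^ 2 * sinc (2 * π * 1 * (ε⁻¹ * p.2)) ^ 2 := fun p => by
    rw [ft_rect, ft_rect, ← Complex.ofReal_sub, Complex.norm_real, Real.norm_eq_abs, sq_abs,
      ← sub_mul, mul_pow, dS]
    congr 3
    ring
  have hF : (fun ξ => Qc s Ω ξ * ‖ft (rect φ 1 ε⁻¹) ξ - ft (rect φ 2 ε⁻¹) ξ‖ ^ 2) ∘ Tm φ =
      fun p : ℝ × ℝ => Qc s Ω (Tm φ p) * (dS p.1 ^ 2 * sinc (2 * π * 1 * (ε⁻¹ * p.2)) ^ 2) := by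
    ext p
    simp only [Function.comp_apply, e1]
  rw [hF] at hi
  have hD : Dv s Ω (rect φ 1 ε⁻¹) (rect φ 2 ε⁻¹) = ∫ p : ℝ × ℝ,
      Qc s Ω (Tm φ p) * (dS p.1 ^ 2 * sinc (2 * π * 1 * (ε⁻¹ * p.2)) ^ 2) := by
    rw [Dv, ← (measurePreserving_Tm φ).integral_comp (measurableEmbedding_Tm φ)]
    simp only [e1]
  have hi2 : Integrable fun p : ℝ × ℝ =>
      Qc s Ω (Tm φ (p.1, ε * p.2)) * (dS p.1 ^ 2 * sinc (2 * π * 1 * p.2) ^ 2) := by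
    refine (integrable_bound hs0 hs2 C).mono' (Measurable.aestronglyMeasurable ?_) ?_
    · have : Measurable fun p : ℝ × ℝ => Qc s Ω (Tm φ (p.1, ε * p.2)) :=
        hmQ.comp (hmT.comp (by fun_prop))
      fun_prop
    · filter_upwards [ae_fst_ne] with p hp
      have := abs_Qc_Tm_le hs2 hC hb φ (p := (p.1, ε * p.2)) hp
      rw [norm_mul, Real.norm_eq_abs, Real.norm_of_nonneg (by positivity)]
      calc _ ≤ C * |p.1| ^ (s - 2) * (dS p.1 ^ 2 * sinc (2 * π * 1 * p.2) ^ 2) := by gcongr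
        _ = _ := by ring
  rw [hD]
  rw [Measure.volume_eq_prod] at hi hi2 ⊢
  rw [integral_prod _ hi, integral_prod _ hi2, ← integral_const_mul]
  refine integral_congr_ae (Eventually.of_forall fun u => ?_)
  have h := Measure.integral_comp_mul_left
    (fun v : ℝ => Qc s Ω (Tm φ (u, v)) * (dS u ^ 2 * sinc (2 * π * 1 * (ε⁻¹ * v)) ^ 2)) ε
  rw [abs_of_pos (inv_pos.2 hε), smul_eq_mul] at h
  simp only [inv_mul_cancel_left₀ hε.ne'] at h
  simp only
  rw [h, mul_inv_cancel_left₀ hε.ne']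

lemma integral_id_u1 : ∫ x, x ∂u1 = 0 := by
  rw [u1, integral_smul_measure, ← intervalIntegral.integral_of_le (by norm_num), integral_id]
  norm_num

lemma ae_u1 : ∀ᵐ x ∂u1, ‖x‖ ≤ 1 := by
  rw [u1]
  refine Measure.ae_smul_measure ?_ _
  filter_upwards [ae_restrict_mem measurableSet_Ioc] with x hx
  rw [Real.norm_eq_abs, abs_le]
  exact ⟨hx.1.le, hx.2⟩

lemma integral_rect (φ c d : ℝ) : ∫ z, z ∂(rect φ c d) = 0 := by
  have hi : Integrable (fun x : ℝ => x) u1 := Integrable.of_bound (by fun_prop) 1 ae_u1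
  have i1 : Integrable (fun p : ℝ × ℝ => p.1) (u1.prod u1) := hi.comp_fst u1
  have i2 : Integrable (fun p : ℝ × ℝ => p.2) (u1.prod u1) := hi.comp_snd u1
  have i3 : Integrable (fun p : ℝ × ℝ => (p.1 : ℂ)) (u1.prod u1) := i1.ofReal
  have i4 : Integrable (fun p : ℝ × ℝ => (p.2 : ℂ)) (u1.prod u1) := i2.ofReal
  have h1 : ∫ p : ℝ × ℝ, p.1 ∂(u1.prod u1) = 0 := by
    rw [integral_fun_fst (fun x : ℝ => x), integral_id_u1, smul_zero]
  have h2 : ∫ p : ℝ × ℝ, p.2 ∂(u1.prod u1) = 0 := by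
    rw [integral_fun_snd (fun x : ℝ => x), integral_id_u1, smul_zero]
  rw [rect, integral_map (measurable_rectMap φ c d).aemeasurable (by fun_prop)]
  have e : ∀ p : ℝ × ℝ, Tm φ (c * p.1, d * p.2) = Complex.exp (φ * Complex.I) * c * (p.1 : ℂ) +
      Complex.exp (φ * Complex.I) * d * Complex.I * (p.2 : ℂ) := fun p => by
    rw [Tm_eq]
    push_cast
    ring
  simp_rw [e]
  rw [integral_add (i3.const_mul _) (i4.const_mul _), integral_const_mul, integral_const_mul,
    integral_complex_ofReal, integral_complex_ofReal, h1, h2]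
  simp

/-- The uniform measure on a rotated rectangle, on `ℝ × ℝ`. -/
def rectR (φ c d : ℝ) : Measure (ℝ × ℝ) := (rect φ c d).map Complex.measurableEquivRealProd

instance (φ c d : ℝ) : IsProbabilityMeasure (rectR φ c d) :=
  Measure.isProbabilityMeasure_map (MeasurableEquiv.measurable _).aemeasurable

lemma tr_rectR (φ c d : ℝ) : tr (rectR φ c d) = rect φ c d := MeasurableEquiv.map_symm_map _

lemma compact_rectR (φ c d : ℝ) : HasCompactSupportM (rectR φ c d) := by
  have hc : Continuous fun p : ℝ × ℝ => Complex.equivRealProdCLM (Tm φ (c * p.1, d * p.2)) :=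
    Complex.equivRealProdCLM.continuous.comp ((continuous_Tm φ).comp (by fun_prop))
  have hK := ((isCompact_closedBall (0 : ℝ × ℝ) 1).image hc)
  refine ⟨_, hK, ?_⟩
  rw [rectR, rect, Measure.map_map (MeasurableEquiv.measurable _) (measurable_rectMap φ c d),
    Measure.map_apply ((MeasurableEquiv.measurable _).comp (measurable_rectMap φ c d))
    hK.measurableSet.compl]
  have h : ∀ᵐ p ∂(u1.prod u1), p ∈ Metric.closedBall (0 : ℝ × ℝ) 1 := by
    filter_upwards [Measure.quasiMeasurePreserving_fst.ae ae_u1,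
      Measure.quasiMeasurePreserving_snd.ae ae_u1] with p h1 h2
    rw [mem_closedBall_zero_iff, Prod.norm_def]
    exact max_le h1 h2
  rw [ae_iff] at h
  refine measure_mono_null (fun p hp => ?_) h
  exact fun hp2 => hp ⟨p, hp2, rfl⟩

lemma integral_rectR (φ c d : ℝ) : ∫ x, x ∂(rectR φ c d) = 0 := by
  have h := integral_tr (rectR φ c d)
  rw [tr_rectR, integral_rect, eq_comm] at h
  simpa using h

lemma energy_rectR {s : ℝ} (hs0 : 0 < s) (hs2 : s < 2) {Ω : ℝ → ℝ} (hΩ : SatisfiesH Ω)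
    (φ : ℝ) {c d : ℝ} (hc : 1 ≤ c) (hd : 1 ≤ d) : energy s Ω (rectR φ c d) < ⊤ := by
  obtain ⟨R, hR⟩ := bdd_of_compact (compact_rectR φ c d)
  refine (energy_toReal hs0 hs2 hΩ _ hR ?_).1
  rw [tr_rectR]
  exact iso_rect hs0 hs2 φ hc hd

lemma nonneg_of_LIC {s : ℝ} (hs0 : 0 < s) (hs2 : s < 2) {Ω : ℝ → ℝ} (hΩ : SatisfiesH Ω)
    (h : LIC s Ω) (φ : ℝ) : 0 ≤ Omt s Ω φ := by
  by_contra! hneg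
  have hlim := tendsto_squeeze hs0 hs2 hΩ φ
  have hl : (Mg s * Omt s Ω φ) * ((∫ u : ℝ, |u| ^ (s - 2) * dS u ^ 2) *
      ∫ w : ℝ, sinc (2 * π * 1 * w) ^ 2) < 0 :=
    mul_neg_of_neg_of_pos (mul_neg_of_pos_of_neg (Mg_pos s) hneg)
      (mul_pos (integral_rpow_dS_pos hs0 hs2) integral_sinc_sq_pos)
  have hev := (hlim.eventually_lt_const hl).and (Ioc_mem_nhdsGT (zero_lt_one (α := ℝ)))
  obtain ⟨ε, h1, h0, hle⟩ := hev.exists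
  have hD : Dv s Ω (rect φ 1 ε⁻¹) (rect φ 2 ε⁻¹) < 0 := by
    rw [Dv_rect hs0 hs2 hΩ φ h0 hle]
    exact mul_neg_of_pos_of_neg h0 h1
  have hL : 1 ≤ ε⁻¹ := (one_le_inv₀ h0).2 hle
  have hne : rectR φ 1 ε⁻¹ ≠ rectR φ 2 ε⁻¹ := fun he => by
    have he2 : rect φ 1 ε⁻¹ = rect φ 2 ε⁻¹ := by rw [← tr_rectR, he, tr_rectR]
    rw [he2, Dv] at hD
    simp at hD
  have hc : ∫ x, x ∂(rectR φ 1 ε⁻¹) = ∫ x, x ∂(rectR φ 2 ε⁻¹) := by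
    rw [integral_rectR, integral_rectR]
  have hs := h (rectR φ 1 ε⁻¹) (rectR φ 2 ε⁻¹) inferInstance inferInstance
    (compact_rectR _ _ _) (compact_rectR _ _ _) (energy_rectR hs0 hs2 hΩ φ le_rfl hL)
    (energy_rectR hs0 hs2 hΩ φ one_le_two hL) hne hc
  rw [convex_iff hs0 hs2 hΩ _ _ (compact_rectR _ _ _) (compact_rectR _ _ _)
    (by rw [tr_rectR]; exact iso_rect hs0 hs2 φ le_rfl hL)
    (by rw [tr_rectR]; exact iso_rect hs0 hs2 φ one_le_two hL) hc, tr_rectR, tr_rectR] at hs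
  linarith

/-- `W` has the linear interpolation convexity property if and only if
the transformed angle function `Ω̃` is nonnegative. -/
theorem statement3 (s : ℝ) (hs0 : 0 < s) (hs2 : s < 2) (Ω : ℝ → ℝ) (hΩ : SatisfiesH Ω) :
    LIC s Ω ↔ ∀ φ, 0 ≤ Omt s Ω φ := by
  exact ⟨nonneg_of_LIC hs0 hs2 hΩ, LIC_of_nonneg hs0 hs2 hΩ⟩

end Aniso
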